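/- arXiv:1706.01618 — 2 statements merged into one kernel-verified Lean document; each statement's English description precedes it below -/
import Mathlib

section
/- Let p be an odd prime and d, r ≥ 1. If d > r, then there is no ℤ/p-equivariant continuous map from the configuration space F(ℝᵈ, p) to (ℝᵖ)ʳ ∖ Δʳ. -/
/-- The cyclic-shift action of the generator of `ℤ/p` on the configuration space
`F(E, p)` of `p` distinct (labelled) points of `E`. -/
def configShift {p : ℕ} {E : Type*} (x : {f : ZMod p → E // Function.Injective f}) :
    {f : ZMod p → E // Function.Injective f} :=
  ⟨fun k => x.1 (k + 1), x.2.comp (add_left_injective 1)⟩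

namespace ConfigMap

section Descent

variable {K C : Type*} [Field K] [AddCommGroup C] [Module K C]

/-- The norm element `1 + ω + ⋯ + ω ^ (p - 1)`. -/
def normOp (p : ℕ) (ω : Module.End K C) : Module.End K C := ∑ i ∈ Finset.range p, ω ^ i

/-- The differentials of the periodic resolution: `1 - ω` in odd degrees and the norm in even
degrees. -/
def altOp (p : ℕ) (ω : Module.End K C) (k : ℕ) : Module.End K C :=
  if Even k then normOp p ω else 1 - ω

lemma one_sub_mul_normOp {p : ℕ} {ω : Module.End K C} (hω : ω ^ p = 1) :
    (1 - ω) * normOp p ω = 0 := by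
  rw [normOp, mul_neg_geom_sum, hω, sub_self]

lemma normOp_mul_one_sub {p : ℕ} {ω : Module.End K C} (hω : ω ^ p = 1) :
    normOp p ω * (1 - ω) = 0 := by
  rw [normOp, geom_sum_mul_neg, hω, sub_self]

lemma altOp_succ_mul {p : ℕ} {ω : Module.End K C} (hω : ω ^ p = 1) (k : ℕ) :
    altOp p ω (k + 1) * altOp p ω k = 0 := by
  by_cases h : Even k
  · simp [altOp, h, Nat.even_add_one, one_sub_mul_normOp hω]
  · simp [altOp, h, Nat.even_add_one, normOp_mul_one_sub hω]

lemma altOp_add_two (p : ℕ) (ω : Module.End K C) (k : ℕ) :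
    altOp p ω (k + 2) = altOp p ω k := by
  simp [altOp, Nat.even_add]

lemma commute_altOp {p : ℕ} {ω D : Module.End K C} (h : Commute D ω) (k : ℕ) :
    Commute D (altOp p ω k) := by
  unfold altOp normOp
  split_ifs
  · exact Commute.sum_right _ _ _ fun i _ => h.pow_right i
  · exact (Commute.one_right D).sub_right h

lemma pow_apply_mem {ω : Module.End K C} {S : Submodule K C} (hS : ∀ z ∈ S, ω z ∈ S) (i : ℕ) :
    ∀ z ∈ S, (ω ^ i) z ∈ S := by
  induction i with
  | zero => simp
  | succ i ih => intro z hz; rw [pow_succ']; exact hS _ (ih z hz)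

lemma altOp_apply_mem {p : ℕ} {ω : Module.End K C} {S : Submodule K C}
    (hS : ∀ z ∈ S, ω z ∈ S) (k : ℕ) {z : C} (hz : z ∈ S) : altOp p ω k z ∈ S := by
  unfold altOp normOp
  split_ifs
  · rw [LinearMap.sum_apply]
    exact S.sum_mem fun i _ => pow_apply_mem hS i z hz
  · exact S.sub_mem hz (hS z hz)

/-- Exactness of the periodic complex on a submodule that looks like a free module over the
group ring, as witnessed by `χ`. -/
lemma exists_altOp_eq {p : ℕ} {ω χ : Module.End K C} {S : Submodule K C}
    (hS : ∀ z ∈ S, ω z ∈ S) (hχ : ∀ z ∈ S, χ z ∈ S)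
    (hfree : ∀ z ∈ S, ∑ i ∈ Finset.range p, (ω ^ (p - 1 - i)) (χ ((ω ^ (i + 1)) z)) = z)
    (k : ℕ) {z : C} (hz : z ∈ S) (h0 : altOp p ω k z = 0) :
    ∃ w ∈ S, altOp p ω (k + 1) w = z := by
  by_cases hk : Even k
  · have hN : normOp p ω z = 0 := by simpa [altOp, hk] using h0
    have hsum : ∑ i ∈ Finset.range p, χ ((ω ^ (i + 1)) z) = 0 := by
      have : ∑ i ∈ Finset.range p, (ω ^ (i + 1)) z = ω (normOp p ω z) := by
        simp only [normOp, LinearMap.sum_apply, map_sum, pow_succ', Module.End.mul_apply]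
      rw [← map_sum, this, hN, map_zero, map_zero]
    refine ⟨-∑ i ∈ Finset.range p, (∑ j ∈ Finset.range (p - 1 - i), ω ^ j)
      (χ ((ω ^ (i + 1)) z)), ?_, ?_⟩
    · refine S.neg_mem (S.sum_mem fun i _ => ?_)
      rw [LinearMap.sum_apply]
      exact S.sum_mem fun j _ => pow_apply_mem hS j _ (hχ _ (pow_apply_mem hS _ z hz))
    · have hterm : ∀ i, (1 - ω) ((∑ j ∈ Finset.range (p - 1 - i), ω ^ j)
          (χ ((ω ^ (i + 1)) z))) =
          χ ((ω ^ (i + 1)) z) - (ω ^ (p - 1 - i)) (χ ((ω ^ (i + 1)) z)) := by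
        intro i
        rw [← Module.End.mul_apply, mul_neg_geom_sum]
        rfl
      have : altOp p ω (k + 1) = 1 - ω := by simp [altOp, hk, Nat.even_add_one]
      rw [this, map_neg, map_sum, Finset.sum_congr rfl fun i _ => hterm i,
        Finset.sum_sub_distrib, hsum, hfree z hz]
      simp
  · have hfix : ω z = z := by
      have : z - ω z = 0 := by simpa [altOp, hk] using h0
      exact (sub_eq_zero.mp this).symm
    have hfix' : ∀ i, (ω ^ i) z = z := by
      intro i
      induction i with
      | zero => simp
      | succ i ih => rw [pow_succ, Module.End.mul_apply, hfix, ih]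
    refine ⟨χ z, hχ z hz, ?_⟩
    have h1 : altOp p ω (k + 1) = normOp p ω := by simp [altOp, hk, Nat.even_add_one]
    have h2 := hfree z hz
    simp only [hfix'] at h2
    rw [Finset.sum_range_reflect (fun j => (ω ^ j) (χ z)) p] at h2
    rw [h1, normOp, LinearMap.sum_apply, h2]

/-- An equivariant family `e` (the image of the standard resolution) in a complex of free modules
has trivial augmentation as soon as it vanishes in some positive degree. -/
theorem augmentation_eq_zero {p M : ℕ} {ω D χ : Module.End K C} {S : ℕ → Submodule K C}
    (hp : (p : K) = 0) (hS : ∀ k, ∀ z ∈ S k, ω z ∈ S k)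
    (hS0 : ∀ z ∈ S 0, ω z = z) (hχ : ∀ k, ∀ z ∈ S (k + 1), χ z ∈ S (k + 1))
    (hD : ∀ k, ∀ z ∈ S (k + 1), D z ∈ S k) (hDD : D * D = 0) (hDω : Commute D ω)
    (hfree : ∀ k, ∀ z ∈ S (k + 1),
      ∑ i ∈ Finset.range p, (ω ^ (p - 1 - i)) (χ ((ω ^ (i + 1)) z)) = z)
    {e : ℕ → C} (he : ∀ k ≤ M + 1, e k ∈ S k) (he0 : D (e 1) = e 0)
    (heD : ∀ k, 1 ≤ k → k ≤ M → D (e (k + 1)) = altOp p ω k (e k)) (heM : e (M + 1) = 0) :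
    e 0 = 0 := by
  have hDD' : ∀ z, D (D z) = 0 := fun z => LinearMap.congr_fun hDD z
  have hcomm : ∀ k z, D (altOp p ω k z) = altOp p ω k (D z) := fun k z =>
    LinearMap.congr_fun (commute_altOp hDω k) z
  have key : ∀ k ≤ M, ∃ w ∈ S (k + 2), ∃ v ∈ S (k + 1),
      e (k + 1) = D w + altOp p ω k v := by
    intro k hk
    induction hk using Nat.decreasingInduction with
    | self => exact ⟨0, zero_mem _, 0, zero_mem _, by simp [heM]⟩
    | of_succ k hk ih =>
      obtain ⟨w, -, v, hv, hwv⟩ := ih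
      have h1 : altOp p ω (k + 1) (e (k + 1) - D v) = 0 := by
        rw [map_sub, ← heD (k + 1) (by omega) (by omega), hwv, map_add, hDD', zero_add, hcomm,
          sub_self]
      obtain ⟨u, hu, hu'⟩ := exists_altOp_eq (hS (k + 1)) (hχ k) (hfree k) (k + 1)
        ((S (k + 1)).sub_mem (he (k + 1) (by omega)) (hD (k + 1) v hv)) h1
      exact ⟨v, hv, u, hu, by rw [← altOp_add_two, hu']; abel⟩
  obtain ⟨w, -, v, hv, hwv⟩ := key 0 (Nat.zero_le _)
  rw [zero_add] at hwv
  have hfix : ∀ i, (ω ^ i) (D v) = D v := by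
    intro i
    induction i with
    | zero => simp
    | succ i ih => rw [pow_succ, Module.End.mul_apply, hS0 _ (hD 0 v hv), ih]
  rw [← he0, hwv, map_add, hDD', zero_add, hcomm]
  simp only [altOp, Even.zero, if_true, normOp, LinearMap.sum_apply, hfix, Finset.sum_const,
    Finset.card_range]
  rw [← Nat.cast_smul_eq_nsmul K, hp, zero_smul]

end Descent

section Chains

variable (K : Type*) [Field K] {X Y : Type*}

/-- Augmented ordered chains: formal combinations of lists of points. -/
abbrev Chain (K : Type*) [Field K] (X : Type*) := List X →₀ K

/-- Prepend a vertex to every list. -/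
noncomputable def cone (x : X) : Chain K X →ₗ[K] Chain K X :=
  Finsupp.lmapDomain K K (List.cons x)

/-- The alternating sum of the faces of a list. -/
noncomputable def bdList : List X → Chain K X
  | [] => 0
  | x :: l => Finsupp.single l 1 - cone K x (bdList l)

/-- The boundary operator. -/
noncomputable def bd : Chain K X →ₗ[K] Chain K X := Finsupp.linearCombination K (bdList K)

/-- The map induced on chains by a map of points. -/
noncomputable def push (f : X → Y) : Chain K X →ₗ[K] Chain K Y :=
  Finsupp.lmapDomain K K (List.map f)

/-- The chain map that sends a list `l` to the cone with apex `a l` over the image of the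
boundary of `l`. -/
noncomputable def sub (a : List X → Y) : ℕ → Chain K X →ₗ[K] Chain K Y
  | 0 => Finsupp.linearCombination K fun _ => Finsupp.single [] 1
  | n + 1 => Finsupp.linearCombination K fun l => cone K (a l) (sub a n (bdList K l))

/-- The projection that discards the lists with two equal consecutive entries. -/
noncomputable def nondeg : Chain K X →ₗ[K] Chain K X :=
  open Classical in
  Finsupp.linearCombination K fun l => if l.IsChain (· ≠ ·) then Finsupp.single l 1 else 0

variable {K}

@[simp] lemma cone_single (x : X) (l : List X) (c : K) :
    cone K x (Finsupp.single l c) = Finsupp.single (x :: l) c := by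
  simp [cone]

@[simp] lemma push_single (f : X → Y) (l : List X) (c : K) :
    push K f (Finsupp.single l c) = Finsupp.single (l.map f) c := by
  simp [push]

@[simp] lemma bd_single (l : List X) : bd K (Finsupp.single l 1) = bdList K l := by
  simp [bd]

lemma chain_hom_ext {Z : Type*} [AddCommGroup Z] [Module K Z] {f g : Chain K X →ₗ[K] Z}
    (h : ∀ l, f (Finsupp.single l 1) = g (Finsupp.single l 1)) : f = g := by
  ext l
  simpa using h l

lemma bd_cone (x : X) (z : Chain K X) : bd K (cone K x z) = z - cone K x (bd K z) := by
  have : bd K ∘ₗ cone K x = LinearMap.id - cone K x ∘ₗ bd K :=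
    chain_hom_ext fun l => by simp [bdList]
  exact LinearMap.congr_fun this z

lemma bd_bdList (l : List X) : bd K (bdList K l) = 0 := by
  induction l with
  | nil => simp [bdList]
  | cons x l ih => simp [bdList, bd_cone, ih]

lemma bd_bd (z : Chain K X) : bd K (bd K z) = 0 := by
  have : bd K ∘ₗ bd K = (0 : Chain K X →ₗ[K] Chain K X) :=
    chain_hom_ext fun l => by simp [bd_bdList]
  exact LinearMap.congr_fun this z

lemma push_cone (f : X → Y) (x : X) (z : Chain K X) :
    push K f (cone K x z) = cone K (f x) (push K f z) := by
  have : push K f ∘ₗ cone K x = cone K (f x) ∘ₗ push K f := chain_hom_ext fun l => by simp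
  exact LinearMap.congr_fun this z

lemma push_bdList (f : X → Y) (l : List X) :
    push K f (bdList K l) = bdList K (l.map f) := by
  induction l with
  | nil => simp [bdList]
  | cons x l ih => simp [bdList, push_cone, ih]

lemma push_bd (f : X → Y) (z : Chain K X) : push K f (bd K z) = bd K (push K f z) := by
  have : push K f ∘ₗ bd K = bd K ∘ₗ push K f := chain_hom_ext fun l => by simp [push_bdList]
  exact LinearMap.congr_fun this z

@[simp] lemma sub_succ_single (a : List X → Y) (n : ℕ) (l : List X) :
    sub K a (n + 1) (Finsupp.single l 1) = cone K (a l) (sub K a n (bdList K l)) := by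
  simp [sub]

@[simp] lemma sub_zero_single (a : List X → Y) (l : List X) :
    sub K a 0 (Finsupp.single l 1) = Finsupp.single [] 1 := by
  simp [sub]

lemma bd_sub (a : List X → Y) (n : ℕ) (z : Chain K X) :
    bd K (sub K a (n + 1) z) = sub K a n (bd K z) := by
  induction n generalizing z with
  | zero =>
    have h0 : bd K ∘ₗ sub K a 0 = 0 := chain_hom_ext fun l => by simp [bdList]
    have : bd K ∘ₗ sub K a 1 = sub K a 0 ∘ₗ bd K := chain_hom_ext fun l => by
      have := LinearMap.congr_fun h0 (bdList K l)
      simp only [LinearMap.comp_apply, LinearMap.zero_apply] at this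
      simp [bd_cone, this]
    exact LinearMap.congr_fun this z
  | succ n ih =>
    have : bd K ∘ₗ sub K a (n + 2) = sub K a (n + 1) ∘ₗ bd K := chain_hom_ext fun l => by
      simp [bd_cone, ih, bd_bdList]
    exact LinearMap.congr_fun this z

lemma push_sub {f : X → X} {g : Y → Y} {a : List X → Y} (h : ∀ l, a (l.map f) = g (a l))
    (n : ℕ) (z : Chain K X) : push K g (sub K a n z) = sub K a n (push K f z) := by
  induction n generalizing z with
  | zero =>
    have : push K g ∘ₗ sub K a 0 = sub K a 0 ∘ₗ push K f := chain_hom_ext fun l => by simp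
    exact LinearMap.congr_fun this z
  | succ n ih =>
    have : push K g ∘ₗ sub K a (n + 1) = sub K a (n + 1) ∘ₗ push K f :=
      chain_hom_ext fun l => by simp [push_cone, ih, push_bdList, h]
    exact LinearMap.congr_fun this z

lemma nondeg_single_of {l : List X} (h : l.IsChain (· ≠ ·)) :
    nondeg K (Finsupp.single l 1) = Finsupp.single l 1 := by
  simp [nondeg, h]

lemma nondeg_single_of_not {l : List X} (h : ¬ l.IsChain (· ≠ ·)) :
    nondeg K (Finsupp.single l 1) = 0 := by
  simp [nondeg, h]

lemma nondeg_cone (x : X) (z : Chain K X) :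
    nondeg K (cone K x z) = nondeg K (cone K x (nondeg K z)) := by
  have : nondeg K ∘ₗ cone K x = nondeg K ∘ₗ cone K x ∘ₗ nondeg K := chain_hom_ext fun l => by
    by_cases h : l.IsChain (· ≠ ·)
    · simp [nondeg_single_of h]
    · have h' : ¬ (x :: l).IsChain (· ≠ ·) := fun hc => h hc.tail
      simp [nondeg_single_of_not h, nondeg_single_of_not h']
  exact LinearMap.congr_fun this z

lemma nondeg_cone_cone (x : X) (z : Chain K X) : nondeg K (cone K x (cone K x z)) = 0 := by
  have : nondeg K ∘ₗ cone K x ∘ₗ cone K x = 0 := chain_hom_ext fun l => by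
    have h' : ¬ (x :: x :: l).IsChain (· ≠ ·) := by simp
    simp [nondeg_single_of_not h']
  exact LinearMap.congr_fun this z

lemma nondeg_bdList_of_not {l : List X} (h : ¬ l.IsChain (· ≠ ·)) :
    nondeg K (bdList K l) = 0 := by
  induction l with
  | nil => simp at h
  | cons x l ih =>
    by_cases hl : l.IsChain (· ≠ ·)
    · cases l with
      | nil => simp at h
      | cons y l =>
        have : x = y := by
          by_contra hxy
          exact h (List.isChain_cons_cons.mpr ⟨hxy, hl⟩)
        subst this
        simp [bdList, nondeg_cone_cone]
    · rw [bdList, map_sub, nondeg_single_of_not hl, nondeg_cone, ih hl]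
      simp

lemma nondeg_bd (z : Chain K X) : nondeg K (bd K (nondeg K z)) = nondeg K (bd K z) := by
  have : nondeg K ∘ₗ bd K ∘ₗ nondeg K = nondeg K ∘ₗ bd K (X := X) := chain_hom_ext fun l => by
    by_cases h : l.IsChain (· ≠ ·)
    · simp [nondeg_single_of h]
    · simp [nondeg_single_of_not h, nondeg_bdList_of_not h]
  exact LinearMap.congr_fun this z

lemma push_nondeg {f : X → Y} (hf : Function.Injective f) (z : Chain K X) :
    push K f (nondeg K z) = nondeg K (push K f z) := by
  have : push K f ∘ₗ nondeg K = nondeg K ∘ₗ push K f := chain_hom_ext fun l => by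
    have hiff : (l.map f).IsChain (· ≠ ·) ↔ l.IsChain (· ≠ ·) := by
      simp [List.isChain_map, hf.ne_iff]
    by_cases h : l.IsChain (· ≠ ·)
    · simp [nondeg_single_of h, nondeg_single_of (hiff.mpr h)]
    · simp [nondeg_single_of_not h, nondeg_single_of_not (mt hiff.mp h)]
  exact LinearMap.congr_fun this z

/-- A linear map respects supports once it does so on single lists. -/
lemma map_mem_supported {P : Set (List X)} {Q : Set (List Y)} {f : Chain K X →ₗ[K] Chain K Y}
    (h : ∀ l ∈ P, f (Finsupp.single l 1) ∈ Finsupp.supported K K Q) {z : Chain K X}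
    (hz : z ∈ Finsupp.supported K K P) : f z ∈ Finsupp.supported K K Q := by
  rw [Finsupp.supported_eq_span_single] at hz
  induction hz using Submodule.span_induction with
  | mem x hx => obtain ⟨l, hl, rfl⟩ := hx; exact h l hl
  | zero => simp
  | add x y _ _ hx hy => rw [map_add]; exact add_mem hx hy
  | smul c x _ hx => rw [map_smul]; exact Submodule.smul_mem _ c hx

lemma cone_mem_supported {P Q : Set (List X)} {x : X} (h : ∀ l ∈ P, x :: l ∈ Q)
    {z : Chain K X} (hz : z ∈ Finsupp.supported K K P) :
    cone K x z ∈ Finsupp.supported K K Q :=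
  map_mem_supported (fun l hl => by
    rw [cone_single]; exact Finsupp.single_mem_supported K 1 (h l hl)) hz

lemma push_mem_supported {P : Set (List X)} {Q : Set (List Y)} {f : X → Y}
    (h : ∀ l ∈ P, l.map f ∈ Q) {z : Chain K X} (hz : z ∈ Finsupp.supported K K P) :
    push K f z ∈ Finsupp.supported K K Q :=
  map_mem_supported (fun l hl => by
    rw [push_single]; exact Finsupp.single_mem_supported K 1 (h l hl)) hz

lemma nondeg_mem_supported {P : Set (List X)} {z : Chain K X}
    (hz : z ∈ Finsupp.supported K K P) :
    nondeg K z ∈ Finsupp.supported K K {l | l ∈ P ∧ l.IsChain (· ≠ ·)} :=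
  map_mem_supported (fun l hl => by
    by_cases h : l.IsChain (· ≠ ·)
    · rw [nondeg_single_of h]; exact Finsupp.single_mem_supported K 1 ⟨hl, h⟩
    · rw [nondeg_single_of_not h]; exact zero_mem _) hz

lemma bdList_mem_supported (l : List X) :
    bdList K l ∈ Finsupp.supported K K {t | t.Sublist l ∧ t.length + 1 = l.length} := by
  induction l with
  | nil => simp [bdList]
  | cons x l ih =>
    refine sub_mem (Finsupp.single_mem_supported K 1 ⟨List.sublist_cons_self x l, rfl⟩)
      (cone_mem_supported (fun t ht => ?_) ih)
    exact ⟨ht.1.cons_cons x, by simpa using ht.2⟩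

lemma bd_mem_supported {P Q : Set (List X)}
    (h : ∀ l ∈ P, ∀ t : List X, t.Sublist l → t.length + 1 = l.length → t ∈ Q)
    {z : Chain K X} (hz : z ∈ Finsupp.supported K K P) : bd K z ∈ Finsupp.supported K K Q :=
  map_mem_supported (fun l hl => by
    rw [bd_single]
    exact Finsupp.supported_mono (fun t ht => h l hl t ht.1 ht.2) (bdList_mem_supported l)) hz

lemma push_pow_single (f : X → X) (n : ℕ) (l : List X) (c : K) :
    ((push K f : Module.End K (Chain K X)) ^ n) (Finsupp.single l c) =
      Finsupp.single (l.map f^[n]) c := by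
  induction n with
  | zero => simp
  | succ n ih =>
    rw [pow_succ', Module.End.mul_apply, ih, push_single, List.map_map,
      Function.iterate_succ']

end Chains

section Obstruction

variable {K : Type*} [Field K] {X Λ : Type*}

lemma map_altOp {C C' : Type*} [AddCommGroup C] [Module K C] [AddCommGroup C'] [Module K C']
    {p : ℕ} {ω : Module.End K C} {ω' : Module.End K C'} {f : C →ₗ[K] C'}
    (h : ∀ z, f (ω z) = ω' (f z)) (k : ℕ) (z : C) :
    f (altOp p ω k z) = altOp p ω' k (f z) := by
  have hpow : ∀ i z, f ((ω ^ i) z) = (ω' ^ i) (f z) := by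
    intro i
    induction i with
    | zero => simp
    | succ i ih => intro z; rw [pow_succ, pow_succ, Module.End.mul_apply, ih, h]; rfl
  unfold altOp normOp
  split_ifs
  · simp [LinearMap.sum_apply, hpow]
  · simp [h]

/-- Multiplication of lists by the weight of their first entry. -/
noncomputable def headWeight (w : Λ → K) : Chain K Λ →ₗ[K] Chain K Λ :=
  Finsupp.linearCombination K fun l => (l.head?.elim 0 w) • Finsupp.single l (1 : K)

/-- The labels of a flag: ranks strictly decrease unless the label stays the same. -/
def Descends (rank : Λ → ℕ) (a b : Λ) : Prop := rank b < rank a ∨ a = b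

lemma Descends.trans {rank : Λ → ℕ} {a b c : Λ} (h : Descends rank a b)
    (h' : Descends rank b c) : Descends rank a c := by
  unfold Descends at *
  rcases h with h | rfl
  · rcases h' with h' | rfl
    · exact Or.inl (h'.trans h)
    · exact Or.inl h
  · exact h'

lemma isChain_and {α : Type*} {R S : α → α → Prop} {l : List α} :
    l.IsChain (fun a b => R a b ∧ S a b) ↔ l.IsChain R ∧ l.IsChain S := by
  induction l with
  | nil => simp
  | cons a l ih =>
    cases l with
    | nil => simp
    | cons b l => simp only [List.isChain_cons_cons, ih]; tauto

lemma length_le_of_pairwise_descends {rank : Λ → ℕ} {M : ℕ} {t : List Λ}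
    (hM : ∀ a ∈ t, rank a < M) (hR : t.Pairwise (Descends rank)) (hne : t.IsChain (· ≠ ·)) :
    t.length ≤ M := by
  have hlt : t.Pairwise fun a b => rank b < rank a := by
    have : IsTrans Λ fun a b => rank b < rank a := ⟨fun a b c h h' => h'.trans h⟩
    rw [← List.isChain_iff_pairwise]
    exact (isChain_and.mpr ⟨hR.isChain, hne⟩).imp fun a b h => h.1.resolve_right h.2
  have hnd : (t.map rank).Nodup := by
    rw [List.nodup_iff_pairwise_ne, List.pairwise_map]
    exact hlt.imp fun h => h.ne'
  rw [← List.length_map (f := rank), ← List.toFinset_card_of_nodup hnd,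
    ← Finset.card_range M]
  refine Finset.card_le_card fun n hn => ?_
  obtain ⟨a, ha, rfl⟩ := List.mem_map.mp (List.mem_toFinset.mp hn)
  exact Finset.mem_range.mpr (hM a ha)

lemma sub_single_mem_supported {a : List X → Λ} {ok : Set (List X)} {good : Set Λ}
    {rank : Λ → ℕ} (hok : ∀ l ∈ ok, ∀ t : List X, t.Sublist l → t ∈ ok)
    (hgood : ∀ l ∈ ok, l ≠ [] → a l ∈ good)
    (hR : ∀ l ∈ ok, ∀ t : List X, t.Sublist l → t ≠ [] → Descends rank (a l) (a t))
    (n : ℕ) : ∀ l ∈ ok, l.length = n → sub K a n (Finsupp.single l 1) ∈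
      Finsupp.supported K K {t : List Λ | t.length = n ∧
        (∀ b ∈ t, b ∈ good ∧ Descends rank (a l) b) ∧ t.Pairwise (Descends rank)} := by
  induction n with
  | zero =>
    intro l _ _
    rw [sub_zero_single]
    exact Finsupp.single_mem_supported K 1 (by simp)
  | succ n ih =>
    intro l hl hn
    have hne : l ≠ [] := by rintro rfl; simp at hn
    rw [sub_succ_single]
    refine cone_mem_supported (P := {t : List Λ | t.length = n ∧
        (∀ b ∈ t, b ∈ good ∧ Descends rank (a l) b) ∧ t.Pairwise (Descends rank)}) ?_ ?_
    · rintro t ⟨h1, h2, h3⟩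
      refine ⟨by simp [h1], ?_, List.pairwise_cons.mpr ⟨fun b hb => (h2 b hb).2, h3⟩⟩
      intro b hb
      rcases List.mem_cons.mp hb with rfl | hb
      · exact ⟨hgood l hl hne, Or.inr rfl⟩
      · exact h2 b hb
    · refine map_mem_supported (fun s hs => ?_) (bdList_mem_supported l)
      obtain ⟨hs1, hs2⟩ := hs
      have hsn : s.length = n := by omega
      refine Finsupp.supported_mono ?_ (ih s (hok l hl s hs1) hsn)
      rintro t ⟨h1, h2, h3⟩
      refine ⟨h1, fun b hb => ⟨(h2 b hb).1, ?_⟩, h3⟩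
      have hs0 : s ≠ [] := by
        rintro rfl
        have : t = [] := List.length_eq_zero_iff.mp (by rw [h1, ← hsn]; rfl)
        simp [this] at hb
      exact (hR l hl s hs1 hs0).trans (h2 b hb).2

/-- Combinatorial obstruction: the image of the standard resolution of `ℤ/p` in dimension `M`
admits no equivariant labelling of flags by a graded set of `M` ranks with free action. -/
theorem false_of_labelling {p M : ℕ} (hpK : (p : K) = 0) {ω : X → X} {g : Λ → Λ}
    (hg : Function.Injective g) (hgp : g^[p] = id) {a : List X → Λ}
    (hag : ∀ l, a (l.map ω) = g (a l)) {ok : Set (List X)} {good : Set Λ} {rank : Λ → ℕ}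
    (hok : ∀ l ∈ ok, ∀ t : List X, t.Sublist l → t ∈ ok)
    (hgood : ∀ l ∈ ok, l ≠ [] → a l ∈ good)
    (hR : ∀ l ∈ ok, ∀ t : List X, t.Sublist l → t ≠ [] → Descends rank (a l) (a t))
    (hgg : ∀ b ∈ good, g b ∈ good) (hrank : ∀ b ∈ good, rank b < M) {w : Λ → K}
    (hw : ∀ b ∈ good, ∑ i ∈ Finset.range p, w (g^[i + 1] b) = 1)
    {e : ℕ → Chain K X} (he : ∀ k ≤ M + 1,
      e k ∈ Finsupp.supported K K {l | l ∈ ok ∧ l.length = k})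
    (he0 : e 0 = Finsupp.single [] 1) (he1 : bd K (e 1) = e 0)
    (heD : ∀ k, 1 ≤ k → k ≤ M → bd K (e (k + 1)) = altOp p (push K ω) k (e k)) : False := by
  let S : ℕ → Submodule K (Chain K Λ) := fun k =>
    Finsupp.supported K K {t | t.length = k ∧ ∀ b ∈ t, b ∈ good}
  let W : Module.End K (Chain K Λ) := push K g
  let D : Module.End K (Chain K Λ) := nondeg K ∘ₗ bd K
  let e' : ℕ → Chain K Λ := fun k => nondeg K (sub K a k (e k))
  have hsub : ∀ k ≤ M + 1, sub K a k (e k) ∈ Finsupp.supported K K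
      {t : List Λ | t.length = k ∧ (∀ b ∈ t, b ∈ good) ∧ t.Pairwise (Descends rank)} := by
    intro k hk
    refine map_mem_supported (fun l hl => ?_) (he k hk)
    refine Finsupp.supported_mono ?_ (sub_single_mem_supported hok hgood hR k l hl.1 hl.2)
    rintro t ⟨h1, h2, h3⟩
    exact ⟨h1, fun b hb => (h2 b hb).1, h3⟩
  have hstep : ∀ k, D (e' (k + 1)) = nondeg K (sub K a k (bd K (e (k + 1)))) := by
    intro k
    change nondeg K (bd K (nondeg K _)) = _
    rw [nondeg_bd, bd_sub]
  have hzero : e' (M + 1) = 0 := by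
    have h := nondeg_mem_supported (hsub (M + 1) le_rfl)
    have hempty : {l : List Λ | l ∈ {t : List Λ | t.length = M + 1 ∧ (∀ b ∈ t, b ∈ good) ∧
        t.Pairwise (Descends rank)} ∧ l.IsChain (· ≠ ·)} = ∅ := by
      refine Set.eq_empty_of_forall_notMem ?_
      rintro t ⟨⟨h1, h2, h3⟩, h4⟩
      have := length_le_of_pairwise_descends (fun b hb => hrank b (h2 b hb)) h3 h4
      omega
    rw [hempty, Finsupp.supported_empty] at h
    exact (Submodule.mem_bot K).mp h
  have hnd0 : nondeg K (Finsupp.single ([] : List Λ) (1 : K)) = Finsupp.single [] 1 :=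
    nondeg_single_of (by simp)
  have he'0 : e' 0 = Finsupp.single [] 1 := by
    simp only [e', he0, sub_zero_single, hnd0]
  have : e' 0 = 0 := by
    refine augmentation_eq_zero (p := p) (M := M) (ω := W) (D := D) (χ := headWeight w) (S := S)
      hpK ?_ ?_ ?_ ?_ ?_ ?_ ?_ ?_ ?_ ?_ hzero
    · intro k z hz
      refine push_mem_supported ?_ hz
      rintro l ⟨hl1, hl2⟩
      refine ⟨by simp [hl1], fun b hb => ?_⟩
      obtain ⟨c, hc, rfl⟩ := List.mem_map.mp hb
      exact hgg c (hl2 c hc)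
    · intro z hz
      have h0 : {t : List Λ | t.length = 0 ∧ ∀ b ∈ t, b ∈ good} = {[]} := by
        ext t; simp +contextual [List.length_eq_zero_iff]
      simp only [S, h0, Finsupp.supported_eq_span_single, Set.image_singleton,
        Submodule.mem_span_singleton] at hz
      obtain ⟨c, rfl⟩ := hz
      simp [W]
    · intro k z hz
      refine map_mem_supported (fun l hl => ?_) hz
      simp only [headWeight, Finsupp.linearCombination_single, one_smul]
      exact Submodule.smul_mem _ _ (Finsupp.single_mem_supported K 1 hl)
    · intro k z hz
      have hb : bd K z ∈ S k := by
        refine bd_mem_supported ?_ hz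
        rintro l ⟨hl1, hl2⟩ t ht1 ht2
        exact ⟨by omega, fun b hb => hl2 b (ht1.subset hb)⟩
      exact Finsupp.supported_mono (fun t ht => ht.1) (nondeg_mem_supported hb)
    · refine LinearMap.ext fun z => ?_
      change nondeg K (bd K (nondeg K (bd K z))) = 0
      rw [nondeg_bd, bd_bd, map_zero]
    · refine LinearMap.ext fun z => ?_
      change nondeg K (bd K (push K g z)) = push K g (nondeg K (bd K z))
      rw [push_nondeg hg, push_bd]
    · intro k z hz
      simp only [S, Finsupp.supported_eq_span_single] at hz
      induction hz using Submodule.span_induction with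
      | mem x hx =>
        obtain ⟨l, ⟨hl, hlg⟩, rfl⟩ := hx
        obtain ⟨b, t, rfl⟩ := List.exists_cons_of_length_eq_add_one hl
        have hterm : ∀ i ∈ Finset.range p, (W ^ (p - 1 - i)) (headWeight w ((W ^ (i + 1))
            (Finsupp.single (b :: t) 1))) =
            w (g^[i + 1] b) • Finsupp.single (b :: t) (1 : K) := by
          intro i hi
          have hi' : p - 1 - i + (i + 1) = p := by have := Finset.mem_range.mp hi; omega
          simp only [W]
          rw [push_pow_single, headWeight, Finsupp.linearCombination_single, one_smul, map_smul,
            push_pow_single, List.map_map, ← Function.iterate_add, hi', hgp, List.map_id]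
          simp
        rw [Finset.sum_congr rfl hterm, ← Finset.sum_smul, hw b (hlg b (by simp)), one_smul]
      | zero => simp
      | add x y _ _ hx hy => simp only [map_add, Finset.sum_add_distrib, hx, hy]
      | smul c x _ hx => simp only [map_smul, ← Finset.smul_sum, hx]
    · intro k hk
      refine Finsupp.supported_mono ?_ (nondeg_mem_supported (hsub k hk))
      rintro t ⟨⟨h1, h2, -⟩, -⟩
      exact ⟨h1, h2⟩
    · rw [hstep, zero_add, he1, he0, sub_zero_single, hnd0, he'0]
    · intro k hk hkM
      rw [hstep, heD k hk hkM]
      have : ∀ z, (nondeg K ∘ₗ sub K a k) ((push K ω : Module.End K (Chain K X)) z) =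
          W ((nondeg K ∘ₗ sub K a k) z) := by
        intro z
        simp only [LinearMap.comp_apply, W]
        rw [push_nondeg hg, push_sub hag]
      exact map_altOp this k (e k)
  rw [he'0] at this
  simp at this

end Obstruction

section GeneralPosition

variable {V : Type*} [AddCommGroup V] [Module ℝ V]

/-- A list whose convex hull misses the submodule `T`. -/
def Avoids (T : Submodule ℝ V) (l : List V) : Prop :=
  Disjoint (convexHull ℝ {x | x ∈ l}) (T : Set V)

lemma Avoids.map {T : Submodule ℝ V} {l : List V} (h : Avoids T l) {f : V →ₗ[ℝ] V}
    (hf : ∀ x, f x ∈ T → x ∈ T) : Avoids T (l.map f) := by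
  have : {x | x ∈ l.map f} = f '' {x | x ∈ l} := by ext; simp
  rw [Avoids, this, ← f.image_convexHull, Set.disjoint_left]
  rintro _ ⟨x, hx, rfl⟩ hT
  exact Set.disjoint_left.mp h hx (hf x hT)

lemma Avoids.cons {T : Submodule ℝ V} {l : List V} (h : Avoids T l) {q : V}
    (hq : q ∉ Submodule.span ℝ {x | x ∈ l} ⊔ T) : Avoids T (q :: l) := by
  have hset : {x | x ∈ q :: l} = insert q {x | x ∈ l} := by ext; simp
  rw [Avoids, hset, Set.disjoint_left]
  intro z hz hzT
  rcases Set.eq_empty_or_nonempty {x | x ∈ l} with he | hne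
  · rw [he] at hz
    simp only [insert_empty_eq, convexHull_singleton, Set.mem_singleton_iff] at hz
    subst hz
    exact hq (Submodule.mem_sup_right hzT)
  · rw [convexHull_insert hne, mem_convexJoin] at hz
    obtain ⟨q', hq', y, hy, a, b, ha, hb, hab, rfl⟩ := hz
    rw [Set.mem_singleton_iff] at hq'
    subst hq'
    rcases eq_or_ne a 0 with rfl | ha0
    · rw [zero_add] at hab
      subst hab
      simp only [zero_smul, one_smul, zero_add] at hzT
      exact Set.disjoint_left.mp h hy hzT
    · refine hq ?_
      have hy' : y ∈ Submodule.span ℝ {x | x ∈ l} := convexHull_min Submodule.subset_span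
        (Submodule.convex _) hy
      have : q' = a⁻¹ • ((a • q' + b • y) - b • y) := by
        rw [add_sub_cancel_right, smul_smul, inv_mul_cancel₀ ha0, one_smul]
      rw [this]
      exact Submodule.smul_mem _ _ (Submodule.sub_mem _ (Submodule.mem_sup_right hzT)
        (Submodule.smul_mem _ _ (Submodule.mem_sup_left hy')))

lemma exists_forall_notMem_span_sup [FiniteDimensional ℝ V] {T : Submodule ℝ V} {n : ℕ}
    (hn : n + Module.finrank ℝ T < Module.finrank ℝ V) (F : Finset (List V))
    (hF : ∀ l ∈ F, l.length ≤ n) :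
    ∃ q : V, ∀ l ∈ F, q ∉ Submodule.span ℝ {x | x ∈ l} ⊔ T := by
  classical
  by_contra! hcon
  refine Subspace.biUnion_ne_univ_of_top_notMem (k := ℝ)
    (s := F.image fun l => Submodule.span ℝ {x | x ∈ l} ⊔ T) ?_ ?_
  · intro htop
    obtain ⟨l, hl, h⟩ := Finset.mem_image.mp htop
    have h1 : Module.finrank ℝ (Submodule.span ℝ {x | x ∈ l}) ≤ n := by
      have hset : {x | x ∈ l} = (l.toFinset : Set V) := by ext; simp
      rw [hset]
      exact (finrank_span_finset_le_card _).trans ((List.toFinset_card_le l).trans (hF l hl))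
    have h2 := Submodule.finrank_add_le_finrank_add_finrank (Submodule.span ℝ {x | x ∈ l}) T
    rw [h, finrank_top] at h2
    omega
  · rw [Set.eq_univ_iff_forall]
    intro q
    obtain ⟨l, hl, h⟩ := hcon q
    simp only [Set.mem_iUnion]
    exact ⟨_, Finset.mem_image_of_mem _ hl, h⟩

/-- The standard resolution of `ℤ/p` maps to affine chains avoiding `T`, up to the codimension
of `T`. -/
theorem exists_resolution {K : Type*} [Field K] [FiniteDimensional ℝ V] {T : Submodule ℝ V}
    {p N : ℕ} {f : V →ₗ[ℝ] V} (hfT : ∀ x, f x ∈ T → x ∈ T) (hfp : f^[p] = id)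
    (hN : N + Module.finrank ℝ T ≤ Module.finrank ℝ V) :
    ∃ e : ℕ → Chain K V, e 0 = Finsupp.single [] 1 ∧
      (∀ k ≤ N, e k ∈ Finsupp.supported K K {l | Avoids T l ∧ l.length = k}) ∧
      (1 ≤ N → bd K (e 1) = e 0) ∧
      ∀ k, 1 ≤ k → k < N → bd K (e (k + 1)) = altOp p (push K f) k (e k) := by
  classical
  have hpow : (push K f : Module.End K (Chain K V)) ^ p = 1 := by
    refine chain_hom_ext fun l => ?_
    rw [push_pow_single, hfp, List.map_id]
    rfl
  have hcone : ∀ k, k < N → ∀ z ∈ Finsupp.supported K K {l : List V | Avoids T l ∧ l.length = k},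
      bd K z = 0 → ∃ c ∈ Finsupp.supported K K {l : List V | Avoids T l ∧ l.length = k + 1},
        bd K c = z := by
    intro k hk z hz hz0
    obtain ⟨q, hq⟩ := exists_forall_notMem_span_sup (T := T) (n := k) (by omega) z.support
      (fun l hl => ((Finsupp.mem_supported K z).mp hz hl).2.le)
    refine ⟨cone K q z, cone_mem_supported (P := {l | l ∈ z.support}) ?_ ?_, ?_⟩
    · intro l hl
      have := (Finsupp.mem_supported K z).mp hz hl
      exact ⟨this.1.cons (hq l hl), by simp [this.2]⟩
    · exact (Finsupp.mem_supported K z).mpr fun l hl => hl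
    · rw [bd_cone, hz0, map_zero, sub_zero]
  induction N with
  | zero =>
    refine ⟨fun _ => Finsupp.single [] 1, rfl, ?_, by omega, by omega⟩
    intro k hk
    obtain rfl : k = 0 := by omega
    exact Finsupp.single_mem_supported K 1 ⟨by simp [Avoids], rfl⟩
  | succ n ih =>
    obtain ⟨e, he0, hes, he1, heD⟩ := ih (by omega) fun k hk => hcone k (by omega)
    have hz : ∃ z ∈ Finsupp.supported K K {l : List V | Avoids T l ∧ l.length = n},
        bd K z = 0 ∧ (n = 0 → z = e 0) ∧ (1 ≤ n → z = altOp p (push K f) n (e n)) := by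
      rcases Nat.eq_zero_or_pos n with rfl | hn
      · exact ⟨e 0, hes 0 le_rfl, by rw [he0, bd_single, bdList], fun _ => rfl, by omega⟩
      · refine ⟨altOp p (push K f) n (e n), altOp_apply_mem (fun z hz => ?_) n (hes n le_rfl), ?_,
          by omega, fun _ => rfl⟩
        · refine push_mem_supported ?_ hz
          rintro l ⟨hl1, hl2⟩
          exact ⟨hl1.map hfT, by simp [hl2]⟩
        · rw [map_altOp (ω' := push K f) (fun z => (push_bd f z).symm) n (e n)]
          rcases Nat.lt_or_ge 1 n with h1 | h1
          · obtain ⟨m, rfl⟩ : ∃ m, n = m + 1 := ⟨n - 1, by omega⟩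
            rw [heD m (by omega) (by omega)]
            exact LinearMap.congr_fun (altOp_succ_mul hpow m) (e m)
          · obtain rfl : n = 1 := by omega
            rw [he1 le_rfl, he0]
            simp [altOp]
    obtain ⟨z, hzs, hz0, hz1, hz2⟩ := hz
    obtain ⟨c, hcs, hcz⟩ := hcone n (by omega) z hzs hz0
    have hne : ∀ k ≤ n, Function.update e (n + 1) c k = e k := fun k hk =>
      Function.update_of_ne (by omega) _ _
    have heq : Function.update e (n + 1) c (n + 1) = c := Function.update_self _ _ _
    refine ⟨Function.update e (n + 1) c, by rw [hne 0 (by omega), he0], ?_, ?_, ?_⟩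
    · intro k hk
      rcases Nat.lt_or_ge n k with h | h
      · obtain rfl : k = n + 1 := by omega
        rwa [heq]
      · rw [hne k h]
        exact hes k h
    · intro _
      rw [hne 0 (by omega)]
      rcases Nat.eq_zero_or_pos n with rfl | hn
      · rw [zero_add] at heq
        rw [heq, hcz, hz1 rfl]
      · rw [hne 1 hn, he1 hn]
    · intro k hk hkn
      rcases Nat.lt_or_ge k n with h | h
      · rw [hne _ (by omega), hne _ (by omega), heD k hk h]
      · obtain rfl : k = n := by omega
        rw [heq, hne k le_rfl, hcz, hz2 hk]

end GeneralPosition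

section Subdivision

variable {V : Type*} [NormedAddCommGroup V] [NormedSpace ℝ V]

/-- The barycentre of a list of points. -/
noncomputable def barycentre (l : List V) : V := (l.length : ℝ)⁻¹ • l.sum

lemma barycentre_map (f : V →ₗ[ℝ] V) (l : List V) :
    barycentre (l.map f) = f (barycentre l) := by
  simp [barycentre, map_list_sum]

lemma norm_sum_sub_le {x : V} {ρ : ℝ} (l : List V) (h : ∀ y ∈ l, dist y x ≤ ρ) :
    ‖l.sum - (l.length : ℝ) • x‖ ≤ l.length * ρ := by
  induction l with
  | nil => simp
  | cons a l ih =>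
    have h1 := ih fun y hy => h y (List.mem_cons_of_mem _ hy)
    have h2 := h a (by simp)
    rw [dist_eq_norm] at h2
    have : (a :: l).sum - ((a :: l).length : ℝ) • x =
        (a - x) + (l.sum - (l.length : ℝ) • x) := by
      simp only [List.sum_cons, List.length_cons, Nat.cast_succ, add_smul, one_smul]
      abel
    rw [this]
    refine (norm_add_le _ _).trans ?_
    simp only [List.length_cons, Nat.cast_succ]
    linarith

lemma dist_barycentre_le {l : List V} {N : ℕ} (hN : l.length ≤ N) {ρ : ℝ} (hρ : 0 ≤ ρ)
    (h : ∀ x ∈ l, ∀ y ∈ l, dist x y ≤ ρ) {x : V} (hx : x ∈ l) :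
    dist x (barycentre l) ≤ (1 - (N : ℝ)⁻¹) * ρ := by
  obtain ⟨s, t, rfl⟩ := List.append_of_mem hx
  set n := (s ++ x :: t).length with hn
  have hnst : (n : ℝ) = s.length + t.length + 1 := by
    rw [hn]; simp; ring
  have hnpos : (0 : ℝ) < n := by rw [hnst]; positivity
  have hs := norm_sum_sub_le s fun y hy => h y (by simp [hy]) x (by simp)
  have ht := norm_sum_sub_le t fun y hy => h y (by simp [hy]) x (by simp)
  have heq : barycentre (s ++ x :: t) - x = (n : ℝ)⁻¹ •
      ((s.sum - (s.length : ℝ) • x) + (t.sum - (t.length : ℝ) • x)) := by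
    have : (s.sum - (s.length : ℝ) • x) + (t.sum - (t.length : ℝ) • x) =
        (s ++ x :: t).sum - (n : ℝ) • x := by
      rw [hnst, add_smul, add_smul, one_smul]
      simp only [List.sum_append, List.sum_cons]
      abel
    rw [this, smul_sub, smul_smul, inv_mul_cancel₀ hnpos.ne', one_smul, barycentre]
  rw [dist_comm, dist_eq_norm, heq, norm_smul, norm_inv, Real.norm_of_nonneg hnpos.le]
  have h1 : ‖(s.sum - (s.length : ℝ) • x) + (t.sum - (t.length : ℝ) • x)‖ ≤ (n - 1) * ρ := by
    refine (norm_add_le _ _).trans ?_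
    rw [hnst]
    linarith
  calc (n : ℝ)⁻¹ * _ ≤ (n : ℝ)⁻¹ * ((n - 1) * ρ) := by gcongr
    _ = (1 - (n : ℝ)⁻¹) * ρ := by field_simp
    _ ≤ (1 - (N : ℝ)⁻¹) * ρ := by
      have : (N : ℝ)⁻¹ ≤ (n : ℝ)⁻¹ := by
        gcongr
      gcongr

lemma barycentre_mem_convexHull {l : List V} (hl : l ≠ []) :
    barycentre l ∈ convexHull ℝ {x | x ∈ l} := by
  have hsum : ∑ i : Fin l.length, l.get i = l.sum := by
    rw [← List.sum_ofFn, List.ofFn_get]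
  have hpos : (0 : ℝ) < l.length := by
    exact_mod_cast List.length_pos_iff.mpr hl
  rw [barycentre, ← hsum, Finset.smul_sum]
  refine (convex_convexHull ℝ _).sum_mem (fun _ _ => by positivity) ?_
    fun i _ => subset_convexHull ℝ _ (List.get_mem l i)
  simp [hpos.ne']

lemma sub_barycentre_mem_supported {K : Type*} [Field K] {N : ℕ} {ρ : ℝ} (hρ : 0 ≤ ρ) (n : ℕ)
    (hn : n ≤ N) (l : List V) (hl : l.length = n) (h : ∀ x ∈ l, ∀ y ∈ l, dist x y ≤ ρ) :
    sub K barycentre n (Finsupp.single l 1) ∈ Finsupp.supported K K {t : List V |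
      t.length = n ∧ (∀ x ∈ t, x ∈ convexHull ℝ {x | x ∈ l}) ∧
        ∀ x ∈ t, ∀ y ∈ t, dist x y ≤ (1 - (N : ℝ)⁻¹) * ρ} := by
  induction n generalizing l with
  | zero =>
    rw [sub_zero_single]
    exact Finsupp.single_mem_supported K 1 (by simp)
  | succ n ih =>
    have hne : l ≠ [] := by rintro rfl; simp at hl
    have hball : convexHull ℝ {x | x ∈ l} ⊆
        Metric.closedBall (barycentre l) ((1 - (N : ℝ)⁻¹) * ρ) :=
      convexHull_min (fun x hx => dist_barycentre_le (hl.le.trans hn) hρ h hx)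
        (convex_closedBall _ _)
    have hb := barycentre_mem_convexHull hne
    rw [sub_succ_single]
    refine cone_mem_supported (P := {t : List V |
      t.length = n ∧ (∀ x ∈ t, x ∈ convexHull ℝ {x | x ∈ l}) ∧
        ∀ x ∈ t, ∀ y ∈ t, dist x y ≤ (1 - (N : ℝ)⁻¹) * ρ}) ?_ ?_
    · rintro t ⟨h1, h2, h3⟩
      refine ⟨by simp [h1], ?_, ?_⟩
      · intro x hx
        rcases List.mem_cons.mp hx with rfl | hx
        · exact hb
        · exact h2 x hx
      · intro x hx y hy
        rcases List.mem_cons.mp hx with rfl | hx <;> rcases List.mem_cons.mp hy with rfl | hy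
        · exact hball hb
        · rw [dist_comm]; exact hball (h2 y hy)
        · exact hball (h2 x hx)
        · exact h3 x hx y hy
    · refine map_mem_supported (fun s hs => ?_) (bdList_mem_supported l)
      obtain ⟨hs1, hs2⟩ := hs
      refine Finsupp.supported_mono ?_ (ih (by omega) s (by omega)
        fun x hx y hy => h x (hs1.subset hx) y (hs1.subset hy))
      rintro t ⟨h1, h2, h3⟩
      exact ⟨h1, fun x hx => convexHull_mono (fun z hz => hs1.subset hz) (h2 x hx), h3⟩

/-- The chains of `exists_resolution` can be taken inside a fixed compact set and with
arbitrarily small simplices. -/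
theorem exists_fine_resolution {K : Type*} [Field K] [FiniteDimensional ℝ V]
    {T : Submodule ℝ V} {p N : ℕ} {f : V →ₗ[ℝ] V} (hfT : ∀ x, f x ∈ T → x ∈ T)
    (hfp : f^[p] = id) (hN1 : 1 ≤ N)
    (hN : N + Module.finrank ℝ T ≤ Module.finrank ℝ V) :
    ∃ X : Set V, IsCompact X ∧ Disjoint X (T : Set V) ∧ ∀ η > 0, ∃ e : ℕ → Chain K V,
      e 0 = Finsupp.single [] 1 ∧
      (∀ k ≤ N, e k ∈ Finsupp.supported K K
        {l | ((∀ x ∈ l, x ∈ X) ∧ ∀ x ∈ l, ∀ y ∈ l, dist x y ≤ η) ∧ l.length = k}) ∧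
      bd K (e 1) = e 0 ∧
      ∀ k, 1 ≤ k → k < N → bd K (e (k + 1)) = altOp p (push K f) k (e k) := by
  obtain ⟨e, he0, hes, he1, heD⟩ := exists_resolution (K := K) hfT hfp hN
  set X : Set V := ⋃ k ∈ Finset.range (N + 1), ⋃ l ∈ (e k).support,
    convexHull ℝ {x | x ∈ l} with hX
  have hXc : IsCompact X := by
    refine Finset.isCompact_biUnion _ fun k _ => Finset.isCompact_biUnion _ fun l _ => ?_
    exact Set.Finite.isCompact_convexHull ℝ (List.finite_toSet l)
  refine ⟨X, hXc, ?_, fun η hη => ?_⟩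
  · simp only [hX, Set.disjoint_iUnion_left]
    intro k hk l hl
    exact ((Finsupp.mem_supported K _).mp (hes k (by simpa [Nat.lt_succ_iff] using hk)) hl).1
  set ρ := Metric.diam X with hρ
  have hρ0 : 0 ≤ ρ := Metric.diam_nonneg
  set κ : ℝ := 1 - (N : ℝ)⁻¹ with hκ
  have hNpos : (0 : ℝ) < N := by exact_mod_cast hN1
  have hκ1 : κ < 1 := by rw [hκ]; have := inv_pos.mpr hNpos; linarith
  have hκ0 : 0 ≤ κ := by
    rw [hκ, sub_nonneg]
    exact inv_le_one_of_one_le₀ (by exact_mod_cast hN1)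
  have hsupp : ∀ m : ℕ, ∀ k ≤ N, (sub K barycentre k)^[m] (e k) ∈ Finsupp.supported K K
      {l | (∃ C, Convex ℝ C ∧ C ⊆ X ∧ ∀ x ∈ l, x ∈ C) ∧
        (∀ x ∈ l, ∀ y ∈ l, dist x y ≤ κ ^ m * ρ) ∧ l.length = k} := by
    intro m k hk
    induction m with
    | zero =>
      refine (Finsupp.mem_supported K _).mpr fun l hl => ?_
      have hsub : convexHull ℝ {x | x ∈ l} ⊆ X := by
        intro x hx
        simp only [hX, Set.mem_iUnion]
        exact ⟨k, Finset.mem_range.mpr (by omega), l, hl, hx⟩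
      have hmem : ∀ x ∈ l, x ∈ convexHull ℝ {x | x ∈ l} := fun x hx =>
        subset_convexHull ℝ _ hx
      refine ⟨⟨_, convex_convexHull ℝ _, hsub, hmem⟩, fun x hx y hy => ?_,
        ((Finsupp.mem_supported K _).mp (hes k hk) hl).2⟩
      rw [pow_zero, one_mul]
      exact Metric.dist_le_diam_of_mem hXc.isBounded (hsub (hmem x hx)) (hsub (hmem y hy))
    | succ m ih =>
      rw [Function.iterate_succ_apply']
      refine map_mem_supported ?_ ih
      rintro l ⟨⟨C, hC, hCX, hlC⟩, hd, hlen⟩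
      refine Finsupp.supported_mono ?_
        (sub_barycentre_mem_supported (mul_nonneg (pow_nonneg hκ0 m) hρ0) k hk l hlen hd)
      rintro t ⟨h1, h2, h3⟩
      refine ⟨⟨C, hC, hCX, fun x hx => convexHull_min hlC hC (h2 x hx)⟩,
        fun x hx y hy => ?_, h1⟩
      rw [pow_succ', mul_assoc]
      exact h3 x hx y hy
  obtain ⟨m, hm⟩ := exists_pow_lt_of_lt_one (div_pos hη (by linarith : 0 < ρ + 1)) hκ1
  have hmη : κ ^ m * ρ ≤ η := by
    rw [lt_div_iff₀ (by linarith)] at hm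
    have := pow_nonneg hκ0 m
    nlinarith
  have hbd : ∀ m k z, bd K ((sub K (barycentre (V := V)) (k + 1))^[m] z) =
      (sub K barycentre k)^[m] (bd K z) := fun m k z =>
    Function.Semiconj.iterate_right (f := bd K) (bd_sub barycentre k) m z
  have hsingle : (sub K (barycentre (V := V)) 0)^[m] (Finsupp.single [] 1) =
      Finsupp.single [] 1 := Function.iterate_fixed (sub_zero_single _ _) m
  refine ⟨fun k => (sub K barycentre k)^[m] (e k), ?_, ?_, ?_, ?_⟩
  · simp only [he0, hsingle]
  · intro k hk
    refine Finsupp.supported_mono ?_ (hsupp m k hk)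
    rintro l ⟨⟨C, -, hCX, hlC⟩, hd, hlen⟩
    exact ⟨⟨fun x hx => hCX (hlC x hx), fun x hx y hy => (hd x hx y hy).trans hmη⟩, hlen⟩
  · rw [hbd m 0, he1 hN1]
  · intro k hk hkN
    have hcomm : ∀ z : Chain K V, ((sub K barycentre k : Module.End K (Chain K V)) ^ m)
        (push K f z) = push K f (((sub K barycentre k : Module.End K (Chain K V)) ^ m) z) := by
      intro z
      simp only [Module.End.pow_apply]
      exact (Function.Semiconj.iterate_right (f := push K f)
        (fun z => push_sub (barycentre_map f) k z) m z).symm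
    have := map_altOp (p := p) (f := (sub K barycentre k : Module.End K (Chain K V)) ^ m)
      hcomm k (e k)
    rw [hbd m k, heD k hk hkN]
    simpa only [Module.End.pow_apply] using this

end Subdivision

section Flags

variable {p : ℕ}

lemma card_quotient_lt {α : Type*} [Finite α] {s t : Setoid α} (h : s < t) :
    Nat.card (Quotient t) < Nat.card (Quotient s) := by
  have := Fintype.ofFinite (Quotient s)
  have := Fintype.ofFinite (Quotient t)
  rw [Nat.card_eq_fintype_card, Nat.card_eq_fintype_card]
  refine Fintype.card_lt_of_surjective_not_injective (Quotient.map' id fun x y hxy => h.le hxy)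
    (fun q => ?_) fun hinj => h.not_ge fun {x y} hxy => ?_
  · induction q using Quotient.inductionOn' with
    | h x => exact ⟨Quotient.mk'' x, rfl⟩
  · exact Quotient.exact' (hinj (Quotient.sound' hxy :
      (Quotient.mk'' x : Quotient t) = Quotient.mk'' y))

lemma card_quotient_bot {α : Type*} : Nat.card (Quotient (⊥ : Setoid α)) = Nat.card α :=
  (Nat.card_eq_of_bijective (Quotient.mk (⊥ : Setoid α))
    ⟨fun _ _ h => Quotient.exact h, Quotient.mk_surjective⟩).symm

lemma card_quotient_top {α : Type*} [Nonempty α] :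
    Nat.card (Quotient (⊤ : Setoid α)) = 1 := by
  rw [Nat.card_eq_one_iff_unique]
  refine ⟨⟨fun a b => ?_⟩, ⟨Quotient.mk _ (Classical.arbitrary α)⟩⟩
  induction a, b using Quotient.inductionOn₂ with
  | h x y => exact Quotient.sound trivial

lemma card_quotient_comap {α β : Type*} (f : α ≃ β) (s : Setoid β) :
    Nat.card (Quotient (s.comap f)) = Nat.card (Quotient s) :=
  Nat.card_congr (Quotient.congr f fun _ _ => Iff.rfl)

lemma natCast_ne_zero_of_lt {n : ℕ} (h0 : 0 < n) (hn : n < p) : (n : ZMod p) ≠ 0 := by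
  rw [Ne, ZMod.natCast_eq_zero_iff]
  exact fun h => absurd (Nat.le_of_dvd h0 h) (by omega)

lemma sum_range_natCast_succ [Fact p.Prime] {M : Type*} [AddCommMonoid M] (F : ZMod p → M) :
    ∑ i ∈ Finset.range p, F ((i + 1 : ℕ) : ZMod p) = ∑ x, F x := by
  have h1 : ∑ x, F x = ∑ x, F (x + 1) := (Equiv.sum_comp (Equiv.addRight (1 : ZMod p)) F).symm
  rw [h1]
  refine Finset.sum_bij (fun i _ => (i : ZMod p)) (by simp) ?_ ?_ (by simp)
  · intro i hi j hj hij
    rw [ZMod.natCast_eq_natCast_iff'] at hij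
    rwa [Nat.mod_eq_of_lt (Finset.mem_range.mp hi),
      Nat.mod_eq_of_lt (Finset.mem_range.mp hj)] at hij
  · exact fun x _ => ⟨x.val, Finset.mem_range.mpr x.val_lt, by simp⟩

/-- The weight of a set of residues: its translates have total weight one. -/
noncomputable def setWeight (A : Set (ZMod p)) : ZMod p :=
  open scoped Classical in if 0 ∈ A then (A.ncard : ZMod p)⁻¹ else 0

/-- The weight of a partition of the residues: its translates have total weight one. -/
noncomputable def partitionWeight (s : Setoid (ZMod p)) : ZMod p :=
  ({x | s 0 x}.ncard : ZMod p)⁻¹ * (Nat.card (Quotient s) : ZMod p)⁻¹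

lemma ncard_pos_and_lt [Fact p.Prime] {A : Set (ZMod p)} (h0 : A.Nonempty) (h1 : A ≠ Set.univ) :
    0 < A.ncard ∧ A.ncard < p := by
  refine ⟨(Set.ncard_pos).mpr h0, ?_⟩
  have := Set.ncard_lt_ncard (Set.ssubset_univ_iff.mpr h1)
  simpa [Set.ncard_univ] using this

lemma card_quotient_mem [Fact p.Prime] {s : Setoid (ZMod p)} (h0 : s ≠ ⊥) (h1 : s ≠ ⊤) :
    1 < Nat.card (Quotient s) ∧ Nat.card (Quotient s) < p := by
  have h2 := card_quotient_lt (bot_lt_iff_ne_bot.mpr h0)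
  have h3 := card_quotient_lt (lt_top_iff_ne_top.mpr h1)
  rw [card_quotient_bot, Nat.card_zmod] at h2
  rw [card_quotient_top] at h3
  exact ⟨h3, h2⟩

lemma ncard_preimage_add (A : Set (ZMod p)) (x : ZMod p) :
    ((· + x) ⁻¹' A).ncard = A.ncard :=
  Set.ncard_preimage_of_injective_subset_range (add_left_injective x)
    fun y _ => ⟨y - x, sub_add_cancel y x⟩

lemma sum_setWeight [Fact p.Prime] {A : Set (ZMod p)} (h0 : A.Nonempty) (h1 : A ≠ Set.univ) :
    ∑ x : ZMod p, setWeight ((· + x) ⁻¹' A) = 1 := by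
  classical
  obtain ⟨h2, h3⟩ := ncard_pos_and_lt h0 h1
  simp only [setWeight, ncard_preimage_add, Set.mem_preimage, zero_add]
  rw [← Finset.sum_filter, Finset.sum_const, nsmul_eq_mul]
  have : (Finset.univ.filter (· ∈ A)).card = A.ncard := by
    rw [← Set.ncard_coe_finset]; simp
  rw [this, mul_inv_cancel₀ (natCast_ne_zero_of_lt h2 h3)]

lemma sum_partitionWeight [Fact p.Prime] {s : Setoid (ZMod p)} (h0 : s ≠ ⊥) (h1 : s ≠ ⊤) :
    ∑ x : ZMod p, partitionWeight (s.comap (· + x)) = 1 := by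
  classical
  obtain ⟨h2, h3⟩ := card_quotient_mem h0 h1
  have hw : ∀ x : ZMod p, partitionWeight (s.comap (· + x)) =
      ({y | s x y}.ncard : ZMod p)⁻¹ * (Nat.card (Quotient s) : ZMod p)⁻¹ := by
    intro x
    have e1 : {y | (s.comap (· + x)) 0 y} = (· + x) ⁻¹' {y | s x y} := by
      ext y; simp [Setoid.comap_rel]
    rw [partitionWeight, e1, ncard_preimage_add]
    rw [show s.comap (· + x) = s.comap (Equiv.addRight x) from rfl, card_quotient_comap]
  simp only [hw, ← Finset.sum_mul]
  have hq : ∑ x : ZMod p, ({y | s x y}.ncard : ZMod p)⁻¹ = Nat.card (Quotient s) := by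
    rw [← Finset.sum_fiberwise (s := Finset.univ) (g := fun x => Quotient.mk s x),
      Nat.card_eq_fintype_card, ← Finset.card_univ, Finset.card_eq_sum_ones, Nat.cast_sum]
    refine Finset.sum_congr rfl fun q _ => ?_
    induction q using Quotient.inductionOn with
    | h x =>
      have hne : {y | s x y} ≠ Set.univ := fun h => h1 <| by
        ext y z
        have hy : s x y := h.ge (Set.mem_univ y)
        have hz : s x z := h.ge (Set.mem_univ z)
        simpa using s.trans (s.symm hy) hz
      obtain ⟨h4, h5⟩ := ncard_pos_and_lt (A := {y | s x y}) ⟨x, s.refl x⟩ hne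
      have hconst : ∀ y ∈ Finset.univ.filter (fun y => Quotient.mk s y = Quotient.mk s x),
          ({z | s y z}.ncard : ZMod p)⁻¹ = ({z | s x z}.ncard : ZMod p)⁻¹ := by
        intro y hy
        have hyx : s y x := Quotient.exact (Finset.mem_filter.mp hy).2
        have : {z | s y z} = {z | s x z} := by
          ext z
          exact ⟨fun h => s.trans (s.symm hyx) h, fun h => s.trans hyx h⟩
        rw [this]
      have hcard : (Finset.univ.filter (fun y => Quotient.mk s y = Quotient.mk s x)).card =
          {z | s x z}.ncard := by
        rw [← Set.ncard_coe_finset]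
        congr 1
        ext y
        simp only [Finset.coe_filter, Finset.mem_univ, true_and, Set.mem_ofPred_eq]
        rw [Quotient.eq]
        exact s.comm'
      rw [Finset.sum_congr rfl hconst, Finset.sum_const, nsmul_eq_mul, hcard,
        mul_inv_cancel₀ (natCast_ne_zero_of_lt h4 h5), Nat.cast_one]
  rw [hq, mul_inv_cancel₀ (natCast_ne_zero_of_lt (by omega) h3)]

/-- Labels: a row together with a set of residues, or a partition of the residues. -/
abbrev Label (p : ℕ) := (ℕ × Set (ZMod p)) ⊕ Setoid (ZMod p)

/-- Translation of labels. -/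
def Label.shift (x : ZMod p) : Label p → Label p :=
  Sum.map (Prod.map id ((· + x) ⁻¹' ·)) (Setoid.comap (· + x))

lemma Label.shift_shift (x y : ZMod p) (b : Label p) :
    Label.shift x (Label.shift y b) = Label.shift (x + y) b := by
  rcases b with ⟨j, A⟩ | s
  · simp [Label.shift, Set.preimage_preimage, add_assoc]
  · simp only [Label.shift, Sum.map_inr]
    congr 1
    ext a b
    simp [Setoid.comap_rel, add_assoc]

lemma Label.shift_zero (b : Label p) : Label.shift 0 b = b := by
  rcases b with ⟨j, A⟩ | s
  · simp [Label.shift]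
  · simp only [Label.shift, Sum.map_inr]
    congr 1
    ext a b
    simp [Setoid.comap_rel]

lemma Label.iterate_shift (n : ℕ) (b : Label p) :
    (Label.shift 1)^[n] b = Label.shift (n : ZMod p) b := by
  induction n with
  | zero => simp [Label.shift_zero]
  | succ n ih =>
    rw [Function.iterate_succ_apply', ih, Label.shift_shift, Nat.cast_succ, add_comm]

/-- The rank of a label. -/
noncomputable def Label.rank (r : ℕ) : Label p → ℕ
  | .inl (j, A) => j * (p - 1) + (A.ncard - 1)
  | .inr s => r * (p - 1) + (p - 1 - Nat.card (Quotient s))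

/-- The labels lying on free orbits in rows below `r`. -/
def Label.Good (r : ℕ) : Label p → Prop
  | .inl (j, A) => j < r ∧ A.Nonempty ∧ A ≠ Set.univ
  | .inr s => s ≠ ⊥ ∧ s ≠ ⊤

/-- The weight of a label. -/
noncomputable def Label.weight : Label p → ZMod p
  | .inl (_, A) => setWeight A
  | .inr s => partitionWeight s

lemma Label.rank_inl_lt [Fact p.Prime] {r j : ℕ} {A : Set (ZMod p)} {k : ℕ}
    (hg : Label.Good k (.inl (j, A))) {j' : ℕ} (hj : j < j') :
    Label.rank r (.inl (j, A)) < j' * (p - 1) := by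
  obtain ⟨-, h0, h1⟩ := hg
  obtain ⟨h2, h3⟩ := ncard_pos_and_lt h0 h1
  have h4 : (j + 1) * (p - 1) ≤ j' * (p - 1) := Nat.mul_le_mul_right _ hj
  rw [Nat.succ_mul] at h4
  simp only [Label.rank]
  omega

lemma Label.rank_lt [Fact p.Prime] {r : ℕ} {b : Label p} (hb : Label.Good r b) :
    Label.rank r b < r * (p - 1) + (p - 2) := by
  rcases b with ⟨j, A⟩ | s
  · exact (Label.rank_inl_lt hb hb.1).trans_le (Nat.le_add_right _ _)
  · obtain ⟨h1, h2⟩ := card_quotient_mem hb.1 hb.2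
    simp only [Label.rank]
    omega

lemma Label.sum_weight [Fact p.Prime] {r : ℕ} {b : Label p} (hb : Label.Good r b) :
    ∑ i ∈ Finset.range p, Label.weight ((Label.shift 1)^[i + 1] b) = 1 := by
  simp only [Label.iterate_shift]
  rw [sum_range_natCast_succ fun x => Label.weight (Label.shift x b)]
  rcases b with ⟨j, A⟩ | s
  · exact sum_setWeight hb.2.1 hb.2.2
  · exact sum_partitionWeight hb.1 hb.2

lemma comap_addRight_eq_bot {s : Setoid (ZMod p)} {x : ZMod p} :
    s.comap (· + x) = ⊥ ↔ s = ⊥ := by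
  constructor
  · intro h
    refine le_bot_iff.mp fun {a b} hab => ?_
    have : (s.comap (· + x)) (a - x) (b - x) := by simpa [Setoid.comap_rel] using hab
    rw [h] at this
    exact sub_left_injective (this : a - x = b - x)
  · rintro rfl
    refine le_bot_iff.mp fun {a b} hab => ?_
    exact add_left_injective x (hab : a + x = b + x)

lemma comap_addRight_eq_top {s : Setoid (ZMod p)} {x : ZMod p} :
    s.comap (· + x) = ⊤ ↔ s = ⊤ := by
  constructor
  · intro h
    refine top_le_iff.mp fun {a b} _ => ?_
    have : (s.comap (· + x)) (a - x) (b - x) := by rw [h]; trivial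
    simpa [Setoid.comap_rel] using this
  · rintro rfl
    exact top_le_iff.mp fun {a b} _ => trivial

lemma Label.good_shift {r : ℕ} {b : Label p} (hb : Label.Good r b) (x : ZMod p) :
    Label.Good r (Label.shift x b) := by
  rcases b with ⟨j, A⟩ | s
  · obtain ⟨h1, ⟨a, ha⟩, h3⟩ := hb
    refine ⟨h1, ⟨a - x, by simpa using ha⟩, fun h => h3 (Set.eq_univ_of_forall fun y => ?_)⟩
    have : y - x ∈ (· + x) ⁻¹' A := h.ge (Set.mem_univ _)
    simpa using this
  · exact ⟨fun h => hb.1 (comap_addRight_eq_bot.mp h), fun h => hb.2 (comap_addRight_eq_top.mp h)⟩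

/-- There is no resolution through lists carrying, monotonically and equivariantly, a
non-trivial partition of the residues or else a non-trivial set of active residues in one of
`r` rows. -/
theorem false_of_flags [Fact p.Prime] {X : Type*} {r : ℕ} {ω : X → X}
    {π : List X → Setoid (ZMod p)} {act : List X → ℕ → ZMod p → Prop} {ok : Set (List X)}
    (hok : ∀ l ∈ ok, ∀ t : List X, t.Sublist l → t ∈ ok)
    (hπ : ∀ l t : List X, t.Sublist l → π t ≤ π l)
    (hact : ∀ l t : List X, t.Sublist l → ∀ j i, act t j i → act l j i)
    (hπω : ∀ l, π (l.map ω) = (π l).comap (· + 1))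
    (hactω : ∀ l j i, act (l.map ω) j i ↔ act l j (i + 1))
    (htop : ∀ l ∈ ok, l ≠ [] → π l ≠ ⊤)
    (hex : ∀ l ∈ ok, l ≠ [] → π l = ⊥ → ∃ j i, act l j i)
    (hlt : ∀ l j i, act l j i → j < r)
    (hnot : ∀ l ∈ ok, π l = ⊥ → ∀ j, ∃ i, ¬ act l j i)
    {e : ℕ → Chain (ZMod p) X}
    (he : ∀ k ≤ (r + 1) * (p - 1),
      e k ∈ Finsupp.supported (ZMod p) (ZMod p) {l | l ∈ ok ∧ l.length = k})
    (he0 : e 0 = Finsupp.single [] 1) (he1 : bd (ZMod p) (e 1) = e 0)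
    (heD : ∀ k, 1 ≤ k → k < (r + 1) * (p - 1) →
      bd (ZMod p) (e (k + 1)) = altOp p (push (ZMod p) ω) k (e k)) : False := by
  classical
  have hp2 : 2 ≤ p := (Fact.out : p.Prime).two_le
  have hM : (r + 1) * (p - 1) = r * (p - 1) + (p - 2) + 1 := by
    rw [Nat.succ_mul]; omega
  set top : List X → ℕ := fun l => sSup {j | ∃ i, act l j i} with htopdef
  have hbdd : ∀ l, BddAbove {j | ∃ i, act l j i} := fun l =>
    ⟨r, fun j ⟨i, hi⟩ => (hlt l j i hi).le⟩
  set a : List X → Label p := fun l =>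
    if π l = ⊥ then .inl (top l, {i | act l (top l) i}) else .inr (π l) with ha
  have htopω : ∀ l, top (l.map ω) = top l := by
    intro l
    simp only [htopdef, hactω]
    congr 1
    ext j
    exact ⟨fun ⟨i, hi⟩ => ⟨i + 1, hi⟩, fun ⟨i, hi⟩ => ⟨i - 1, by simpa using hi⟩⟩
  have haω : ∀ l, a (l.map ω) = Label.shift 1 (a l) := by
    intro l
    simp only [ha, hπω, comap_addRight_eq_bot, htopω, hactω]
    split_ifs <;> rfl
  have hgood : ∀ l ∈ ok, l ≠ [] → Label.Good r (a l) := by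
    intro l hl hne
    simp only [ha]
    split_ifs with hb
    · obtain ⟨j, i, hji⟩ := hex l hl hne hb
      obtain ⟨i', hi'⟩ : ∃ i', act l (top l) i' :=
        Nat.sSup_mem (s := {j | ∃ i, act l j i}) ⟨j, i, hji⟩ (hbdd l)
      refine ⟨hlt l _ _ hi', ⟨i', hi'⟩, fun h => ?_⟩
      obtain ⟨i, hi⟩ := hnot l hl hb (top l)
      exact hi (h.ge (Set.mem_univ i))
    · exact ⟨hb, htop l hl hne⟩
  have hp : ∀ b : Label p, (Label.shift 1)^[p] b = b := fun b => by
    rw [Label.iterate_shift, ZMod.natCast_self, Label.shift_zero]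
  refine false_of_labelling (p := p) (M := r * (p - 1) + (p - 2)) (ω := ω) (a := a)
    (ok := ok) (good := {b | Label.Good r b}) (rank := Label.rank r) (w := Label.weight) (e := e)
    (ZMod.natCast_self p) (g := Label.shift 1) ?_ (funext hp) haω hok hgood ?_
    (fun b hb => Label.good_shift hb 1) (fun b hb => Label.rank_lt hb)
    (fun b hb => Label.sum_weight hb) (fun k hk => he k (by omega)) he0 he1
    (fun k hk hkM => heD k hk (by omega))
  · intro b b' h
    rw [← Label.shift_zero b, ← Label.shift_zero b', ← neg_add_cancel (1 : ZMod p),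
      ← Label.shift_shift, ← Label.shift_shift, h]
  intro l hl t htl htne
  have hlne : l ≠ [] := by rintro rfl; exact htne (List.sublist_nil.mp htl)
  have hgl := hgood l hl hlne
  have hgt := hgood t (hok l hl t htl) htne
  have hle := hπ l t htl
  by_cases hbl : π l = ⊥
  · have hbt : π t = ⊥ := le_bot_iff.mp (hle.trans hbl.le)
    have hal : a l = .inl (top l, {i | act l (top l) i}) := if_pos hbl
    have hat : a t = .inl (top t, {i | act t (top t) i}) := if_pos hbt
    have htop_le : top t ≤ top l := by
      obtain ⟨j, i, hji⟩ := hex t (hok l hl t htl) htne hbt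
      obtain ⟨i', hi'⟩ : ∃ i', act t (top t) i' :=
        Nat.sSup_mem (s := {j | ∃ i, act t j i}) ⟨j, i, hji⟩ (hbdd t)
      exact le_csSup (hbdd l) ⟨i', hact l t htl _ _ hi'⟩
    rw [hal] at hgl ⊢
    rw [hat] at hgt ⊢
    rcases htop_le.lt_or_eq with h | h
    · exact Or.inl ((Label.rank_inl_lt hgt h).trans_le (Nat.le_add_right _ _))
    · rw [h] at hgt ⊢
      have hsub : {i | act t (top l) i} ⊆ {i | act l (top l) i} := fun i hi =>
        hact l t htl _ _ hi
      rcases hsub.eq_or_ssubset with h1 | h1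
      · right; rw [h1]
      · left
        have h2 := Set.ncard_lt_ncard h1
        have h3 := (Set.ncard_pos).mpr hgt.2.1
        simp only [Label.rank]
        omega
  · have hal : a l = .inr (π l) := if_neg hbl
    by_cases hbt : π t = ⊥
    · have hat : a t = .inl (top t, {i | act t (top t) i}) := if_pos hbt
      rw [hal, hat]
      rw [hat] at hgt
      exact Or.inl ((Label.rank_inl_lt hgt hgt.1).trans_le (Nat.le_add_right _ _))
    · have hat : a t = .inr (π t) := if_neg hbt
      rw [hal] at hgl ⊢
      rw [hat] at hgt ⊢
      rcases hle.eq_or_lt with h | h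
      · right; rw [h]
      · left
        have h1 := card_quotient_lt h
        have h2 := (card_quotient_mem hgt.1 hgt.2).2
        simp only [Label.rank]
        omega

end Flags

section Compactness

lemma exists_pos_forall_exists_le {Y ι : Type*} [TopologicalSpace Y] [Finite ι] {C : Set Y}
    (hC : IsCompact C) {F : Y → ι → ℝ} (hF : ContinuousOn F C)
    (hpos : ∀ x ∈ C, ∃ i, 0 < F x i) : ∃ ε > 0, ∀ x ∈ C, ∃ i, ε ≤ F x i := by
  have := Fintype.ofFinite ι
  rcases C.eq_empty_or_nonempty with rfl | hne
  · exact ⟨1, one_pos, by simp⟩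
  have hι : (Finset.univ : Finset ι).Nonempty := by
    obtain ⟨x, hx⟩ := hne
    obtain ⟨i, -⟩ := hpos x hx
    exact ⟨i, Finset.mem_univ i⟩
  have hG : ContinuousOn (fun x => Finset.univ.sup' hι fun i => F x i) C :=
    ContinuousOn.finset_sup'_apply hι fun i _ => continuousOn_pi.mp hF i
  obtain ⟨x₀, hx₀, hmin⟩ := hC.exists_isMinOn hne hG
  refine ⟨Finset.univ.sup' hι fun i => F x₀ i, ?_, fun x hx => ?_⟩
  · obtain ⟨i, hi⟩ := hpos x₀ hx₀
    exact hi.trans_le (Finset.le_sup' (fun i => F x₀ i) (Finset.mem_univ i))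
  · obtain ⟨i, -, hi⟩ := Finset.exists_mem_eq_sup' hι fun i => F x i
    exact ⟨i, (hmin hx).trans hi.le⟩

lemma eqvGen_comap {α : Type*} (f : α ≃ α) (R : α → α → Prop) :
    Relation.EqvGen.setoid (fun i k => R (f i) (f k)) = (Relation.EqvGen.setoid R).comap f := by
  refine le_antisymm (Setoid.eqvGen_le fun i k h => Relation.EqvGen.rel _ _ h)
    fun {i k} h => ?_
  have hle : Relation.EqvGen.setoid R ≤
      (Relation.EqvGen.setoid fun i k => R (f i) (f k)).comap f.symm :=
    Setoid.eqvGen_le fun i k h => Relation.EqvGen.rel _ _ (by simpa using h)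
  simpa [Setoid.comap_rel] using hle h

/-- On a compact set of non-constant families, uniformly small relations do not connect all
indices. -/
lemma exists_pos_eqvGen_ne_top {ι E : Type*} [Finite ι] [MetricSpace E] {C : Set (ι → E)}
    (hC : IsCompact C) (hne : ∀ x ∈ C, ∃ i k, x i ≠ x k) :
    ∃ δ > 0, ∀ x ∈ C, ∀ R : ι → ι → Prop, (∀ i k, R i k → dist (x i) (x k) < δ) →
      Relation.EqvGen.setoid R ≠ ⊤ := by
  have key : ∀ R : ι → ι → Prop, ∃ δ > 0, Relation.EqvGen.setoid R = ⊤ → ∀ x ∈ C,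
      ∃ q : {q : ι × ι // R q.1 q.2}, δ ≤ dist (x q.1.1) (x q.1.2) := by
    intro R
    by_cases hR : Relation.EqvGen.setoid R = ⊤
    · obtain ⟨δ, hδ, h⟩ := exists_pos_forall_exists_le hC
        (F := fun x (q : {q : ι × ι // R q.1 q.2}) => dist (x q.1.1) (x q.1.2))
        (by fun_prop) fun x hx => by
          by_contra! hle
          have hker : Relation.EqvGen.setoid R ≤ Setoid.ker x :=
            Setoid.eqvGen_le fun i k h => dist_le_zero.mp (hle ⟨(i, k), h⟩)
          obtain ⟨i, k, hik⟩ := hne x hx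
          rw [hR] at hker
          exact hik (hker (x := i) (y := k) trivial)
      exact ⟨δ, hδ, fun _ => h⟩
    · exact ⟨1, one_pos, fun h => absurd h hR⟩
  choose δ hδ h using key
  have := Fintype.ofFinite (ι → ι → Prop)
  refine ⟨Finset.univ.inf' Finset.univ_nonempty δ,
    (Finset.lt_inf'_iff _).mpr fun R _ => hδ R, fun x hx R hR htop => ?_⟩
  obtain ⟨q, hq⟩ := h R htop x hx
  exact absurd ((Finset.inf'_le δ (Finset.mem_univ R)).trans hq) (hR _ _ q.2).not_ge

lemma isClosed_separated {ι E : Type*} [MetricSpace E] (δ : ℝ) :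
    IsClosed {x : ι → E | ∀ i k, i ≠ k → δ ≤ dist (x i) (x k)} := by
  simp only [Set.ofPred_forall]
  exact isClosed_iInter fun i => isClosed_iInter fun k => isClosed_iInter fun _ =>
    isClosed_le continuous_const (by fun_prop)

end Compactness

section Configurations

variable {p r : ℕ} {E : Type*} [NormedAddCommGroup E] [NormedSpace ℝ E]

/-- The subspace of constant families. -/
def constants (p : ℕ) (E : Type*) [NormedAddCommGroup E] [NormedSpace ℝ E] :
    Submodule ℝ (ZMod p → E) where
  carrier := {x | ∀ k, x k = x 0}
  zero_mem' _ := rfl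
  add_mem' hx hy k := by simp only [Pi.add_apply, hx k, hy k]
  smul_mem' c x hx k := by simp only [Pi.smul_apply, hx k]

lemma finrank_constants_le [FiniteDimensional ℝ E] :
    Module.finrank ℝ (constants p E) ≤ Module.finrank ℝ E := by
  refine LinearMap.finrank_le_finrank_of_injective
    (f := LinearMap.proj (R := ℝ) (φ := fun _ : ZMod p => E) 0 ∘ₗ (constants p E).subtype) ?_
  intro x y h
  have h' : x.1 0 = y.1 0 := h
  exact Subtype.ext (funext fun k => (x.2 k).trans (h'.trans (y.2 k).symm))

lemma iterate_funLeft (n : ℕ) (x : ZMod p → E) (k : ZMod p) :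
    (LinearMap.funLeft ℝ E (· + (1 : ZMod p)))^[n] x k = x (k + n) := by
  induction n generalizing k with
  | zero => simp
  | succ n ih =>
    rw [Function.iterate_succ_apply', LinearMap.funLeft_apply, ih, Nat.cast_succ]
    congr 1
    ring

/-- There is no equivariant family of `r` non-zero centred vectors, continuous on the
configuration space. -/
theorem false_of_centred [Fact p.Prime] [FiniteDimensional ℝ E] (hr : r < Module.finrank ℝ E)
    {Y : (ZMod p → E) → Fin r → ZMod p → ℝ}
    (hY : ContinuousOn Y {x | Function.Injective x}) (hsum : ∀ x j, ∑ i, Y x j i = 0)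
    (hne : ∀ x, Function.Injective x → ∃ j i, Y x j i ≠ 0)
    (hω : ∀ x j i, Y (fun k => x (k + 1)) j i = Y x j (i + 1)) : False := by
  have hp2 : 2 ≤ p := (Fact.out : p.Prime).two_le
  set f : (ZMod p → E) →ₗ[ℝ] (ZMod p → E) := LinearMap.funLeft ℝ E (· + (1 : ZMod p)) with hf
  have hfp : f^[p] = id := by
    funext x k
    rw [hf, iterate_funLeft]
    simp
  have hfT : ∀ x, f x ∈ constants p E → x ∈ constants p E := by
    intro x hx k
    have h1 : ∀ k, x (k + 1) = x (0 + 1) := hx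
    have h2 := h1 (k - 1)
    have h3 := h1 (-1)
    rw [sub_add_cancel] at h2
    rw [neg_add_cancel] at h3
    rw [h2, h3]
  have hV : Module.finrank ℝ (ZMod p → E) = p * Module.finrank ℝ E := by
    rw [Module.finrank_pi_fintype]
    simp [ZMod.card]
  obtain ⟨X, hXc, hXT, hX⟩ := exists_fine_resolution (K := ZMod p) (N := (r + 1) * (p - 1))
    hfT hfp (Nat.mul_pos (by omega) (by omega)) (by
      have h1 : (r + 1) * (p - 1) ≤ Module.finrank ℝ E * (p - 1) := Nat.mul_le_mul_right _ hr
      have h2 := finrank_constants_le (p := p) (E := E)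
      obtain ⟨q, rfl⟩ : ∃ q, p = q + 1 := ⟨p - 1, by omega⟩
      rw [Nat.add_sub_cancel] at h1 ⊢
      rw [hV, Nat.succ_mul q, mul_comm q]
      omega)
  obtain ⟨δ₀, hδ₀, hδtop⟩ := exists_pos_eqvGen_ne_top hXc fun x hx => by
    by_contra! h
    exact Set.disjoint_left.mp hXT hx fun k => h k 0
  set δ := δ₀ / 4 with hδ
  have hδ0 : 0 < δ := by positivity
  set X' : Set (ZMod p → E) := X ∩ {x | ∀ i k, i ≠ k → δ ≤ dist (x i) (x k)} with hX'
  have hX'c : IsCompact X' := hXc.inter_right (isClosed_separated δ)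
  have hX'inj : ∀ x ∈ X', Function.Injective x := by
    intro x hx i k hik
    by_contra hne
    have := hx.2 i k hne
    rw [hik, dist_self] at this
    exact this.not_gt hδ0
  have hY' : ContinuousOn Y X' := hY.mono hX'inj
  obtain ⟨ε, hε, hεY⟩ := exists_pos_forall_exists_le hX'c
    (F := fun x (q : Fin r × ZMod p) => Y x q.1 q.2)
    (continuousOn_pi.mpr fun q => continuousOn_pi.mp (continuousOn_pi.mp hY' q.1) q.2)
    fun x hx => by
      by_contra! hle
      obtain ⟨j, i, hji⟩ := hne x (hX'inj x hx)
      exact hji ((Finset.sum_eq_zero_iff_of_nonpos fun i _ => hle (j, i)).mp (hsum x j) i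
        (Finset.mem_univ i))
  obtain ⟨η₀, hη₀, hη₀Y⟩ := Metric.uniformContinuousOn_iff.mp
    (hX'c.uniformContinuousOn_of_continuous hY') ε hε
  set η := min δ (η₀ / 2) with hη
  have hηδ : η ≤ δ := min_le_left _ _
  have hηη : η < η₀ := (min_le_right _ _).trans_lt (by linarith)
  obtain ⟨e, he0, hes, he1, heD⟩ := hX η (lt_min hδ0 (by linarith))
  set π : List (ZMod p → E) → Setoid (ZMod p) := fun l =>
    Relation.EqvGen.setoid fun i k => ∃ x ∈ l, dist (x i) (x k) ≤ δ with hπ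
  set act : List (ZMod p → E) → ℕ → ZMod p → Prop := fun l j i =>
    ∃ hj : j < r, ∃ x ∈ l, ε ≤ Y x ⟨j, hj⟩ i with hact
  set ok : Set (List (ZMod p → E)) :=
    {l | (∀ x ∈ l, x ∈ X) ∧ ∀ x ∈ l, ∀ y ∈ l, dist x y ≤ η} with hok
  have hsep : ∀ l ∈ ok, π l = ⊥ → ∀ x ∈ l, x ∈ X' := by
    intro l hl hb x hx
    refine ⟨hl.1 x hx, fun i k hik => ?_⟩
    by_contra! hlt
    have : π l i k := Relation.EqvGen.rel _ _ ⟨x, hx, hlt.le⟩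
    rw [hb] at this
    exact hik this
  refine false_of_flags (r := r) (ω := f) (π := π) (act := act) (ok := ok) (e := e)
    ?_ ?_ ?_ ?_ ?_ ?_ ?_ ?_ ?_ hes he0 he1 heD
  · exact fun l hl t ht => ⟨fun x hx => hl.1 x (ht.subset hx),
      fun x hx y hy => hl.2 x (ht.subset hx) y (ht.subset hy)⟩
  · exact fun l t ht => Setoid.eqvGen_mono fun i k ⟨x, hx, h⟩ => ⟨x, ht.subset hx, h⟩
  · exact fun l t ht j i ⟨hj, x, hx, h⟩ => ⟨hj, x, ht.subset hx, h⟩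
  · intro l
    refine Eq.trans ?_ (eqvGen_comap (Equiv.addRight (1 : ZMod p))
      fun i k => ∃ x ∈ l, dist (x i) (x k) ≤ δ)
    simp [hπ, hf, LinearMap.funLeft_apply]
  · intro l j i
    refine exists_congr fun hj => ?_
    have hfY : ∀ x, Y (f x) ⟨j, hj⟩ i = Y x ⟨j, hj⟩ (i + 1) := fun x => hω x _ _
    simp [hfY]
  · intro l hl hlne
    obtain ⟨x₀, hx₀⟩ := List.exists_mem_of_ne_nil l hlne
    refine hδtop x₀ (hl.1 x₀ hx₀) _ fun i k ⟨x, hx, hd⟩ => ?_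
    have h1 : ∀ i, dist (x₀ i) (x i) ≤ η := fun i =>
      (dist_le_pi_dist x₀ x i).trans (hl.2 x₀ hx₀ x hx)
    have h2 := dist_triangle4 (x₀ i) (x i) (x k) (x₀ k)
    have h3 := h1 i
    have h4 := h1 k
    rw [dist_comm] at h4
    linarith
  · intro l hl hlne hb
    obtain ⟨x₀, hx₀⟩ := List.exists_mem_of_ne_nil l hlne
    obtain ⟨⟨j, i⟩, hji⟩ := hεY x₀ (hsep l hl hb x₀ hx₀)
    exact ⟨j, i, j.2, x₀, hx₀, hji⟩
  · exact fun l j i ⟨hj, _⟩ => hj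
  · intro l hl hb j
    by_contra! hall
    obtain ⟨hj, x₀, hx₀, -⟩ := hall 0
    refine (Finset.sum_pos (fun i _ => ?_) Finset.univ_nonempty).ne' (hsum x₀ ⟨j, hj⟩)
    obtain ⟨_, x, hx, hxε⟩ := hall i
    have h1 := hη₀Y x (hsep l hl hb x hx) x₀ (hsep l hl hb x₀ hx₀)
      ((hl.2 x hx x₀ hx₀).trans_lt hηη)
    have h2 : dist (Y x ⟨j, hj⟩ i) (Y x₀ ⟨j, hj⟩ i) < ε :=
      ((dist_le_pi_dist _ _ i).trans (dist_le_pi_dist _ _ _)).trans_lt h1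
    rw [Real.dist_eq] at h2
    linarith [(abs_lt.mp h2).2]

end Configurations

end ConfigMap

/-- For `p` an odd prime and `d > r ≥ 1` there is no `ℤ/p`-equivariant continuous map
`F(ℝᵈ, p) → (ℝᵖ)ʳ ∖ Δʳ`. -/
theorem no_equivariant_map_config_to_complement
    (p d r : ℕ) (hp : p.Prime) (hodd : Odd p) (hd : 1 ≤ d) (hr : 1 ≤ r) (hdr : d > r) :
    ¬ ∃ h : {f : ZMod p → EuclideanSpace ℝ (Fin d) // Function.Injective f} →
        (Fin r → ZMod p → ℝ),
      Continuous h ∧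
      (∀ x, ∃ i : Fin r, ∃ k : ZMod p, h x i k ≠ h x i 0) ∧
      (∀ x, h (configShift x) = fun i k => h x i (k + 1)) := by
  classical
  rintro ⟨h, hc, hne, hω⟩
  have : Fact p.Prime := ⟨hp⟩
  have hp0 : (p : ℝ) ≠ 0 := by exact_mod_cast hp.ne_zero
  set Y : (ZMod p → EuclideanSpace ℝ (Fin d)) → Fin r → ZMod p → ℝ := fun x =>
    if hx : Function.Injective x then
      fun j i => h ⟨x, hx⟩ j i - (∑ k, h ⟨x, hx⟩ j k) / p else 0 with hY
  have hYx : ∀ x (hx : Function.Injective x) j i,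
      Y x j i = h ⟨x, hx⟩ j i - (∑ k, h ⟨x, hx⟩ j k) / p := fun x hx j i => by
    simp only [hY, dif_pos hx]
  refine ConfigMap.false_of_centred (Y := Y) (by simpa using hdr) ?_ ?_ ?_ ?_
  · rw [continuousOn_iff_continuous_domRestrict]
    have : Set.domRestrict {x | Function.Injective x} Y =
        fun x j i => h x j i - (∑ k, h x j k) / p := by
      funext x j i
      exact hYx x.1 x.2 j i
    rw [this]
    fun_prop
  · intro x j
    by_cases hx : Function.Injective x
    · simp only [hYx x hx, Finset.sum_sub_distrib, Finset.sum_const, Finset.card_univ, ZMod.card,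
        nsmul_eq_mul]
      field_simp
      ring
    · simp [hY, dif_neg hx]
  · intro x hx
    by_contra! h0
    obtain ⟨j, k, hjk⟩ := hne ⟨x, hx⟩
    have h1 := h0 j k
    have h2 := h0 j 0
    rw [hYx x hx] at h1 h2
    exact hjk (by linarith)
  · intro x j i
    by_cases hx : Function.Injective x
    · have hx' : Function.Injective fun k => x (k + 1) := hx.comp (add_left_injective 1)
      have hs : h ⟨fun k => x (k + 1), hx'⟩ = fun i k => h ⟨x, hx⟩ i (k + 1) := hω ⟨x, hx⟩
      rw [hYx _ hx', hYx x hx, hs]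
      simp only
      congr 2
      exact Equiv.sum_comp (Equiv.addRight (1 : ZMod p)) (fun k => h ⟨x, hx⟩ j k)
    · have hx' : ¬ Function.Injective fun k => x (k + 1) := fun h' => hx <| by
        have := h'.comp (sub_left_injective (b := (1 : ZMod p)))
        simpa [Function.comp_def] using this
      simp [hY, dif_neg hx, dif_neg hx']
end

section
/- Let p be an odd prime and d ≥ 1. If p ≤ 2d + 1 and (p−1)²/2 is not of the form jd + 1 for any j = 1, 2, …, p−1, then the pair (d, p) is admissible: for every continuous injective map f : Sᵈ → ℝ^{d+1} and every choice of (p−1)/2 metrics ρ₁, …, ρ_{(p−1)/2} on ℝ^{d+1}, each inducing the standard Euclidean topology, there exist p distinct points x₀, x₁, …, x_{p−1} ∈ Sᵈ, indexed by 𝔽_p, such that for every j = 1, …, (p−1)/2: ρⱼ(f(x₀), f(x_j)) = ρⱼ(f(x_j), f(x_{2j})) = ⋯ = ρⱼ(f(x_{(p−1)j}), f(x₀)). -/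
/-- `ρ` is a metric on `E` that induces the (given) standard topology of `E`. -/
def IsMetricEquivToStd {E : Type*} [TopologicalSpace E] (ρ : E → E → ℝ) : Prop :=
  (∀ x y, ρ x y = ρ y x) ∧
  (∀ x y, ρ x y = 0 ↔ x = y) ∧
  (∀ x y z, ρ x z ≤ ρ x y + ρ y z) ∧
  (∀ s : Set E, IsOpen s ↔ ∀ x ∈ s, ∃ ε > 0, {y | ρ x y < ε} ⊆ s)

namespace Cochain

open Finset

variable {K : Type*} [CommRing K] {X : Type*} {n : ℕ}

/-- The alternating sum over the entries `t k` of a tuple, each paired with the face of the tuple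
opposite to it. -/
def faceSum (f : X → (Fin n → X) → K) (t : Fin (n + 1) → X) : K :=
  ∑ k : Fin (n + 1), (-1) ^ (k : ℕ) * f (t k) (t ∘ k.succAbove)

/-- The simplicial coboundary of a cochain on tuples. -/
def cobd (η : (Fin n → X) → K) : (Fin (n + 1) → X) → K :=
  faceSum fun _ => η

/-- A cochain is alternating if exchanging two adjacent entries changes the sign. -/
def IsAlt (η : (Fin n → X) → K) : Prop :=
  ∀ i j : Fin n, (i : ℕ) + 1 = j → ∀ t, η (t ∘ Equiv.swap i j) = -η t

theorem faceSum_congr {f g : X → (Fin n → X) → K} {t : Fin (n + 1) → X}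
    (h : ∀ k, f (t k) (t ∘ k.succAbove) = g (t k) (t ∘ k.succAbove)) :
    faceSum f t = faceSum g t := by
  simp only [faceSum, h]

theorem faceSum_add (f g : X → (Fin n → X) → K) :
    faceSum (f + g) = faceSum f + faceSum g := by
  ext t
  simp [faceSum, mul_add, sum_add_distrib]

theorem faceSum_sub (f g : X → (Fin n → X) → K) :
    faceSum (f - g) = faceSum f - faceSum g := by
  ext t
  simp [faceSum, mul_sub, sum_sub_distrib]

theorem cobd_add (η θ : (Fin n → X) → K) : cobd (η + θ) = cobd η + cobd θ :=
  faceSum_add _ _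

theorem cobd_sub (η θ : (Fin n → X) → K) : cobd (η - θ) = cobd η - cobd θ :=
  faceSum_sub _ _

theorem faceSum_faceSum_comm (f : X → X → (Fin n → X) → K) (t : Fin (n + 2) → X) :
    faceSum (fun x => faceSum fun y => f x y) t =
      -faceSum (fun x => faceSum fun y => f y x) t := by
  simp only [faceSum, mul_sum, ← sum_neg_distrib, Function.comp_apply]
  rw [← Fintype.sum_prod_type', ← Fintype.sum_prod_type']
  let e : Fin (n + 2) × Fin (n + 1) → Fin (n + 2) × Fin (n + 1) :=
    fun q => (q.1.succAbove q.2, q.2.predAbove q.1)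
  have he : Function.Involutive e := fun q => by
    simp [e, Fin.succAbove_succAbove_predAbove, Fin.predAbove_predAbove_succAbove]
  refine Fintype.sum_equiv he.toPerm _ _ fun q => ?_
  obtain ⟨k, l⟩ := q
  have h1 : t ∘ (k.succAbove l).succAbove ∘ (l.predAbove k).succAbove =
      t ∘ k.succAbove ∘ l.succAbove := by
    ext x
    simp [Fin.succAbove_succAbove_succAbove_predAbove]
  have h2 := Fin.neg_one_pow_succAbove_add_predAbove (R := K) k l
  simp only [e, Function.Involutive.coe_toPerm, Fin.succAbove_succAbove_predAbove,
    Function.comp_assoc, h1, ← mul_assoc, ← pow_add, h2, neg_mul, neg_neg]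

theorem cobd_cobd (η : (Fin n → X) → K) (h2 : IsUnit (2 : K)) : cobd (cobd η) = 0 := by
  ext t
  have h : cobd (cobd η) t = -cobd (cobd η) t :=
    faceSum_faceSum_comm (fun _ _ => η) t
  have h' : 2 * cobd (cobd η) t = 0 := by linear_combination h
  exact (h2.mul_right_eq_zero).1 h'

theorem succAbove_val_succ {i j k : Fin (n + 1)} {i' j' : Fin n} (hij : (i : ℕ) + 1 = j)
    (hi : k.succAbove i' = i) (hj : k.succAbove j' = j) : (i' : ℕ) + 1 = j' := by
  subst hi hj
  simp only [Fin.succAbove, Fin.lt_def] at hij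
  split_ifs at hij <;> simp at * <;> omega

theorem swap_comp_succAbove {i j : Fin (n + 1)} (hij : (i : ℕ) + 1 = j) :
    Equiv.swap i j ∘ i.succAbove = j.succAbove := by
  ext x
  simp only [Function.comp_apply, Equiv.swap_apply_def, Fin.ext_iff, Fin.succAbove, Fin.lt_def]
  split_ifs <;> simp at * <;> omega

theorem IsAlt.faceSum {f : X → (Fin n → X) → K} (hf : ∀ x, IsAlt (f x)) :
    IsAlt (faceSum f) := by
  intro i j hij t
  have hne : i ≠ j := fun h => by simp [h] at hij
  simp only [Cochain.faceSum, ← sum_neg_distrib]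
  refine Fintype.sum_equiv (Equiv.swap i j) _ _ fun k => ?_
  by_cases hki : k = i
  · subst hki
    rw [Equiv.swap_apply_left, Function.comp_apply, Equiv.swap_apply_left, Function.comp_assoc,
      swap_comp_succAbove hij, ← hij, pow_succ]
    ring
  by_cases hkj : k = j
  · subst hkj
    have h : Equiv.swap i k ∘ k.succAbove = i.succAbove := by
      rw [← swap_comp_succAbove hij]
      ext x
      simp
    rw [Equiv.swap_apply_right, Function.comp_apply, Equiv.swap_apply_right, Function.comp_assoc,
      h, ← hij, pow_succ]
    ring
  · obtain ⟨i', hi'⟩ := Fin.exists_succAbove_eq (Ne.symm hki)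
    obtain ⟨j', hj'⟩ := Fin.exists_succAbove_eq (Ne.symm hkj)
    have h : Equiv.swap i j ∘ k.succAbove = k.succAbove ∘ Equiv.swap i' j' := by
      rw [← hi', ← hj']
      exact Function.Injective.swap_comp Fin.succAbove_right_injective i' j'
    rw [Equiv.swap_apply_of_ne_of_ne hki hkj, Function.comp_apply,
      Equiv.swap_apply_of_ne_of_ne hki hkj, Function.comp_assoc, h, ← Function.comp_assoc,
      hf _ _ _ (succAbove_val_succ hij hi' hj')]
    ring

theorem IsAlt.cobd {η : (Fin n → X) → K} (h : IsAlt η) : IsAlt (cobd η) :=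
  IsAlt.faceSum fun _ => h

theorem IsAlt.sub {η θ : (Fin n → X) → K} (h : IsAlt η) (h' : IsAlt θ) : IsAlt (η - θ) :=
  fun i j hij t => by simp [h i j hij t, h' i j hij t]; ring

theorem IsAlt.of_subsingleton [Subsingleton (Fin n)] (η : (Fin n → X) → K) : IsAlt η :=
  fun i j hij => absurd hij (by simp [Subsingleton.elim i j])

theorem IsAlt.perm {η : (Fin n → X) → K} (h : IsAlt η) (σ : Equiv.Perm (Fin n)) :
    ∀ t, η (t ∘ σ) = ((Equiv.Perm.sign σ : ℤ) : K) * η t := by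
  obtain _ | n := n
  · intro t
    rw [Subsingleton.elim σ 1]
    simp
  have hσ : σ ∈ Submonoid.closure
      (Set.range fun i : Fin n => Equiv.swap i.castSucc i.succ) := by
    rw [Equiv.Perm.mclosure_swap_castSucc_succ]
    trivial
  induction hσ using Submonoid.closure_induction with
  | mem σ hσ =>
    obtain ⟨i, rfl⟩ := hσ
    intro t
    rw [h _ _ (by simp), Equiv.Perm.sign_swap (by simp [Fin.ext_iff])]
    simp
  | one => simp
  | mul σ τ _ _ hσ hτ =>
    intro t
    rw [Equiv.Perm.coe_mul, ← Function.comp_assoc, hτ, hσ]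
    simp
    ring

theorem IsAlt.eq_zero (h2 : IsUnit (2 : K)) {η : (Fin n → X) → K} (h : IsAlt η) {t : Fin n → X}
    (ht : ¬Function.Injective t) : η t = 0 := by
  simp only [Function.Injective, not_forall] at ht
  obtain ⟨i, j, hij, hne⟩ := ht
  have h1 := h.perm (Equiv.swap i j) t
  rw [Equiv.Perm.sign_swap hne] at h1
  have h3 : t ∘ Equiv.swap i j = t := by
    ext x
    simp only [Function.comp_apply, Equiv.swap_apply_def]
    split_ifs <;> simp_all
  rw [h3] at h1
  have h' : 2 * η t = 0 := by
    push_cast at h1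
    linear_combination h1
  exact (h2.mul_right_eq_zero).1 h'

end Cochain

namespace Cochain

open Finset

section Front

variable {K : Type*} [CommRing K] {X : Type*} {n : ℕ}

/-- Insertion of a point in front of a cochain. -/
def insertFront (v : X) (η : (Fin (n + 1) → X) → K) : (Fin n → X) → K :=
  fun y => η (Fin.cons v y)

theorem insertFront_cobd (v : X) (η : (Fin (n + 1) → X) → K) :
    insertFront v (cobd η) = η - cobd (insertFront v η) := by
  ext t
  simp only [insertFront, cobd, faceSum, Pi.sub_apply, Fin.sum_univ_succ (n := n + 1)]
  rw [sub_eq_add_neg, ← sum_neg_distrib]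
  congr 1
  · simp
  · refine sum_congr rfl fun k _ => ?_
    have h : (Fin.cons v t : Fin (n + 2) → X) ∘ k.succ.succAbove =
        Fin.cons v (t ∘ k.succAbove) := by
      ext i
      refine Fin.cases ?_ (fun i => ?_) i <;> simp
    rw [h, Fin.val_succ, pow_succ]
    ring

end Front

section Cube

variable {K : Type*} [CommRing K] {V : Type*} [AddCommMonoid V] {n : ℕ}

/-- The sum of a cochain over Kuhn's triangulation of the cube at `v` spanned by `t`. -/
def cubeSum : (n : ℕ) → ((Fin (n + 1) → V) → K) → V → (Fin n → V) → K
  | 0, η, v, _ => η fun _ => v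
  | n + 1, η, v, t => faceSum (fun x t' => cubeSum n (insertFront v η) (v + x) t') t

/-- The vertex sequences of the simplices of Kuhn's triangulation. -/
def IsKuhnPath : (n : ℕ) → V → (Fin n → V) → (Fin (n + 1) → V) → Prop
  | 0, v, _, x => x = fun _ => v
  | n + 1, v, t, x => ∃ k, ∃ y, x = Fin.cons v y ∧ IsKuhnPath n (v + t k) (t ∘ k.succAbove) y

theorem cubeSum_congr {η θ : (Fin (n + 1) → V) → K} {v : V} {t : Fin n → V}
    (h : ∀ x, IsKuhnPath n v t x → η x = θ x) : cubeSum n η v t = cubeSum n θ v t := by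
  induction n generalizing v with
  | zero => exact h _ rfl
  | succ n ih => exact faceSum_congr fun k => ih fun y hy => h _ ⟨k, y, rfl, hy⟩

theorem cubeSum_zero (v : V) (t : Fin n → V) : cubeSum n (0 : (Fin (n + 1) → V) → K) v t = 0 := by
  induction n generalizing v with
  | zero => rfl
  | succ n ih =>
    have h : insertFront v (0 : (Fin (n + 2) → V) → K) = 0 := rfl
    simp [cubeSum, h, ih, faceSum]

theorem cubeSum_sub (η θ : (Fin (n + 1) → V) → K) (v : V) (t : Fin n → V) :
    cubeSum n (η - θ) v t = cubeSum n η v t - cubeSum n θ v t := by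
  induction n generalizing v with
  | zero => rfl
  | succ n ih =>
    have h : insertFront v (η - θ) = insertFront v η - insertFront v θ := rfl
    simp only [cubeSum, h, ih]
    exact congrFun (faceSum_sub _ _) t

theorem IsKuhnPath.exists_eq {v : V} {t : Fin n → V} {x : Fin (n + 1) → V}
    (h : IsKuhnPath n v t x) (i : Fin (n + 1)) :
    ∃ c : Fin n → ℕ, (∀ s, c s ≤ 1) ∧ x i = v + ∑ s, c s • t s := by
  induction n generalizing v with
  | zero => exact ⟨fun _ => 0, by simp, by simp [show x = fun _ => v from h]⟩
  | succ n ih =>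
    obtain ⟨k, y, rfl, hy⟩ := h
    refine Fin.cases ⟨fun _ => 0, by simp, by simp⟩ (fun i => ?_) i
    obtain ⟨c, hc, hyc⟩ := ih hy i
    refine ⟨k.insertNth 1 c, fun s => ?_, ?_⟩
    · refine Fin.succAboveCases k ?_ (fun s => ?_) s <;> simp [hc]
    · rw [Fin.sum_univ_succAbove _ k]
      simp [hyc, add_assoc]

theorem IsKuhnPath.exists_step {v : V} {t : Fin n → V} {x : Fin (n + 1) → V}
    (h : IsKuhnPath n v t x) (s : Fin n) : ∃ i : Fin n, x i.succ = x i.castSucc + t s := by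
  induction n generalizing v with
  | zero => exact s.elim0
  | succ n ih =>
    obtain ⟨k, y, rfl, hy⟩ := h
    refine Fin.succAboveCases k ?_ (fun s => ?_) s
    · refine ⟨0, ?_⟩
      obtain _ | n := n
      · simp [show y = fun _ => v + t k from hy]
      · obtain ⟨_, _, rfl, _⟩ := hy
        simp
    · obtain ⟨i, hi⟩ := ih hy s
      exact ⟨i.succ, by simpa using hi⟩

theorem cubeSum_cobd (h2 : IsUnit (2 : K)) (η : (Fin (n + 1) → V) → K) (v : V)
    (t : Fin (n + 1) → V) :
    cubeSum (n + 1) (cobd η) v t =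
      faceSum (fun x t' => cubeSum n η (v + x) t' - cubeSum n η v t') t := by
  have hS {n : ℕ} (f g : V → (Fin n → V) → K) (t : Fin (n + 1) → V) :
      faceSum (fun x t' => f x t' - g x t') t = faceSum f t - faceSum g t :=
    congrFun (faceSum_sub f g) t
  induction n generalizing v with
  | zero =>
    simp only [cubeSum, insertFront_cobd]
    refine faceSum_congr fun k => ?_
    simp only [cobd, faceSum, insertFront, Pi.sub_apply]
    simp
    exact congrArg η (by ext i; simp [Fin.fin_one_eq_zero i])
  | succ n ih =>
    have h0 : cubeSum (n + 2) (cobd η) v t =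
        faceSum (fun x t' => cubeSum (n + 1) η (v + x) t') t -
        faceSum (fun x t' => cubeSum (n + 1) (cobd (insertFront v η)) (v + x) t') t := by
      rw [← hS, show cubeSum (n + 2) (cobd η) v t = faceSum (fun x t' =>
        cubeSum (n + 1) (insertFront v (cobd η)) (v + x) t') t from rfl, insertFront_cobd]
      simp only [cubeSum_sub]
    rw [h0, hS]
    congr 1
    simp only [ih, hS]
    set g : V → V → (Fin n → V) → K := fun x y => cubeSum n (insertFront v η) (v + x + y)
    have h1 := faceSum_faceSum_comm g t
    have h1' : (fun x => faceSum fun y => g y x) = fun x => faceSum fun y => g x y := by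
      simp only [g, add_right_comm v]
    rw [h1'] at h1
    have h1'' : faceSum (fun x => faceSum fun y => g x y) t = 0 := by
      have h' : 2 * faceSum (fun x => faceSum fun y => g x y) t = 0 := by
        linear_combination h1
      exact (h2.mul_right_eq_zero).1 h'
    have h3 := faceSum_faceSum_comm
      (fun x _ t' => cubeSum n (insertFront v η) (v + x) t') t
    rw [show faceSum (fun x t' => faceSum (fun y t'' =>
      cubeSum n (insertFront v η) (v + x + y) t'') t') t = 0 from h1'', h3, zero_sub, neg_neg]
    rfl

theorem IsAlt.cubeSum (η : (Fin (n + 1) → V) → K) (v : V) : IsAlt (cubeSum n η v) := by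
  induction n generalizing v with
  | zero => exact IsAlt.of_subsingleton _
  | succ n ih => exact IsAlt.faceSum fun x => ih _ _

/-- The sum of a cochain over the Kuhn triangulations of all cells of an `m × ⋯ × m` grid of cubes
at `v` spanned by `t`. -/
def gridSum (m : ℕ) (η : (Fin (n + 1) → V) → K) (v : V) (t : Fin n → V) : K :=
  ∑ u : Fin n → Fin m, cubeSum n η (v + ∑ s, (u s : ℕ) • t s) t

theorem gridSum_sub (m : ℕ) (η θ : (Fin (n + 1) → V) → K) (v : V) (t : Fin n → V) :
    gridSum m (η - θ) v t = gridSum m η v t - gridSum m θ v t := by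
  simp only [gridSum, cubeSum_sub, sum_sub_distrib]

theorem IsAlt.gridSum (m : ℕ) (η : (Fin (n + 1) → V) → K) (v : V) : IsAlt (gridSum m η v) := by
  intro i j hij t
  simp only [Cochain.gridSum, ← sum_neg_distrib]
  refine Fintype.sum_equiv ((Equiv.swap i j).arrowCongr (Equiv.refl _)) _ _ fun u => ?_
  rw [IsAlt.cubeSum η _ i j hij]
  congr 3
  refine Fintype.sum_equiv (Equiv.swap i j) _ _ fun s => ?_
  simp [Equiv.arrowCongr]

theorem gridSum_congr {m : ℕ} {η θ : (Fin (n + 1) → V) → K} {v : V} {t : Fin n → V}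
    (h : ∀ (u : Fin n → Fin m) (x : Fin (n + 1) → V),
      IsKuhnPath n (v + ∑ s, (u s : ℕ) • t s) t x → η x = θ x) :
    gridSum m η v t = gridSum m θ v t :=
  sum_congr rfl fun u _ => cubeSum_congr (h u)

theorem gridSum_cobd (h2 : IsUnit (2 : K)) (m : ℕ) (η : (Fin (n + 1) → V) → K) (v : V)
    (t : Fin (n + 1) → V) :
    gridSum m (cobd η) v t =
      faceSum (fun x t' => gridSum m η (v + m • x) t' - gridSum m η v t') t := by
  simp only [gridSum, cubeSum_cobd h2, faceSum]
  rw [sum_comm]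
  refine sum_congr rfl fun k _ => ?_
  rw [← mul_sum]
  congr 1
  rw [← (Fin.insertNthEquiv (fun _ => Fin m) k).sum_comp, Fintype.sum_prod_type, sum_comm,
    ← sum_sub_distrib]
  refine sum_congr rfl fun w _ => ?_
  let g : ℕ → K := fun a =>
    cubeSum n η (v + a • t k + ∑ s, (w s : ℕ) • (t ∘ k.succAbove) s) (t ∘ k.succAbove)
  have hg (a : Fin m) : v + ∑ s, ((Fin.insertNthEquiv (fun _ => Fin m) k (a, w) s : Fin m) : ℕ) •
      t s = v + (a : ℕ) • t k + ∑ s, (w s : ℕ) • (t ∘ k.succAbove) s := by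
    rw [Fin.sum_univ_succAbove _ k]
    simp [add_assoc]
  have hg' (a : Fin m) : v + (a : ℕ) • t k + ∑ s, (w s : ℕ) • (t ∘ k.succAbove) s + t k =
      v + ((a : ℕ) + 1) • t k + ∑ s, (w s : ℕ) • (t ∘ k.succAbove) s := by
    rw [add_right_comm, add_nsmul, one_nsmul, ← add_assoc]
  simp only [hg, hg']
  rw [Fin.sum_univ_eq_sum_range (fun a => g (a + 1) - g a), sum_range_sub]
  simp [g]

end Cube

end Cochain

namespace Cochain

open Finset

section Shift

variable {p : ℕ} {C : Type*} {n : ℕ}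

/-- The cyclic shift of all labels of a tuple by `i`. -/
def shiftTuple (i : ZMod p) (t : Fin n → C × ZMod p) : Fin n → C × ZMod p :=
  fun s => ((t s).1, (t s).2 + i)

theorem shiftTuple_shiftTuple (i j : ZMod p) (t : Fin n → C × ZMod p) :
    shiftTuple i (shiftTuple j t) = shiftTuple (j + i) t := by
  ext s <;> simp [shiftTuple, add_assoc]

theorem shiftTuple_zero (t : Fin n → C × ZMod p) : shiftTuple 0 t = t := by
  ext s <;> simp [shiftTuple]

/-- The action of a cyclic shift on cochains. -/
def shiftOp (i : ZMod p) : Module.End (ZMod p) ((Fin n → C × ZMod p) → ZMod p) :=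
  LinearMap.funLeft _ _ (shiftTuple i)

@[simp]
theorem shiftOp_apply (i : ZMod p) (η : (Fin n → C × ZMod p) → ZMod p) (t : Fin n → C × ZMod p) :
    shiftOp i η t = η (shiftTuple i t) := rfl

/-- The difference operator of the shift by one. -/
def diffOp : Module.End (ZMod p) ((Fin n → C × ZMod p) → ZMod p) :=
  shiftOp 1 - 1

theorem diffOp_apply (η : (Fin n → C × ZMod p) → ZMod p) (t : Fin n → C × ZMod p) :
    diffOp η t = η (shiftTuple 1 t) - η t := rfl

theorem shiftOp_pow (j : ℕ) :
    (shiftOp 1 : Module.End (ZMod p) ((Fin n → C × ZMod p) → ZMod p)) ^ j =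
      shiftOp (j : ZMod p) := by
  induction j with
  | zero => ext η t; simp [shiftTuple_zero]
  | succ j ih =>
    ext η t
    rw [pow_succ, ih]
    simp [shiftTuple_shiftTuple]

theorem sum_zmod_eq_sum_range [NeZero p] {M : Type*} [AddCommMonoid M] (g : ZMod p → M) :
    ∑ i, g i = ∑ j ∈ range p, g (j : ZMod p) :=
  sum_nbij' (fun i => i.val) (fun j => (j : ZMod p)) (fun i _ => by simp [ZMod.val_lt])
    (fun _ _ => mem_univ _) (fun i _ => by simp)
    (fun j hj => ZMod.val_cast_of_lt (by simpa using hj)) (fun i _ => by simp)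

theorem cobd_diffOp_pow (j : ℕ) (η : (Fin n → C × ZMod p) → ZMod p) :
    cobd ((diffOp ^ j) η) = (diffOp ^ j) (cobd η) := by
  induction j generalizing η with
  | zero => rfl
  | succ j ih =>
    rw [pow_succ, pow_succ, Module.End.mul_apply, Module.End.mul_apply, ih]
    congr 1
    exact cobd_sub (shiftOp 1 η) η

theorem diffOp_pow_congr {P : (Fin n → C × ZMod p) → Prop}
    (hP : ∀ t, P t → P (shiftTuple 1 t)) {η θ : (Fin n → C × ZMod p) → ZMod p}
    (h : ∀ t, P t → η t = θ t) (j : ℕ) : ∀ t, P t → (diffOp ^ j) η t = (diffOp ^ j) θ t := by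
  induction j with
  | zero => exact h
  | succ j ih =>
    intro t ht
    rw [pow_succ', Module.End.mul_apply, Module.End.mul_apply, diffOp_apply, diffOp_apply,
      ih t ht, ih _ (hP t ht)]

theorem IsAlt.diffOp_pow {η : (Fin n → C × ZMod p) → ZMod p} (h : IsAlt η) (j : ℕ) :
    IsAlt ((diffOp ^ j) η) := by
  induction j with
  | zero => exact h
  | succ j ih =>
    rw [pow_succ', Module.End.mul_apply]
    exact IsAlt.sub (fun i j hij t => ih i j hij (shiftTuple 1 t)) ih

variable [Fact p.Prime]

theorem diffOp_pow_card :
    (diffOp : Module.End (ZMod p) ((Fin n → C × ZMod p) → ZMod p)) ^ p = 0 := by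
  have h : (shiftOp 1 : Module.End (ZMod p) ((Fin n → C × ZMod p) → ZMod p)) ^ p = 1 := by
    ext η t
    simp [shiftOp_pow, shiftTuple_zero]
  have h2 := congrArg (Polynomial.aeval
    (shiftOp 1 : Module.End (ZMod p) ((Fin n → C × ZMod p) → ZMod p)))
    (sub_pow_char (R := Polynomial (ZMod p)) (p := p) Polynomial.X 1)
  simpa [h, diffOp] using h2

open Polynomial in
theorem X_sub_one_pow_pred :
    (X - 1 : (ZMod p)[X]) ^ (p - 1) = ∑ j ∈ range p, X ^ j := by
  have h1 : (X - 1 : (ZMod p)[X]) ≠ 0 := X_sub_C_ne_zero (1 : ZMod p)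
  apply mul_right_cancel₀ h1
  rw [geom_sum_mul, ← pow_succ, Nat.sub_add_cancel (Fact.out : p.Prime).one_le,
    sub_pow_char, one_pow]

theorem diffOp_pow_pred :
    (diffOp : Module.End (ZMod p) ((Fin n → C × ZMod p) → ZMod p)) ^ (p - 1) =
      ∑ i, shiftOp i := by
  have h2 := congrArg (Polynomial.aeval
    (shiftOp 1 : Module.End (ZMod p) ((Fin n → C × ZMod p) → ZMod p)))
    (X_sub_one_pow_pred (p := p))
  rw [sum_zmod_eq_sum_range]
  simpa [diffOp, shiftOp_pow] using h2

theorem diffOp_pow_pred_apply (η : (Fin n → C × ZMod p) → ZMod p) (t : Fin n → C × ZMod p) :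
    (diffOp ^ (p - 1)) η t = ∑ i, η (shiftTuple i t) := by
  rw [diffOp_pow_pred]
  simp

/-- The exponent of the `k`-th differential of the periodic resolution of the cyclic group. -/
def ladderExp (p k : ℕ) : ℕ := if Even k then 1 else p - 1

omit [Fact p.Prime] in
theorem ladderExp_add_two (k : ℕ) : ladderExp p (k + 2) = ladderExp p k := by
  simp [ladderExp, Nat.even_add]

theorem ladderExp_add_succ (k : ℕ) : ladderExp p k + ladderExp p (k + 1) = p := by
  have := (Fact.out : p.Prime).one_le
  by_cases h : Even k <;> simp [ladderExp, h, Nat.even_add_one] <;> omega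

theorem diffOp_pow_ladderExp (k : ℕ) (η : (Fin n → C × ZMod p) → ZMod p) :
    (diffOp ^ ladderExp p k) ((diffOp ^ ladderExp p (k + 1)) η) = 0 := by
  rw [← Module.End.mul_apply, ← pow_add, ladderExp_add_succ, diffOp_pow_card]
  rfl

/-- A tuple of labels is nonfull if it misses a label of every color. -/
def Nonfull (t : Fin n → C × ZMod p) : Prop := ∀ a, ∃ i, ∀ s, t s ≠ (a, i)

omit [Fact p.Prime] in
theorem Nonfull.shift {t : Fin n → C × ZMod p} (h : Nonfull t) (j : ZMod p) :
    Nonfull (shiftTuple j t) := fun a => by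
  obtain ⟨i, hi⟩ := h a
  refine ⟨i + j, fun s hs => hi s ?_⟩
  simp only [shiftTuple, Prod.mk.injEq, add_left_inj] at hs
  exact Prod.ext hs.1 hs.2

omit [Fact p.Prime] in
theorem Nonfull.comp {m : ℕ} {t : Fin n → C × ZMod p} (h : Nonfull t) (g : Fin m → Fin n) :
    Nonfull (t ∘ g) := fun a => by
  obtain ⟨i, hi⟩ := h a
  exact ⟨i, fun s => hi _⟩

omit [Fact p.Prime] in
theorem cobd_congr_nonfull {η θ : (Fin n → C × ZMod p) → ZMod p}
    (h : ∀ t, Nonfull t → η t = θ t) (t : Fin (n + 1) → C × ZMod p) (ht : Nonfull t) :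
    cobd η t = cobd θ t :=
  faceSum_congr fun _ => h _ (ht.comp _)

/-- The mean of a set of residues. -/
def mean (B : Finset (ZMod p)) : ZMod p := (∑ b ∈ B, b) * (#B : ZMod p)⁻¹

theorem mean_image_add {B : Finset (ZMod p)} (h : B.Nonempty) (h' : B ≠ univ) (i : ZMod p) :
    mean (B.image (· + i)) = mean B + i := by
  have hinj : Function.Injective (· + i) := add_left_injective i
  have hc : (#B : ZMod p) ≠ 0 := by
    rw [Ne, ZMod.natCast_eq_zero_iff]
    refine Nat.not_dvd_of_pos_of_lt h.card_pos ?_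
    simpa [ZMod.card] using card_lt_univ_of_notMem
      (not_forall.1 fun hh => h' (eq_univ_iff_forall.2 hh)).choose_spec
  rw [mean, mean, card_image_of_injective _ hinj, sum_image hinj.injOn, sum_add_distrib]
  simp
  field_simp

/-- There is a permutation invariant and shift equivariant residue attached to nonempty nonfull
tuples. -/
theorem exists_equivariant_residue (n : ℕ) :
    ∃ κ : (Fin (n + 1) → C × ZMod p) → ZMod p,
      (∀ t (σ : Equiv.Perm (Fin (n + 1))), κ (t ∘ σ) = κ t) ∧
      ∀ t, Nonfull t → ∀ i, κ (shiftTuple i t) = κ t + i := by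
  classical
  have hne (t : Fin (n + 1) → C × ZMod p) : (Set.range fun s => (t s).1).Nonempty := ⟨_, 0, rfl⟩
  have hc {t t' : Fin (n + 1) → C × ZMod p}
      (h : (Set.range fun s => (t s).1) = Set.range fun s => (t' s).1) :
      (hne t).some = (hne t').some := by
    simp only [h]
  refine ⟨fun t => mean {i | ∃ s, t s = ((hne t).some, i)}, fun t σ => ?_, fun t ht i => ?_⟩
  · have h : (hne (t ∘ σ)).some = (hne t).some := hc (EquivLike.range_comp (fun s => (t s).1) σ)
    simp only [h]
    congr 1
    ext i
    simp only [mem_filter, mem_univ, true_and]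
    exact ⟨fun ⟨s, hs⟩ => ⟨σ s, hs⟩, fun ⟨s, hs⟩ => ⟨σ.symm s, by simpa using hs⟩⟩
  · have h : (hne (shiftTuple i t)).some = (hne t).some := hc rfl
    simp only [h]
    rw [← mean_image_add]
    · congr 1
      ext j
      simp only [shiftTuple, Prod.ext_iff, mem_filter, mem_univ, true_and, mem_image]
      constructor
      · rintro ⟨s, hs, rfl⟩
        exact ⟨_, ⟨s, hs, rfl⟩, rfl⟩
      · rintro ⟨j, ⟨s, hs, rfl⟩, rfl⟩
        exact ⟨s, hs, rfl⟩
    · obtain ⟨s, hs⟩ := (hne t).some_mem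
      exact ⟨(t s).2, by simpa using ⟨s, Prod.ext hs rfl⟩⟩
    · obtain ⟨j, hj⟩ := ht (hne t).some
      exact fun hu => by simpa [hj] using eq_univ_iff_forall.1 hu j

end Shift

end Cochain

namespace Cochain

open Finset

section Ladder

variable {p : ℕ} {C : Type*} {n : ℕ} [Fact p.Prime]

theorem diffOp_pow_congr_nonfull {η θ : (Fin n → C × ZMod p) → ZMod p}
    (h : ∀ t, Nonfull t → η t = θ t) (j : ℕ) (t : Fin n → C × ZMod p) (ht : Nonfull t) :
    (diffOp ^ j) η t = (diffOp ^ j) θ t :=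
  diffOp_pow_congr (fun _ h => h.shift 1) h j t ht

theorem exists_diffOp_pow_eq (k : ℕ) {η : (Fin (n + 1) → C × ZMod p) → ZMod p} (hη : IsAlt η)
    (h : ∀ t, Nonfull t → (diffOp ^ ladderExp p (k + 1)) η t = 0) :
    ∃ ω : (Fin (n + 1) → C × ZMod p) → ZMod p, IsAlt ω ∧
      ∀ t, Nonfull t → (diffOp ^ ladderExp p k) ω t = η t := by
  obtain ⟨κ, hκp, hκ⟩ := exists_equivariant_residue (p := p) (C := C) n
  by_cases hk : Even k
  · simp only [ladderExp, hk, Nat.even_add_one, not_true, if_true, if_false,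
      diffOp_pow_pred_apply, pow_one, diffOp_apply] at h ⊢
    refine ⟨fun t => ∑ j ∈ range (κ t).val, η (shiftTuple (j - κ t) t), ?_, fun t ht => ?_⟩
    · intro i j hij t
      simp only [hκp, ← sum_neg_distrib]
      exact sum_congr rfl fun l _ => hη i j hij (shiftTuple _ t)
    · simp only [hκ t ht, shiftTuple_shiftTuple]
      have hs : ∀ j : ZMod p, (1 : ZMod p) + (j - (κ t + 1)) = j - κ t := fun j => by ring
      simp only [hs]
      by_cases h0 : κ t + 1 = 0
      · have h1 := h t ht
        have h2 : κ t = -1 := eq_neg_of_add_eq_zero_left h0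
        have h3 : (κ t).val + 1 = p := by
          refine le_antisymm (ZMod.val_lt _) (Nat.le_of_dvd (Nat.succ_pos _) ?_)
          rw [← ZMod.natCast_eq_zero_iff]
          simpa using h0
        rw [sum_zmod_eq_sum_range, show range p = range ((κ t).val + 1) by rw [h3],
          sum_range_succ'] at h1
        simp only [Nat.cast_zero, shiftTuple_zero] at h1
        rw [h0, ZMod.val_zero, range_zero, sum_empty, zero_sub, neg_eq_iff_add_eq_zero, ← h1]
        congr 1
        refine sum_congr rfl fun j _ => ?_
        rw [h2]
        simp
      · have h3 : (κ t + 1).val = (κ t).val + 1 := by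
          have hlt : (κ t).val + (1 : ZMod p).val < p := by
            rw [ZMod.val_one]
            refine lt_of_le_of_ne (ZMod.val_lt _) fun h4 => h0 ?_
            have := congrArg (Nat.cast : ℕ → ZMod p) h4
            simpa using this
          rw [ZMod.val_add_of_lt hlt, ZMod.val_one]
        rw [h3, sum_range_succ, add_sub_cancel_left]
        simp [shiftTuple_zero]
  · simp only [ladderExp, hk, Nat.even_add_one, not_false_eq_true, if_true, if_false,
      diffOp_pow_pred_apply, pow_one, diffOp_apply] at h ⊢
    have hinv (t : Fin (n + 1) → C × ZMod p) (ht : Nonfull t) (i : ZMod p) :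
        η (shiftTuple i t) = η t := by
      have h1 : ∀ j : ℕ, η (shiftTuple (j : ZMod p) t) = η t := fun j => by
        induction j with
        | zero => simp [shiftTuple_zero]
        | succ j ih =>
          have := h _ (ht.shift (j : ZMod p))
          rw [shiftTuple_shiftTuple, ih] at this
          push_cast
          exact sub_eq_zero.1 this
      simpa using h1 i.val
    refine ⟨fun t => if κ t = 0 then η t else 0, ?_, fun t ht => ?_⟩
    · intro i j hij t
      simp only [hκp, hη i j hij t]
      split_ifs <;> simp
    · simp only [hκ t ht, hinv t ht]
      rw [sum_eq_single (-κ t)] <;> simp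
      intro b hb hb'
      exact absurd (eq_neg_of_add_eq_zero_right hb') hb

/-- A ladder of cochains climbing the periodic resolution of the cyclic group. -/
structure IsLadder (Ψ : (k : ℕ) → (Fin (k + 1) → C × ZMod p) → ZMod p) : Prop where
  sum_shift : ∀ t, Nonfull t → (diffOp ^ (p - 1)) (Ψ 0) t = 1
  cobd_eq : ∀ k t, Nonfull t → cobd (Ψ k) t = (diffOp ^ ladderExp p k) (Ψ (k + 1)) t

theorem exists_isLadder (p : ℕ) (C : Type*) [Fact p.Prime] (h2 : IsUnit (2 : ZMod p)) :
    ∃ ω : (k : ℕ) → (Fin (k + 1) → C × ZMod p) → ZMod p, (∀ k, IsAlt (ω k)) ∧ IsLadder ω := by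
  let P (k : ℕ) (ω : (Fin (k + 1) → C × ZMod p) → ZMod p) : Prop :=
    IsAlt ω ∧ ∀ t, Nonfull t → (diffOp ^ ladderExp p (k + 1)) (cobd ω) t = 0
  have hstep (k : ℕ) (ω : {ω // P k ω}) : ∃ ω' : {ω' // P (k + 1) ω'},
      ∀ t, Nonfull t → cobd ω.1 t = (diffOp ^ ladderExp p k) ω'.1 t := by
    obtain ⟨ω', h1, h3⟩ := exists_diffOp_pow_eq k ω.2.1.cobd ω.2.2
    refine ⟨⟨ω', h1, fun t ht => ?_⟩, fun t ht => (h3 t ht).symm⟩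
    rw [ladderExp_add_two, ← cobd_diffOp_pow, cobd_congr_nonfull h3 t ht, cobd_cobd _ h2]
    rfl
  choose next hnext using hstep
  let ω₀ : (Fin 1 → C × ZMod p) → ZMod p := fun t => if (t 0).2 = 0 then 1 else 0
  have hω₀ : (diffOp ^ (p - 1)) ω₀ = fun _ => 1 := by
    ext t
    rw [diffOp_pow_pred_apply, sum_eq_single (-(t 0).2)]
    · simp [ω₀, shiftTuple]
    · intro b _ hb
      exact if_neg fun h => hb (eq_neg_of_add_eq_zero_right h)
    · simp
  have hP : P 0 ω₀ := by
    refine ⟨IsAlt.of_subsingleton (n := 1) _, fun t _ => ?_⟩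
    simp only [ladderExp, zero_add, Nat.not_even_one, if_false]
    rw [← cobd_diffOp_pow, hω₀]
    simp [cobd, faceSum, Fin.sum_univ_two]
  let ω : (k : ℕ) → {ω // P k ω} := fun k => Nat.rec ⟨ω₀, hP⟩ next k
  exact ⟨fun k => (ω k).1, fun k => (ω k).2.1, fun t _ => congrFun hω₀ t,
    fun k t ht => hnext k (ω k) t ht⟩

/-- An iterated evaluation functional along a sequence of labels. -/
def evalAlong (b : ℕ → C × ZMod p) : (k : ℕ) → ((Fin (k + 1) → C × ZMod p) → ZMod p) → ZMod p
  | 0, η => η fun _ => b 0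
  | k + 1, η => evalAlong b k ((diffOp ^ ladderExp p k) (insertFront (b (k + 1)) η))

theorem evalAlong_sub (b : ℕ → C × ZMod p) (k : ℕ) (η θ : (Fin (k + 1) → C × ZMod p) → ZMod p) :
    evalAlong b k (η - θ) = evalAlong b k η - evalAlong b k θ := by
  induction k with
  | zero => rfl
  | succ k ih =>
    have h : insertFront (b (k + 1)) (η - θ) =
        insertFront (b (k + 1)) η - insertFront (b (k + 1)) θ := rfl
    simp only [evalAlong, h, map_sub, ih]

theorem evalAlong_zero (b : ℕ → C × ZMod p) (k : ℕ) : evalAlong b k 0 = 0 := by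
  simpa using evalAlong_sub b k 0 0

theorem evalAlong_cobd (b : ℕ → C × ZMod p) (k : ℕ)
    (η : (Fin (k + 1) → C × ZMod p) → ZMod p) :
    evalAlong b (k + 1) (cobd η) = evalAlong b k ((diffOp ^ ladderExp p k) η) := by
  induction k with
  | zero =>
    have h0 : (diffOp ^ ladderExp p 0) (cobd (insertFront (b 1) η)) = 0 := by
      ext t
      simp only [ladderExp, cobd, faceSum, diffOp_apply, insertFront, Even.zero, if_true, pow_one]
      simp [Subsingleton.elim (shiftTuple 1 t ∘ Fin.succ) (t ∘ Fin.succ)]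
    change evalAlong b 0 ((diffOp ^ ladderExp p 0) (insertFront (b 1) (cobd η))) = _
    rw [insertFront_cobd, map_sub, h0, sub_zero]
  | succ k ih =>
    rw [evalAlong, insertFront_cobd, map_sub, evalAlong_sub, ← cobd_diffOp_pow, ih,
      diffOp_pow_ladderExp, sub_eq_self]
    exact evalAlong_zero b k

omit [Fact p.Prime] in
theorem evalAlong_congr {b : ℕ → C × ZMod p} {k : ℕ}
    {η θ : (Fin (k + 1) → C × ZMod p) → ZMod p}
    (h : ∀ t, (∀ s : Fin (k + 1), (t s).1 = (b (k - s)).1) → η t = θ t) :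
    evalAlong b k η = evalAlong b k θ := by
  induction k with
  | zero => exact h _ (by simp)
  | succ k ih =>
    refine ih fun t ht => diffOp_pow_congr
      (P := fun t : Fin (k + 1) → C × ZMod p => ∀ s : Fin (k + 1), (t s).1 = (b (k - s)).1)
      (fun t ht => ht) (fun t ht => h _ ?_) _ t ht
    refine Fin.cases (by simp) (fun s => ?_)
    simp [ht s]

theorem evalAlong_congr_nonfull [DecidableEq C] {b : ℕ → C × ZMod p} {k : ℕ}
    (hb : ∀ a, #{i ∈ range (k + 1) | (b i).1 = a} < p)
    {η θ : (Fin (k + 1) → C × ZMod p) → ZMod p} (h : ∀ t, Nonfull t → η t = θ t) :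
    evalAlong b k η = evalAlong b k θ := by
  refine evalAlong_congr fun t ht => h t ?_
  by_contra hn
  simp only [Nonfull, not_forall, not_exists, not_not, ne_eq] at hn
  obtain ⟨a, ha⟩ := hn
  choose s hs using ha
  refine (hb a).not_ge ?_
  refine (show p = #(univ : Finset (ZMod p)) by rw [card_univ, ZMod.card]).trans_le ?_
  refine card_le_card_of_injOn (fun i => k - s i) (fun i _ => ?_) fun i _ j _ hij => ?_
  · simp only [coe_filter, mem_range, Set.mem_ofPred_eq, ← ht, hs, and_true]
    omega
  · have hij' : s i = s j := by
      have := (s i).2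
      have := (s j).2
      simp only at hij
      omega
    have := hs i
    rw [hij', hs j] at this
    exact (Prod.ext_iff.1 this).2.symm

theorem IsLadder.evalAlong_eq_one [DecidableEq C]
    {Ψ : (k : ℕ) → (Fin (k + 1) → C × ZMod p) → ZMod p}
    (hΨ : IsLadder Ψ) {b : ℕ → C × ZMod p} {k : ℕ}
    (hb : ∀ a, #{i ∈ range (k + 1) | (b i).1 = a} < p) :
    evalAlong b k ((diffOp ^ (p - 1)) (Ψ k)) = 1 := by
  induction k with
  | zero =>
    refine hΨ.sum_shift _ fun a => ⟨(b 0).2 + 1, fun s hs => ?_⟩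
    simp [Prod.ext_iff] at hs
  | succ k ih =>
    have hb' : ∀ a, #{i ∈ range (k + 1) | (b i).1 = a} < p := fun a =>
      (card_le_card (filter_subset_filter _ (range_subset_range.2 (by omega)))).trans_lt (hb a)
    by_cases hk : Even k
    · have hp : p - 1 = p - 2 + 1 := by
        have := (Fact.out : p.Prime).two_le
        omega
      have h (t : Fin (k + 2) → C × ZMod p) (ht : Nonfull t) :
          (diffOp ^ (p - 1)) (Ψ (k + 1)) t = cobd ((diffOp ^ (p - 2)) (Ψ k)) t := by
        rw [cobd_diffOp_pow, hp, pow_succ, Module.End.mul_apply]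
        refine diffOp_pow_congr_nonfull (fun t ht => ?_) _ t ht
        rw [hΨ.cobd_eq k t ht, ladderExp, if_pos hk, pow_one]
      rw [evalAlong_congr_nonfull hb h, evalAlong_cobd, ladderExp, if_pos hk,
        ← Module.End.mul_apply, pow_one, ← pow_succ', ← hp, ih hb']
    · have h (t : Fin (k + 2) → C × ZMod p) (ht : Nonfull t) :
          (diffOp ^ (p - 1)) (Ψ (k + 1)) t = cobd (Ψ k) t := by
        rw [hΨ.cobd_eq k t ht, ladderExp, if_neg hk]
      rw [evalAlong_congr_nonfull hb h, evalAlong_cobd, ladderExp, if_neg hk, ih hb']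

end Ladder

end Cochain

namespace Cochain

open Finset

section Natural

variable {K : Type*} [CommRing K] {V W : Type*} [AddCommMonoid V] [AddCommMonoid W] {n : ℕ}

theorem cubeSum_map (g : V →+ W) (η : (Fin (n + 1) → W) → K) (v : V) (t : Fin n → V) :
    cubeSum n η (g v) (g ∘ t) = cubeSum n (fun x => η (g ∘ x)) v t := by
  induction n generalizing v with
  | zero => rfl
  | succ n ih =>
    simp only [cubeSum, faceSum]
    refine sum_congr rfl fun k _ => ?_
    congr 1
    have h := ih (insertFront (g v) η) (v + t k) (t ∘ k.succAbove)
    rw [map_add] at h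
    refine h.trans ?_
    congr 1
    ext y
    simp only [insertFront]
    congr 1
    ext i
    refine Fin.cases ?_ (fun i => ?_) i <;> simp

theorem gridSum_map (g : V →+ W) (m : ℕ) (η : (Fin (n + 1) → W) → K) (v : V) (t : Fin n → V) :
    gridSum m η (g v) (g ∘ t) = gridSum m (fun x => η (g ∘ x)) v t := by
  refine sum_congr rfl fun u _ => ?_
  rw [← cubeSum_map]
  simp

theorem cubeSum_translate (w : V) (η : (Fin (n + 1) → V) → K) (v : V) (t : Fin n → V) :
    cubeSum n η (w + v) t = cubeSum n (fun x => η fun i => w + x i) v t := by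
  induction n generalizing v with
  | zero => rfl
  | succ n ih =>
    refine faceSum_congr fun k => ?_
    have h := ih (insertFront (w + v) η) (v + t k) (t ∘ k.succAbove)
    rw [← add_assoc] at h
    refine h.trans ?_
    congr 1
    ext y
    simp only [insertFront]
    congr 1
    ext i
    refine Fin.cases ?_ (fun i => ?_) i <;> simp

theorem gridSum_translate (m : ℕ) (η : (Fin (n + 1) → V) → K) (v : V) (t : Fin n → V) :
    gridSum m η v t = gridSum m (fun x => η fun i => v + x i) 0 t := by
  refine sum_congr rfl fun u _ => ?_
  rw [← cubeSum_translate, zero_add]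

theorem gridSum_eq_sum_piFinset (m : ℕ) (η : (Fin (n + 1) → V) → K) (v : V) (t : Fin n → V) :
    gridSum m η v t =
      ∑ u ∈ Fintype.piFinset fun _ : Fin n => range m, cubeSum n η (v + ∑ s, u s • t s) t := by
  refine sum_bij (fun u _ s => (u s : ℕ)) (fun u _ => by simp) (fun u _ w _ h => ?_)
    (fun u hu => ?_) fun u _ => rfl
  · ext s
    exact congrFun h s
  · simp only [Fintype.mem_piFinset, mem_range] at hu
    exact ⟨fun s => ⟨u s, hu s⟩, mem_univ _, rfl⟩

end Natural

section Labels

variable {K : Type*} [CommRing K] {L : Type*} [DecidableEq L] {n : ℕ}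

/-- The lattice point with coordinates `w s` in the directions `t s`. -/
def latticePoint (t : Fin n → L) (w : Fin n → ℕ) : L → ℕ := ∑ s, w s • Pi.single (t s) 1

theorem latticePoint_apply_self {t : Fin n → L} (ht : Function.Injective t) (w : Fin n → ℕ)
    (s : Fin n) : latticePoint t w (t s) = w s := by
  simp [latticePoint, Pi.single_apply, ht.eq_iff]

theorem latticePoint_apply_of_ne {t : Fin n → L} (w : Fin n → ℕ) {l : L} (hl : ∀ s, t s ≠ l) :
    latticePoint t w l = 0 := by
  simp [latticePoint, fun s => (hl s).symm]

theorem latticePoint_succAbove (t : Fin (n + 1) → L) (k : Fin (n + 1)) (m : ℕ) (w : Fin n → ℕ) :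
    m • Pi.single (t k) 1 + latticePoint (t ∘ k.succAbove) w =
      latticePoint t (k.insertNth (α := fun _ => ℕ) m w) := by
  simp [latticePoint, Fin.sum_univ_succAbove _ k]

/-- The sum of a cochain on lattice points over the box of side `m` at the origin. -/
def boxSum (m : ℕ) (η : (Fin (n + 1) → L → ℕ) → K) (t : Fin n → L) : K :=
  gridSum m η 0 fun s => Pi.single (t s) 1

/-- The sum of a cochain over the face of a box where the coordinate `l` equals `m`. -/
def faceBoxSum (m : ℕ) (η : (Fin (n + 1) → L → ℕ) → K) (l : L) (R : Fin n → L) : K :=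
  gridSum m η (m • Pi.single l 1) fun s => Pi.single (R s) 1

/-- The sum of a cochain over the outer faces of a box. -/
def outerSum (m : ℕ) (η : (Fin (n + 1) → L → ℕ) → K) : (Fin (n + 1) → L) → K :=
  faceSum (faceBoxSum m η)

theorem boxSum_cobd (h2 : IsUnit (2 : K)) (m : ℕ) (η : (Fin (n + 1) → L → ℕ) → K) :
    boxSum m (cobd η) = outerSum m η - cobd (boxSum m η) := by
  ext t
  have h : ∀ l : L, (0 : L → ℕ) + m • Pi.single l 1 = m • Pi.single l 1 := fun _ => zero_add _
  rw [boxSum, gridSum_cobd h2, outerSum, cobd]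
  refine Eq.trans ?_ (congrFun (faceSum_sub (faceBoxSum m η) fun _ => boxSum m η) t)
  simp only [faceSum, h]
  rfl

theorem boxSum_zero (m : ℕ) : boxSum m (0 : (Fin (n + 1) → L → ℕ) → K) = 0 := by
  ext t
  simp [boxSum, gridSum, cubeSum_zero]

theorem outerSum_cobd (h2 : IsUnit (2 : K)) (m : ℕ) (η : (Fin (n + 1) → L → ℕ) → K) :
    outerSum m (cobd η) = cobd (outerSum m η) := by
  have h := boxSum_cobd h2 m (cobd η)
  rw [cobd_cobd _ h2, boxSum_zero, boxSum_cobd h2, cobd_sub, cobd_cobd _ h2, sub_zero] at h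
  exact (sub_eq_zero.1 h.symm)

theorem outerSum_sub (m : ℕ) (η θ : (Fin (n + 1) → L → ℕ) → K) :
    outerSum m (η - θ) = outerSum m η - outerSum m θ := by
  ext t
  simp only [outerSum, Pi.sub_apply]
  refine Eq.trans ?_ (congrFun (faceSum_sub (faceBoxSum m η) (faceBoxSum m θ)) t)
  exact faceSum_congr fun k => gridSum_sub _ _ _ _ _

theorem IsAlt.boxSum (m : ℕ) (η : (Fin (n + 1) → L → ℕ) → K) : IsAlt (boxSum m η) :=
  fun i j hij t => IsAlt.gridSum m η 0 i j hij fun s => Pi.single (t s) 1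

theorem IsAlt.faceBoxSum (m : ℕ) (η : (Fin (n + 1) → L → ℕ) → K) (l : L) :
    IsAlt (faceBoxSum m η l) :=
  fun i j hij R => IsAlt.gridSum m η (m • Pi.single l 1) i j hij fun s => Pi.single (R s) 1

theorem IsAlt.outerSum (m : ℕ) (η : (Fin (n + 1) → L → ℕ) → K) : IsAlt (outerSum m η) :=
  IsAlt.faceSum (IsAlt.faceBoxSum m η)

theorem IsKuhnPath.exists_latticePoint {v : L → ℕ} {t : Fin n → L} {u : Fin n → ℕ}
    {x : Fin (n + 1) → L → ℕ}
    (h : IsKuhnPath n (v + ∑ s, u s • Pi.single (t s) 1) (fun s => Pi.single (t s) 1) x)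
    (i : Fin (n + 1)) :
    ∃ w : Fin n → ℕ, (∀ s, u s ≤ w s ∧ w s ≤ u s + 1) ∧ x i = v + latticePoint t w := by
  obtain ⟨c, hc, hx⟩ := h.exists_eq i
  refine ⟨u + c, fun s => ⟨by simp, by simpa using hc s⟩, ?_⟩
  rw [hx, latticePoint, add_assoc, ← sum_add_distrib]
  simp [add_smul]

theorem outerSum_congr {m : ℕ} {η θ : (Fin (n + 1) → L → ℕ) → K} {t : Fin (n + 1) → L}
    (h : ∀ (k : Fin (n + 1)) (u : Fin (n + 1) → ℕ) (x : Fin (n + 1) → L → ℕ), (∀ s, u s ≤ m) →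
      u k = m →
      (∀ i, ∃ w : Fin (n + 1) → ℕ, (∀ s, u s ≤ w s ∧ w s ≤ u s + 1) ∧ (∀ s, w s ≤ m) ∧ w k = m ∧
        x i = latticePoint t w) →
      η x = θ x) : outerSum m η t = outerSum m θ t := by
  refine faceSum_congr fun k => gridSum_congr fun u x hx => ?_
  refine h k (k.insertNth (α := fun _ => ℕ) m fun s => (u s : ℕ)) x (fun s => ?_) (by simp)
    fun i => ?_
  · refine Fin.succAboveCases k ?_ (fun s => ?_) s
    · simp
    · simp [(u s).2.le]
  · obtain ⟨w, hw, hx⟩ := IsKuhnPath.exists_latticePoint (u := fun s => (u s : ℕ)) hx i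
    refine ⟨k.insertNth (α := fun _ => ℕ) m w, fun s => ?_, fun s => ?_, by simp,
      hx.trans (latticePoint_succAbove t k m w)⟩
    · refine Fin.succAboveCases k ?_ (fun s => ?_) s
      · simp
      · simpa using hw s
    · refine Fin.succAboveCases k ?_ (fun s => ?_) s
      · simp
      · simpa using (hw s).2.trans (u s).2

end Labels

end Cochain

namespace Cochain

open Finset

section Labeling

variable {p : ℕ} {C : Type*} [DecidableEq C] {n : ℕ}

/-- A lattice point has minimum zero if each color has a vanishing coordinate. -/
def MinZero (y : C × ZMod p → ℕ) : Prop := ∀ a, ∃ i, y (a, i) = 0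

/-- The cyclic rotation of the coordinates of lattice points. -/
def rotate : (C × ZMod p → ℕ) →+ (C × ZMod p → ℕ) where
  toFun y l := y (l.1, l.2 - 1)
  map_zero' := rfl
  map_add' _ _ := rfl

theorem rotate_single (l : C × ZMod p) (m : ℕ) :
    rotate (Pi.single l m) = Pi.single (l.1, l.2 + 1) m := by
  ext l'
  simp only [rotate, AddMonoidHom.coe_mk, ZeroHom.coe_mk, Pi.single_apply, Prod.ext_iff,
    sub_eq_iff_eq_add]

/-- A labeling of lattice points that is equivariant at height `r`, compatible with face
identifications at height `n` and such that labels in small cubes are nonfull. -/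
structure IsGoodLabeling (r n : ℕ) (lab : (C × ZMod p → ℕ) → C × ZMod p) : Prop where
  le : r ≤ n
  shift : ∀ y, MinZero y → (∀ l, y l ≤ r) → (∃ l, y l = r) →
    lab (rotate y) = ((lab y).1, (lab y).2 + 1)
  face : ∀ a j (z : C × ZMod p → ℕ), j ≠ 0 → z (a, 0) = 0 → z (a, j) = 0 → (∀ l, z l ≤ n) →
    lab (n • Pi.single (a, 0) 1 + z) = lab (n • Pi.single (a, j) 1 + z)
  degenerate : ∀ a j (y : C × ZMod p → ℕ), j ≠ 0 → y (a, j) = n → (∀ l, y l ≤ n) →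
    y (a, 0) < n → lab (y + Pi.single (a, 0) 1) = lab y
  nonfull : ∀ (q : ℕ) (x : Fin q → C × ZMod p → ℕ) (v : C × ZMod p → ℕ), (∀ s, MinZero (x s)) →
    (∀ s l, x s l ≤ n) → (∀ s, ∃ l, r ≤ x s l) → (∀ s l, v l ≤ x s l ∧ x s l ≤ v l + 1) →
    Nonfull (lab ∘ x)

theorem minZero_latticePoint {t : Fin n → C × ZMod p} (ht : Nonfull t) (w : Fin n → ℕ) :
    MinZero (latticePoint t w) := fun a => by
  obtain ⟨i, hi⟩ := ht a
  exact ⟨i, latticePoint_apply_of_ne w hi⟩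

theorem latticePoint_le {t : Fin n → C × ZMod p} (ht : Function.Injective t) {w w' : Fin n → ℕ}
    {c : ℕ} (h : ∀ s, w s ≤ w' s + c) (l : C × ZMod p) :
    latticePoint t w l ≤ latticePoint t w' l + c := by
  by_cases hl : ∃ s, t s = l
  · obtain ⟨s, rfl⟩ := hl
    simpa only [latticePoint_apply_self ht] using h s
  · push Not at hl
    simp [latticePoint_apply_of_ne _ hl]

theorem latticePoint_le_const {t : Fin n → C × ZMod p} (ht : Function.Injective t)
    {w : Fin n → ℕ} {c : ℕ} (h : ∀ s, w s ≤ c) (l : C × ZMod p) : latticePoint t w l ≤ c := by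
  have := latticePoint_le ht (w' := 0) (c := c) (by simpa using h) l
  simpa [latticePoint] using this

/-- The pullback of a cochain on labels to lattice points. -/
def pullback {X Y K : Type*} (lab : Y → X) (η : (Fin n → X) → K) : (Fin n → Y) → K :=
  fun x => η (lab ∘ x)

variable {r m : ℕ} {lab : (C × ZMod p → ℕ) → C × ZMod p}

theorem IsGoodLabeling.nonfull_latticePoint (h : IsGoodLabeling r m lab)
    {t : Fin n → C × ZMod p} (ht : Function.Injective t) (ht' : Nonfull t) {u : Fin n → ℕ} {q : ℕ}
    {x : Fin q → C × ZMod p → ℕ}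
    (hx : ∀ i, ∃ w : Fin n → ℕ, (∀ s, u s ≤ w s ∧ w s ≤ u s + 1) ∧ (∀ s, w s ≤ m) ∧
      (∃ s, r ≤ w s) ∧ x i = latticePoint t w) : Nonfull (lab ∘ x) := by
  refine h.nonfull q x (latticePoint t u) (fun i => ?_) (fun i => ?_) (fun i => ?_) fun i l => ?_
  all_goals obtain ⟨w, hw, hwm, ⟨s, hs⟩, hxi⟩ := hx i; rw [hxi]
  · exact minZero_latticePoint ht' w
  · exact latticePoint_le_const ht hwm
  · exact ⟨t s, by rwa [latticePoint_apply_self ht]⟩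
  · exact ⟨latticePoint_le ht (c := 0) (fun s => (hw s).1) l,
      latticePoint_le ht (fun s => (hw s).2) l⟩

theorem IsGoodLabeling.outerSum_congr (h : IsGoodLabeling r m lab)
    {η θ : (Fin (n + 1) → C × ZMod p) → ZMod p} (hηθ : ∀ t, Nonfull t → η t = θ t)
    {t : Fin (n + 1) → C × ZMod p} (ht : Function.Injective t) (ht' : Nonfull t) :
    outerSum r (pullback lab η) t = outerSum r (pullback lab θ) t := by
  refine Cochain.outerSum_congr fun k u x _ _ hx => hηθ _ ?_
  refine h.nonfull_latticePoint ht ht' (u := u) fun i => ?_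
  obtain ⟨w, hw, hwr, hwk, hxi⟩ := hx i
  exact ⟨w, hw, fun s => (hwr s).trans h.le, ⟨k, hwk.ge⟩, hxi⟩

theorem IsGoodLabeling.outerSum_diffOp (h : IsGoodLabeling r m lab)
    (η : (Fin (n + 1) → C × ZMod p) → ZMod p)
    {t : Fin (n + 1) → C × ZMod p} (ht : Function.Injective t) (ht' : Nonfull t) :
    outerSum r (pullback lab (diffOp η)) t = diffOp (outerSum r (pullback lab η)) t := by
  have h0 : pullback lab (diffOp η) = pullback lab (shiftOp 1 η) - pullback lab η := rfl
  rw [h0, outerSum_sub, diffOp_apply, Pi.sub_apply]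
  congr 1
  have h1 : outerSum r (pullback lab η) (shiftTuple 1 t) =
      outerSum r (fun x => pullback lab η (rotate ∘ x)) t := by
    simp only [outerSum, faceSum]
    refine sum_congr rfl fun k _ => congrArg _ ?_
    simp only [faceBoxSum]
    rw [← gridSum_map, map_nsmul, rotate_single]
    congr 1
    ext s
    simp only [Function.comp_apply, rotate_single]
    rfl
  rw [h1]
  refine Cochain.outerSum_congr fun k u x _ _ hx => ?_
  simp only [pullback, shiftOp_apply]
  congr 1
  ext1 i
  obtain ⟨w, hw, hwr, hwk, hxi⟩ := hx i
  refine (h.shift (x i) ?_ ?_ ?_).symm <;> rw [hxi]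
  · exact minZero_latticePoint ht' w
  · exact latticePoint_le_const ht hwr
  · exact ⟨t k, by rw [latticePoint_apply_self ht, hwk]⟩

theorem IsGoodLabeling.outerSum_diffOp_pow (h : IsGoodLabeling r m lab)
    (η : (Fin (n + 1) → C × ZMod p) → ZMod p) (j : ℕ)
    {t : Fin (n + 1) → C × ZMod p} (ht : Function.Injective t) (ht' : Nonfull t) :
    outerSum r (pullback lab ((diffOp ^ j) η)) t =
      (diffOp ^ j) (outerSum r (pullback lab η)) t := by
  induction j generalizing t with
  | zero => rfl
  | succ j ih =>
    rw [pow_succ', Module.End.mul_apply, Module.End.mul_apply, h.outerSum_diffOp _ ht ht',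
      diffOp_apply, diffOp_apply, ih ht ht', ih _ (ht'.shift 1)]
    intro s s' hs
    simp only [shiftTuple, Prod.mk.injEq, add_left_inj] at hs
    exact ht (Prod.ext hs.1 hs.2)

variable [Fact p.Prime]

theorem IsGoodLabeling.isLadder (h2 : IsUnit (2 : ZMod p)) (h : IsGoodLabeling r m lab)
    {ω : (k : ℕ) → (Fin (k + 1) → C × ZMod p) → ZMod p}
    (hω : IsLadder ω) : IsLadder fun k => outerSum r (pullback lab (ω k)) where
  sum_shift t ht := by
    have hinj : Function.Injective t := fun i j _ => Subsingleton.elim (α := Fin 1) i j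
    rw [← h.outerSum_diffOp_pow _ _ hinj ht,
      h.outerSum_congr (θ := fun _ => 1) hω.sum_shift hinj ht]
    simp [outerSum, faceSum, faceBoxSum, gridSum, cubeSum, pullback]
  cobd_eq k t ht := by
    by_cases hinj : Function.Injective t
    · rw [← outerSum_cobd h2, ← h.outerSum_diffOp_pow _ _ hinj ht]
      exact h.outerSum_congr (hω.cobd_eq k) hinj ht
    · rw [(IsAlt.outerSum _ _).cobd.eq_zero h2 hinj,
        ((IsAlt.outerSum _ _).diffOp_pow _).eq_zero h2 hinj]

end Labeling

end Cochain

namespace Cochain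

open Finset

section Contradiction

variable {p : ℕ} {C : Type*} [DecidableEq C] [Fintype C] {n : ℕ} [Fact p.Prime]
variable {r m : ℕ} {lab : (C × ZMod p → ℕ) → C × ZMod p}

omit [DecidableEq C] in
theorem card_missing (i : C → ZMod p) [DecidablePred fun l : C × ZMod p => l.2 ≠ i l.1] :
    #{l : C × ZMod p | l.2 ≠ i l.1} = Fintype.card C * (p - 1) := by
  classical
  have h : ({l : C × ZMod p | l.2 ≠ i l.1} : Finset _) =
      (univ : Finset (C × ZMod p)) \ univ.image fun a => (a, i a) := by
    ext ⟨a, j⟩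
    simp [eq_comm]
  rw [h, card_sdiff_of_subset (subset_univ _),
    card_image_of_injective _ fun a b hab => (Prod.ext_iff.1 hab).1]
  simp [ZMod.card, Nat.mul_sub]

omit [DecidableEq C] in
theorem Nonfull.le_of_injective {t : Fin n → C × ZMod p} (ht : Nonfull t)
    (hinj : Function.Injective t) : n ≤ Fintype.card C * (p - 1) := by
  classical
  choose i hi using ht
  rw [← card_missing i]
  calc n = #(univ.image t) := by simp [card_image_of_injective _ hinj]
    _ ≤ _ := card_le_card fun l hl => by
      obtain ⟨s, _, rfl⟩ := mem_image.1 hl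
      simpa using fun h => hi (t s).1 s (Prod.ext rfl h)

omit [DecidableEq C] in
theorem Nonfull.exists_mem_range_iff {t : Fin n → C × ZMod p} (ht : Nonfull t)
    (hinj : Function.Injective t) (hn : n = Fintype.card C * (p - 1)) :
    ∃ i : C → ZMod p, ∀ l, (∃ s, t s = l) ↔ l.2 ≠ i l.1 := by
  classical
  choose i hi using ht
  refine ⟨i, ?_⟩
  have h : univ.image t = ({l : C × ZMod p | l.2 ≠ i l.1} : Finset _) := by
    refine eq_of_subset_of_card_le (fun l hl => ?_) ?_
    · obtain ⟨s, _, rfl⟩ := mem_image.1 hl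
      simpa using fun h => hi (t s).1 s (Prod.ext rfl h)
    · rw [card_missing i, ← hn]
      simp [card_image_of_injective _ hinj]
  intro l
  simpa using Finset.ext_iff.1 h l

theorem IsGoodLabeling.boxSum_eq (h2 : IsUnit (2 : ZMod p)) (h : IsGoodLabeling r m lab)
    {ω : (Fin (n + 1) → C × ZMod p) → ZMod p} (hω : IsAlt ω)
    (hn : n = Fintype.card C * (p - 1)) {t : Fin n → C × ZMod p} (ht : Nonfull t) :
    boxSum r (pullback lab ω) t = boxSum m (pullback lab ω) t := by
  by_cases hinj : Function.Injective t
  swap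
  · rw [(IsAlt.boxSum _ _).eq_zero h2 hinj, (IsAlt.boxSum _ _).eq_zero h2 hinj]
  rw [boxSum, boxSum, gridSum_eq_sum_piFinset, gridSum_eq_sum_piFinset]
  refine sum_subset (fun u hu => ?_) fun u hu hu' => ?_
  · simp only [Fintype.mem_piFinset, mem_range] at hu ⊢
    exact fun s => (hu s).trans_le h.le
  · simp only [Fintype.mem_piFinset, mem_range, not_forall, not_lt] at hu hu'
    obtain ⟨s, hs⟩ := hu'
    refine (cubeSum_congr (θ := 0) fun x hx => ?_).trans (cubeSum_zero _ _)
    have hfull : Nonfull (lab ∘ x) := by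
      refine h.nonfull_latticePoint hinj ht (u := u) fun i => ?_
      obtain ⟨w, hw, hxi⟩ := hx.exists_latticePoint i
      exact ⟨w, hw, fun s => (hw s).2.trans (hu s), ⟨s, hs.trans (hw s).1⟩, by simpa using hxi⟩
    exact hω.eq_zero h2 fun hinj' => by
      have := hfull.le_of_injective hinj'
      omega

omit [Fintype C] in
theorem IsGoodLabeling.faceBoxSum_eq_of_zero (h : IsGoodLabeling r m lab)
    (ω : (Fin (n + 1) → C × ZMod p) → ZMod p) {R : Fin n → C × ZMod p}
    (hR : Function.Injective R) {a : C} {j : ZMod p} (hj : j ≠ 0) (h0 : ∀ s, R s ≠ (a, 0))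
    (h0' : ∀ s, R s ≠ (a, j)) :
    faceBoxSum m (pullback lab ω) (a, 0) R = faceBoxSum m (pullback lab ω) (a, j) R := by
  rw [faceBoxSum, faceBoxSum, gridSum_translate,
    gridSum_translate (v := m • Pi.single (a, j) 1)]
  refine gridSum_congr fun u x hx => congrArg ω ?_
  ext1 i
  obtain ⟨w, hw, hxi⟩ := IsKuhnPath.exists_latticePoint (u := fun s => (u s : ℕ)) hx i
  rw [zero_add] at hxi
  refine h.face a j (x i) hj ?_ ?_ ?_ <;> rw [hxi]
  · exact latticePoint_apply_of_ne w h0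
  · exact latticePoint_apply_of_ne w h0'
  · exact latticePoint_le_const hR fun s => (hw s).2.trans (u s).2

omit [Fintype C] in
theorem IsGoodLabeling.faceBoxSum_eq_zero (h2 : IsUnit (2 : ZMod p)) (h : IsGoodLabeling r m lab)
    {ω : (Fin (n + 1) → C × ZMod p) → ZMod p} (hω : IsAlt ω) {R : Fin n → C × ZMod p}
    (hR : Function.Injective R) {a : C} {j : ZMod p} (hj : j ≠ 0) (h0 : ∃ s, R s = (a, 0))
    (hj' : ∀ s, R s ≠ (a, j)) :
    faceBoxSum m (pullback lab ω) (a, j) R = 0 := by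
  have hz : gridSum m (0 : (Fin (n + 1) → C × ZMod p → ℕ) → ZMod p) (m • Pi.single (a, j) 1)
      (fun s => Pi.single (R s) 1) = 0 := by
    simp [gridSum, cubeSum_zero]
  rw [faceBoxSum, ← hz]
  refine gridSum_congr fun u x hx => hω.eq_zero h2 fun hinj => ?_
  obtain ⟨s, hs⟩ := h0
  obtain ⟨i, hi⟩ := hx.exists_step s
  have hle : ∀ i l, x i l ≤ m ∧ x i (a, j) = m := fun i l => by
    obtain ⟨w, hw, hxi⟩ := IsKuhnPath.exists_latticePoint (u := fun s => (u s : ℕ)) hx i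
    rw [hxi]
    refine ⟨?_, by simp [latticePoint_apply_of_ne w hj']⟩
    by_cases hl : l = (a, j)
    · simp [hl, latticePoint_apply_of_ne w hj']
    · simpa [hl] using latticePoint_le_const hR (fun s => (hw s).2.trans (u s).2) l
  have hlab : lab (x i.succ) = lab (x i.castSucc) := by
    rw [hi, hs]
    refine h.degenerate a j _ hj (hle _ (a, j)).2 (fun l => (hle _ l).1) ?_
    have := (hle i.succ (a, 0)).1
    rw [hi, hs] at this
    simpa using this
  have := hinj hlab
  simp [Fin.ext_iff] at this

theorem IsGoodLabeling.faceBoxSum_eq (h2 : IsUnit (2 : ZMod p)) (h : IsGoodLabeling r m lab)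
    {ω : (Fin (n + 1) → C × ZMod p) → ZMod p} (hω : IsAlt ω)
    (hn : n + 1 = Fintype.card C * (p - 1)) {R : Fin n → C × ZMod p} {l l' : C × ZMod p}
    (hR : Function.Injective R) (hl : ∀ s, R s ≠ l) (hl' : ∀ s, R s ≠ l')
    (hRl : ∀ a, ∃ i, (∀ s, R s ≠ (a, i)) ∧ l ≠ (a, i))
    (hRl' : ∀ a, ∃ i, (∀ s, R s ≠ (a, i)) ∧ l' ≠ (a, i)) :
    faceBoxSum m (pullback lab ω) l R = faceBoxSum m (pullback lab ω) l' R := by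
  by_cases hll : l = l'
  · rw [hll]
  have hfull : Nonfull (Fin.cons l R : Fin (n + 1) → C × ZMod p) := fun a => by
    obtain ⟨i, hi, hi'⟩ := hRl a
    exact ⟨i, Fin.cases (by simpa using hi') (by simpa using hi)⟩
  obtain ⟨i, hi⟩ := hfull.exists_mem_range_iff
    (Fin.cons_injective_iff.2 ⟨fun ⟨s, hs⟩ => hl s hs, hR⟩) hn
  simp only [Fin.exists_fin_succ, Fin.cons_zero, Fin.cons_succ] at hi
  obtain ⟨a, j⟩ := l
  obtain ⟨a', j'⟩ := l'
  have hj' : j' = i a' := by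
    by_contra hne
    rcases (hi (a', j')).2 hne with h' | ⟨s, hs⟩
    · exact hll h'
    · exact hl' s hs
  have hj : j ≠ i a := (hi (a, j)).1 (Or.inl rfl)
  have ha : a = a' := by
    obtain ⟨k, hk, hk'⟩ := hRl' a'
    by_contra hne
    have hki : k ≠ i a' := fun hki => hk' (by rw [hki, hj'])
    rcases (hi (a', k)).2 hki with h' | ⟨s, hs⟩
    · exact hne (Prod.ext_iff.1 h').1
    · exact hk s hs
  subst ha
  have hjj : j ≠ j' := hj' ▸ hj
  by_cases hj0 : j = 0
  · subst hj0
    exact h.faceBoxSum_eq_of_zero ω hR hjj.symm hl hl'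
  by_cases hj0' : j' = 0
  · subst hj0'
    exact (h.faceBoxSum_eq_of_zero ω hR hjj hl' hl).symm
  have h0 : ∃ s, R s = (a, 0) := by
    refine ((hi (a, 0)).2 ?_).resolve_left fun h' => hj0 (Prod.ext_iff.1 h').2
    exact fun h' => hj0' (hj'.trans h'.symm)
  rw [h.faceBoxSum_eq_zero h2 hω hR hj0 h0 hl, h.faceBoxSum_eq_zero h2 hω hR hj0' h0 hl']

theorem IsGoodLabeling.exists_outerSum_eq (h2 : IsUnit (2 : ZMod p)) (h : IsGoodLabeling r m lab)
    {ω : (Fin (n + 1) → C × ZMod p) → ZMod p} (hω : IsAlt ω)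
    (hn : n + 1 = Fintype.card C * (p - 1)) :
    ∃ β : (Fin n → C × ZMod p) → ZMod p, ∀ t, Nonfull t →
      outerSum m (pullback lab ω) t = cobd β t := by
  classical
  let Q (S : Set (C × ZMod p)) (l : C × ZMod p) : Prop :=
    l ∉ S ∧ ∀ a, ∃ i, (a, i) ∉ S ∧ l ≠ (a, i)
  let β (R : Fin n → C × ZMod p) : ZMod p :=
    if hR : ∃ l, Q (Set.range R) l then faceBoxSum m (pullback lab ω) hR.choose R else 0
  have hβ : IsAlt β := by
    intro i j hij R
    have hr : Set.range (R ∘ Equiv.swap i j) = Set.range R := EquivLike.range_comp R _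
    simp only [β, hr]
    split_ifs
    · exact IsAlt.faceBoxSum _ _ _ i j hij R
    · simp
  refine ⟨β, fun t ht => ?_⟩
  by_cases hinj : Function.Injective t
  swap
  · rw [(IsAlt.outerSum _ _).eq_zero h2 hinj, hβ.cobd.eq_zero h2 hinj]
  refine faceSum_congr fun k => ?_
  have hk : Q (Set.range (t ∘ k.succAbove)) (t k) := by
    refine ⟨?_, fun a => ?_⟩
    · rintro ⟨s, hs⟩
      exact Fin.succAbove_ne k s (hinj hs)
    · obtain ⟨i, hi⟩ := ht a
      exact ⟨i, fun ⟨s, hs⟩ => hi _ hs, hi k⟩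
  have hex : ∃ l, Q (Set.range (t ∘ k.succAbove)) l := ⟨_, hk⟩
  simp only [β, dif_pos hex]
  have hQ := hex.choose_spec
  exact h.faceBoxSum_eq h2 hω hn (hinj.comp Fin.succAbove_right_injective)
    (fun s hs => hk.1 ⟨s, hs⟩) (fun s hs => hQ.1 ⟨s, hs⟩)
    (fun a => (hk.2 a).imp fun i hi => ⟨fun s hs => hi.1 ⟨s, hs⟩, hi.2⟩)
    (fun a => (hQ.2 a).imp fun i hi => ⟨fun s hs => hi.1 ⟨s, hs⟩, hi.2⟩)

theorem not_isGoodLabeling (hp : p ≠ 2) (d : ℕ) (hd : 0 < d) (r m : ℕ)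
    (lab : (Fin d × ZMod p → ℕ) → Fin d × ZMod p) : ¬IsGoodLabeling r m lab := by
  intro h
  have hodd : Odd p := (Fact.out : p.Prime).odd_of_ne_two hp
  have h2 : IsUnit (2 : ZMod p) := by
    have := (ZMod.isUnit_iff_coprime 2 p).2 (Nat.coprime_two_left.2 hodd)
    exact_mod_cast this
  obtain ⟨N, hN, hNe⟩ : ∃ N, N + 1 + 1 = Fintype.card (Fin d) * (p - 1) ∧ Even N := by
    obtain ⟨k, rfl⟩ := hodd
    have hk : 0 < d * k :=
      Nat.mul_pos hd (Nat.pos_of_ne_zero fun hk =>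
        (Fact.out : (2 * k + 1).Prime).ne_one (by simp [hk]))
    refine ⟨2 * (d * k - 1), ?_, even_two_mul _⟩
    rw [Fintype.card_fin, Nat.add_sub_cancel, Nat.mul_left_comm]
    omega
  obtain ⟨b, hb⟩ : ∃ b : ℕ → Fin d × ZMod p,
      ∀ a, #{i ∈ range (N + 1 + 1) | (b i).1 = a} < p := by
    have : NeZero d := ⟨hd.ne'⟩
    have hp1 : 0 < p - 1 := Nat.sub_pos_of_lt (Fact.out : p.Prime).one_lt
    refine ⟨fun i => (Fin.ofNat d (i / (p - 1)), 0), fun a => ?_⟩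
    calc _ ≤ #(Ico ((a : ℕ) * (p - 1)) ((a + 1 : ℕ) * (p - 1))) := card_le_card fun i hi => by
          rw [mem_filter, mem_range, hN, Fintype.card_fin] at hi
          have hlt : i / (p - 1) < d := (Nat.div_lt_iff_lt_mul hp1).2 hi.1
          have ha : i / (p - 1) = a := by simpa [Nat.mod_eq_of_lt hlt] using congrArg Fin.val hi.2
          rw [mem_Ico, ← Nat.le_div_iff_mul_le hp1, ← Nat.div_lt_iff_lt_mul hp1, ha]
          exact ⟨le_rfl, Nat.lt_succ_self _⟩
      _ = p - 1 := by rw [Nat.card_Ico, ← Nat.sub_mul, Nat.add_sub_cancel_left, one_mul]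
      _ < p := Nat.sub_lt (Fact.out : p.Prime).pos one_pos
  obtain ⟨ω, hωa, hω⟩ := exists_isLadder p (Fin d) h2
  have h1 := (h.isLadder h2 hω).evalAlong_eq_one hb
  set η := pullback lab (ω (N + 1))
  obtain ⟨β, hβ⟩ := h.exists_outerSum_eq h2 (hωa (N + 1)) hN
  have hcob (Y : (Fin (N + 1) → Fin d × ZMod p) → ZMod p) :
      evalAlong b (N + 1) ((diffOp ^ (p - 1)) (cobd Y)) = 0 := by
    rw [← cobd_diffOp_pow, evalAlong_cobd, ladderExp, if_pos hNe, ← Module.End.mul_apply,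
      pow_one, ← pow_succ', Nat.sub_add_cancel (Fact.out : p.Prime).one_le, diffOp_pow_card]
    exact evalAlong_zero _ _
  have hbox (t : Fin (N + 1 + 1) → Fin d × ZMod p) (ht : Nonfull t) :
      outerSum r η t = cobd (β - boxSum m η + boxSum r η) t := by
    have e1 := congrFun (boxSum_cobd h2 r η) t
    have e2 := congrFun (boxSum_cobd h2 m η) t
    have e3 : boxSum r (cobd η) t = boxSum m (cobd η) t :=
      h.boxSum_eq h2 (hωa (N + 1)).cobd hN ht
    have e4 := hβ t ht
    rw [cobd_add, cobd_sub]
    simp only [Pi.sub_apply, Pi.add_apply] at e1 e2 ⊢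
    linear_combination e2 + e3 - e1 + e4
  rw [evalAlong_congr_nonfull hb fun t ht => diffOp_pow_congr_nonfull hbox (p - 1) t ht,
    hcob] at h1
  exact zero_ne_one h1

end Contradiction

end Cochain

section CubeToSphere

variable {d : ℕ}

/-- The product function vanishing exactly on the boundary of the cube. -/
def bump (x : Fin d → ℝ) : ℝ := ∏ a, (1 - x a ^ 2)

theorem bump_eq_zero {x : Fin d → ℝ} {a : Fin d} (h : |x a| = 1) : bump x = 0 :=
  Finset.prod_eq_zero (Finset.mem_univ a) (by rw [← sq_abs, h]; norm_num)

theorem bump_pos {x : Fin d → ℝ} (h : ∀ a, |x a| < 1) : 0 < bump x :=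
  Finset.prod_pos fun a _ => by
    have := (sq_lt_one_iff_abs_lt_one (x a)).2 (h a)
    linarith

theorem bump_nonneg {x : Fin d → ℝ} (h : ∀ a, |x a| ≤ 1) : 0 ≤ bump x :=
  Finset.prod_nonneg fun a _ => by
    have := (sq_le_one_iff_abs_le_one (x a)).2 (h a)
    linarith

theorem bump_le_bump {x y : Fin d → ℝ} (hy : ∀ a, |y a| ≤ 1) (h : ∀ a, |x a| ≤ |y a|) :
    bump y ≤ bump x := by
  refine Finset.prod_le_prod (fun a _ => ?_) fun a _ => ?_
  · have := (sq_le_one_iff_abs_le_one (y a)).2 (hy a)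
    linarith
  · have := sq_le_sq.2 (h a)
    linarith

theorem continuous_bump : Continuous (bump (d := d)) := by
  unfold bump
  fun_prop

theorem sum_sq_add_bump_sq_pos (x : Fin d → ℝ) : 0 < ∑ a, x a ^ 2 + bump x ^ 2 := by
  by_cases hx : x = 0
  · simp [hx, bump]
  · obtain ⟨a, ha⟩ := Function.ne_iff.1 hx
    have : 0 < ∑ a, x a ^ 2 := Finset.sum_pos' (fun a _ => sq_nonneg _)
      ⟨a, Finset.mem_univ a, by simpa using pow_pos (abs_pos.2 ha) 2⟩
    positivity

/-- The inverse stereographic projection of `x / bump x`, extended to a map of the cube to the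
sphere collapsing the boundary of the cube to the pole. -/
noncomputable def cubeToSphere (x : Fin d → ℝ) :
    Metric.sphere (0 : EuclideanSpace ℝ (Fin (d + 1))) 1 :=
  ⟨WithLp.toLp 2 (Fin.cons ((∑ a, x a ^ 2 - bump x ^ 2) / (∑ a, x a ^ 2 + bump x ^ 2))
    fun a => 2 * bump x * x a / (∑ a, x a ^ 2 + bump x ^ 2)), by
    have h := (sum_sq_add_bump_sq_pos x).ne'
    rw [mem_sphere_zero_iff_norm, EuclideanSpace.norm_eq, Real.sqrt_eq_one, Fin.sum_univ_succ]
    simp only [Real.norm_eq_abs, sq_abs, Fin.cons_zero, Fin.cons_succ, div_pow, mul_pow,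
      ← Finset.sum_div, ← Finset.mul_sum]
    field_simp
    ring⟩

theorem continuous_cubeToSphere : Continuous (cubeToSphere (d := d)) := by
  have hb := continuous_bump (d := d)
  have h (x : Fin d → ℝ) := (sum_sq_add_bump_sq_pos x).ne'
  refine Continuous.subtype_mk ((PiLp.continuous_toLp 2 _).comp (continuous_pi fun i => ?_)) _
  refine Fin.cases ?_ (fun a => ?_) i
  · simp only [Fin.cons_zero]
    fun_prop (disch := exact h _)
  · simp only [Fin.cons_succ]
    fun_prop (disch := exact h _)

theorem cubeToSphere_of_bump_eq_zero {x : Fin d → ℝ} (h : bump x = 0) :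
    (cubeToSphere x : EuclideanSpace ℝ (Fin (d + 1))) =
      WithLp.toLp 2 (Fin.cons 1 fun _ => 0) := by
  have := (sum_sq_add_bump_sq_pos x).ne'
  simp only [cubeToSphere, h] at this ⊢
  simp_all

theorem cubeToSphere_eq_of_boundary {x y : Fin d → ℝ} (hx : ∃ a, |x a| = 1)
    (hy : ∃ a, |y a| = 1) : cubeToSphere x = cubeToSphere y := by
  obtain ⟨a, ha⟩ := hx
  obtain ⟨b, hb⟩ := hy
  exact Subtype.ext ((cubeToSphere_of_bump_eq_zero (bump_eq_zero ha)).trans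
    (cubeToSphere_of_bump_eq_zero (bump_eq_zero hb)).symm)

theorem eq_of_cubeToSphere_eq {x y : Fin d → ℝ} (hx : ∀ a, |x a| < 1) (hy : ∀ a, |y a| ≤ 1)
    (h : cubeToSphere x = cubeToSphere y) : x = y := by
  have hbx := bump_pos hx
  have hby := bump_nonneg hy
  have hsx := sum_sq_add_bump_sq_pos x
  have hsy := sum_sq_add_bump_sq_pos y
  have hco (i) : (cubeToSphere x).1 i = (cubeToSphere y).1 i := by rw [h]
  have h0 := hco 0
  have hs (a : Fin d) := hco a.succ
  simp only [cubeToSphere, Fin.cons_zero, Fin.cons_succ] at h0 hs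
  generalize hX : ∑ a, x a ^ 2 = X at *
  generalize hY : ∑ a, y a ^ 2 = Y at *
  generalize hb : bump x = b at *
  generalize hc : bump y = c at *
  have hXY : b ^ 2 * (Y + c ^ 2) = c ^ 2 * (X + b ^ 2) := by
    rw [div_eq_div_iff hsx.ne' hsy.ne'] at h0
    linear_combination -h0 / 2
  have hc0 : 0 < c := hby.lt_of_ne' fun hc0 => by
    rw [hc0] at hXY hsy
    have : 0 < b ^ 2 * (Y + 0 ^ 2) := by positivity
    rw [hXY] at this
    simp at this
  have hprop (a : Fin d) : c * x a = b * y a := by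
    have h1 := hs a
    rw [div_eq_div_iff hsx.ne' hsy.ne'] at h1
    have h2 : (X + b ^ 2) * c * (c * x a - b * y a) = 0 := by
      linear_combination b / 2 * h1 - x a * hXY
    have : (X + b ^ 2) * c ≠ 0 := by positivity
    linarith [(mul_eq_zero.1 h2).resolve_left this]
  have habs (a : Fin d) : c * |x a| = b * |y a| := by
    simpa [abs_mul, abs_of_pos hc0, abs_of_pos hbx] using congrArg abs (hprop a)
  have hbc : b = c := by
    rcases le_total b c with hle | hle
    · refine hle.antisymm ?_
      rw [← hb, ← hc]
      refine bump_le_bump hy fun a => ?_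
      have h1 := habs a
      have h2 := mul_le_mul_of_nonneg_right hle (abs_nonneg (y a))
      exact le_of_mul_le_mul_left (h1.trans_le h2) hc0
    · refine le_antisymm ?_ hle
      rw [← hb, ← hc]
      refine bump_le_bump (fun a => (hx a).le) fun a => ?_
      have h1 := habs a
      have h2 := mul_le_mul_of_nonneg_right hle (abs_nonneg (x a))
      exact le_of_mul_le_mul_left (h1.symm.trans_le h2) hbx
  funext a
  have := hprop a
  rw [hbc] at this
  exact mul_left_cancel₀ hc0.ne' this

end CubeToSphere

namespace Cochain

open Finset

section Spread

variable {p d : ℕ} [NeZero p]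

/-- The largest coordinate of colour `a`. -/
noncomputable def colorMax (y : Fin d × ZMod p → ℝ) (a : Fin d) : ℝ :=
  univ.sup' univ_nonempty fun i => y (a, i)

/-- A `p`-tuple of points of the cube `[-1, 1] ^ d` attached to a point of `[0, 1] ^ (d * p)`. -/
noncomputable def spread (y : Fin d × ZMod p → ℝ) (i : ZMod p) (a : Fin d) : ℝ :=
  (if i = 0 then min 1 (2 - 2 * colorMax y a) else 1) * (2 * y (a, i) - colorMax y a)

theorem continuous_spread : Continuous (spread (p := p) (d := d)) := by
  have h (a : Fin d) : Continuous fun y : Fin d × ZMod p → ℝ => colorMax y a :=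
    Continuous.finset_sup'_apply _ fun i _ => continuous_apply (a, i)
  refine continuous_pi fun i => continuous_pi fun a => ?_
  have := h a
  unfold spread
  split_ifs <;> fun_prop

theorem le_colorMax (y : Fin d × ZMod p → ℝ) (a : Fin d) (i : ZMod p) : y (a, i) ≤ colorMax y a :=
  le_sup' (fun i => y (a, i)) (mem_univ i)

theorem exists_eq_colorMax (y : Fin d × ZMod p → ℝ) (a : Fin d) : ∃ i, y (a, i) = colorMax y a := by
  obtain ⟨i, _, hi⟩ := exists_mem_eq_sup' univ_nonempty fun i => y (a, i)
  exact ⟨i, hi.symm⟩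

theorem colorMax_le {y : Fin d × ZMod p → ℝ} {a : Fin d} {c : ℝ} (h : ∀ i, y (a, i) ≤ c) :
    colorMax y a ≤ c :=
  sup'_le _ _ fun i _ => h i

theorem colorMax_eq {y : Fin d × ZMod p → ℝ} {a : Fin d} {c : ℝ} (h : ∀ i, y (a, i) ≤ c)
    (i : ZMod p) (hi : y (a, i) = c) : colorMax y a = c :=
  (colorMax_le h).antisymm (hi ▸ le_colorMax y a i)

theorem spread_of_ne_zero (y : Fin d × ZMod p → ℝ) {i : ZMod p} (hi : i ≠ 0) (a : Fin d) :
    spread y i a = 2 * y (a, i) - colorMax y a := by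
  simp [spread, hi]

theorem spread_zero_of_colorMax_eq_one {y : Fin d × ZMod p → ℝ} {a : Fin d}
    (h : colorMax y a = 1) : spread y 0 a = 0 := by
  simp [spread, h]

theorem abs_spread_le {y : Fin d × ZMod p → ℝ} (h0 : ∀ l, 0 ≤ y l) (h1 : ∀ l, y l ≤ 1)
    (i : ZMod p) (a : Fin d) : |spread y i a| ≤ 1 := by
  have hm : colorMax y a ≤ 1 := colorMax_le fun i => h1 _
  have hy := le_colorMax y a i
  have hy0 := h0 (a, i)
  rw [spread, abs_mul]
  refine mul_le_one₀ ?_ (abs_nonneg _) ?_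
  · split_ifs
    · rw [abs_of_nonneg (le_min zero_le_one (by linarith))]
      exact min_le_left _ _
    · simp
  · rw [abs_le]
    constructor <;> linarith

theorem abs_spread_zero_lt {y : Fin d × ZMod p → ℝ} (h0 : ∀ l, 0 ≤ y l) (h1 : ∀ l, y l ≤ 1)
    (a : Fin d) : |spread y 0 a| < 1 := by
  have hm : colorMax y a ≤ 1 := colorMax_le fun i => h1 _
  have hy := le_colorMax y a 0
  have hy0 := h0 (a, 0)
  have habs : |2 * y (a, 0) - colorMax y a| ≤ colorMax y a := by
    rw [abs_le]
    constructor <;> linarith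
  have hc : 0 ≤ min 1 (2 - 2 * colorMax y a) := le_min zero_le_one (by linarith)
  rw [spread, if_pos rfl, abs_mul, abs_of_nonneg hc]
  refine (mul_le_mul_of_nonneg_left habs hc).trans_lt ?_
  rcases le_or_gt (colorMax y a) (3 / 4) with hle | hgt
  · refine (mul_le_mul_of_nonneg_right (min_le_left _ _) (hy0.trans hy)).trans_lt ?_
    linarith
  · refine (mul_le_mul_of_nonneg_right (min_le_right _ _) (hy0.trans hy)).trans_lt ?_
    nlinarith

theorem exists_spread_ne {y : Fin d × ZMod p → ℝ} (h1 : ∀ l, y l ≤ 1) {a : Fin d}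
    (hmin : ∃ i, y (a, i) = 0) (hpos : ∃ i, 0 < y (a, i)) : ∃ i, spread y i a ≠ spread y 0 a := by
  by_contra! hall
  have hm : colorMax y a ≤ 1 := colorMax_le fun i => h1 _
  obtain ⟨i, hi⟩ := hmin
  obtain ⟨j, hj⟩ := exists_eq_colorMax y a
  obtain ⟨k, hk⟩ := hpos
  have hM : 0 < colorMax y a := hk.trans_le (le_colorMax y a k)
  have hc : 0 ≤ min 1 (2 - 2 * colorMax y a) := le_min zero_le_one (by linarith)
  have hc' := mul_nonneg hc hM.le
  have ei := hall i
  have ej := hall j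
  by_cases hi0 : i = 0
  · subst hi0
    have hj0 : j ≠ 0 := by
      rintro rfl
      linarith
    rw [spread_of_ne_zero y hj0, spread, if_pos rfl, hj, hi] at ej
    linarith
  · rw [spread_of_ne_zero y hi0, hi] at ei
    by_cases hj0 : j = 0
    · subst hj0
      rw [spread, if_pos rfl, hj] at ei
      linarith
    · rw [spread_of_ne_zero y hj0, hj] at ej
      linarith

end Spread

section Choice

variable {p : ℕ} {C : Type*}

/-- Some colour has oscillation at least `δ`. -/
def HasOsc (δ : ℝ) (g : C × ZMod p → ℝ) (a : C) : Prop := ∃ i j, δ ≤ g (a, i) - g (a, j)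

variable [Nonempty C] [Fact p.Prime]

/-- A colour of large oscillation. -/
noncomputable def oscColor (δ : ℝ) (g : C × ZMod p → ℝ) : C := Classical.epsilon (HasOsc δ g)

open Classical in
/-- The positions of the maxima of `g` in the colour `a`. -/
noncomputable def argmaxSet (g : C × ZMod p → ℝ) (a : C) : Finset (ZMod p) :=
  {i | ∀ j, g (a, j) ≤ g (a, i)}

/-- An element of a finite set, chosen equivariantly under translation. -/
noncomputable def pick (B : Finset (ZMod p)) : ZMod p :=
  Classical.epsilon (fun i => i + mean B ∈ B) + mean B

theorem pick_mem {B : Finset (ZMod p)} (h : B.Nonempty) : pick B ∈ B :=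
  Classical.epsilon_spec (p := fun i => i + mean B ∈ B) (h.imp' (· - mean B) (by simp))

/-- A colour of large oscillation together with a position of a maximum. -/
noncomputable def oscLabel (δ : ℝ) (g : C × ZMod p → ℝ) : C × ZMod p :=
  (oscColor δ g, pick (argmaxSet g (oscColor δ g)))

omit [Nonempty C] in
theorem argmaxSet_nonempty (g : C × ZMod p → ℝ) (a : C) : (argmaxSet g a).Nonempty := by
  obtain ⟨i, hi⟩ := Finite.exists_max fun i => g (a, i)
  exact ⟨i, by simpa [argmaxSet] using hi⟩

theorem le_apply_oscLabel (δ : ℝ) (g : C × ZMod p → ℝ) (j : ZMod p) :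
    g ((oscLabel δ g).1, j) ≤ g (oscLabel δ g) := by
  have := pick_mem (argmaxSet_nonempty g (oscColor δ g))
  rw [argmaxSet, mem_filter] at this
  exact this.2 j

theorem hasOsc_oscLabel {δ : ℝ} {g : C × ZMod p → ℝ} (h : ∃ a, HasOsc δ g a) :
    HasOsc δ g (oscLabel δ g).1 :=
  Classical.epsilon_spec h

theorem oscLabel_rotate {δ : ℝ} (hδ : 0 < δ) {g : C × ZMod p → ℝ}
    (h : ∃ a, HasOsc δ g a) :
    oscLabel δ (fun l => g (l.1, l.2 - 1)) = ((oscLabel δ g).1, (oscLabel δ g).2 + 1) := by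
  have hosc : HasOsc δ (fun l : C × ZMod p => g (l.1, l.2 - 1)) = HasOsc δ g := by
    ext a
    constructor
    · rintro ⟨i, j, hij⟩
      exact ⟨i - 1, j - 1, hij⟩
    · rintro ⟨i, j, hij⟩
      exact ⟨i + 1, j + 1, by simpa using hij⟩
  have hcol : oscColor δ (fun l : C × ZMod p => g (l.1, l.2 - 1)) = oscColor δ g := by
    rw [oscColor, hosc, oscColor]
  have harg (a : C) : argmaxSet (fun l : C × ZMod p => g (l.1, l.2 - 1)) a =
      (argmaxSet g a).image (· + 1) := by
    ext i
    simp only [argmaxSet, mem_image, mem_filter, mem_univ, true_and]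
    constructor
    · exact fun hi => ⟨i - 1, fun j => by simpa using hi (j + 1), by simp⟩
    · rintro ⟨k, hk, rfl⟩ j
      simpa using hk (j - 1)
  have hne : argmaxSet g (oscColor δ g) ≠ univ := by
    intro huniv
    obtain ⟨i, j, hij⟩ := hasOsc_oscLabel h
    have hj : j ∈ argmaxSet g (oscColor δ g) := huniv ▸ mem_univ j
    rw [argmaxSet, mem_filter] at hj
    have : g (oscColor δ g, i) ≤ g (oscColor δ g, j) := hj.2 i
    have : δ ≤ g (oscColor δ g, i) - g (oscColor δ g, j) := hij
    linarith
  have hmean := mean_image_add (argmaxSet_nonempty g (oscColor δ g)) hne 1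
  simp only [oscLabel, hcol, harg, pick, hmean]
  simp [← add_assoc]

end Choice

end Cochain

namespace Cochain

open Finset

section Configuration

variable {p d : ℕ} [Fact p.Prime]

/-- The rescaling of a lattice point by the factor `1 / n`. -/
noncomputable def rescale (n : ℕ) (y : Fin d × ZMod p → ℕ) (l : Fin d × ZMod p) : ℝ := y l / n

omit [Fact p.Prime] in
theorem rescale_le_one {n : ℕ} {y : Fin d × ZMod p → ℕ} (h : ∀ l, y l ≤ n) (l) :
    rescale n y l ≤ 1 :=
  div_le_one_of_le₀ (by exact_mod_cast h l) n.cast_nonneg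

omit [Fact p.Prime] in
theorem rescale_nonneg (n : ℕ) (y : Fin d × ZMod p → ℕ) (l) : 0 ≤ rescale n y l := by
  unfold rescale
  positivity

omit [Fact p.Prime] in
theorem rescale_eq_one {n : ℕ} (hn : 0 < n) {y : Fin d × ZMod p → ℕ} {l} (h : y l = n) :
    rescale n y l = 1 := by
  rw [rescale, h, div_self (by positivity)]

theorem colorMax_rescale_eq_one {n : ℕ} (hn : 0 < n) {y : Fin d × ZMod p → ℕ} {a j}
    (h : ∀ l, y l ≤ n) (hj : y (a, j) = n) : colorMax (rescale n y) a = 1 :=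
  colorMax_eq (fun i => rescale_le_one h (a, i)) j (rescale_eq_one hn hj)

theorem spread_congr {y z : Fin d × ZMod p → ℝ} {i : ZMod p} {a : Fin d}
    (hm : colorMax y a = colorMax z a) (h : y (a, i) = z (a, i)) :
    spread y i a = spread z i a := by
  rw [spread, spread, hm, h]

theorem colorMax_congr {y z : Fin d × ZMod p → ℝ} {a : Fin d} (h : ∀ i, y (a, i) = z (a, i)) :
    colorMax y a = colorMax z a := by
  simp only [colorMax, h]

variable {S : Type*} {q : (Fin d → ℝ) → S}

theorem comp_spread_rescale_face
    (hq : ∀ x y, (∃ a, |x a| = 1) → (∃ a, |y a| = 1) → q x = q y) {n : ℕ} (hn : 0 < n)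
    {a : Fin d} {j : ZMod p} {z : Fin d × ZMod p → ℕ} (hj : j ≠ 0) (h0 : z (a, 0) = 0)
    (hzj : z (a, j) = 0) (hz : ∀ l, z l ≤ n) :
    (fun i => q (spread (rescale n (n • Pi.single (a, 0) 1 + z)) i)) =
      fun i => q (spread (rescale n (n • Pi.single (a, j) 1 + z)) i) := by
  have hle (k : ZMod p) (hk : z (a, k) = 0) (l) :
      (n • Pi.single (a, k) 1 + z : Fin d × ZMod p → ℕ) l ≤ n := by
    rcases eq_or_ne l (a, k) with rfl | hl
    · simp [hk]
    · simpa [hl] using hz l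
  have hone (k : ZMod p) (hk : z (a, k) = 0) :
      colorMax (rescale n (n • Pi.single (a, k) 1 + z)) a = 1 :=
    colorMax_rescale_eq_one hn (hle k hk) (j := k) (by simp [hk])
  funext i
  rcases eq_or_ne i j with rfl | hij
  · refine hq _ _ ⟨a, ?_⟩ ⟨a, ?_⟩
    · rw [spread_of_ne_zero _ hj, hone 0 h0]
      simp [rescale, hzj, hj]
    · rw [spread_of_ne_zero _ hj, hone i hzj, rescale_eq_one hn (by simp [hzj])]
      norm_num
  · congr 1
    funext b
    rcases eq_or_ne b a with rfl | hb
    · rcases eq_or_ne i 0 with rfl | hi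
      · rw [spread_zero_of_colorMax_eq_one (hone 0 h0), spread_zero_of_colorMax_eq_one (hone j hzj)]
      · exact spread_congr ((hone 0 h0).trans (hone j hzj).symm) (by simp [rescale, hi, hij])
    · exact spread_congr (colorMax_congr fun k => by simp [rescale, hb]) (by simp [rescale, hb])

theorem spread_rescale_degenerate {n : ℕ} {a : Fin d} {j : ZMod p} {y : Fin d × ZMod p → ℕ}
    (hj : j ≠ 0) (hyj : y (a, j) = n) (hy : ∀ l, y l ≤ n) (h0 : y (a, 0) < n) :
    spread (rescale n (y + Pi.single (a, 0) 1)) = spread (rescale n y) := by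
  have hn : 0 < n := (Nat.zero_le _).trans_lt h0
  have hle (l) : (y + Pi.single (a, 0) 1 : Fin d × ZMod p → ℕ) l ≤ n := by
    rcases eq_or_ne l (a, 0) with rfl | hl
    · simpa using h0
    · simpa [hl] using hy l
  have h1 := colorMax_rescale_eq_one hn hy hyj
  have h2 := colorMax_rescale_eq_one hn hle (a := a) (j := j) (by simp [hyj, hj])
  funext i b
  rcases eq_or_ne b a with rfl | hb
  · rcases eq_or_ne i 0 with rfl | hi
    · rw [spread_zero_of_colorMax_eq_one h1, spread_zero_of_colorMax_eq_one h2]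
    · exact spread_congr (h2.trans h1.symm) (by simp [rescale, hi])
  · exact spread_congr (colorMax_congr fun k => by simp [rescale, hb]) (by simp [rescale, hb])

theorem spread_rescale_rotate {r : ℕ} (hr : 0 < r) {y : Fin d × ZMod p → ℕ} (hy : ∀ l, y l ≤ r)
    (i : ZMod p) :
    spread (rescale (2 * r) (rotate y)) i = spread (rescale (2 * r) y) (i - 1) := by
  have hhalf (z : Fin d × ZMod p → ℕ) (hz : ∀ l, z l ≤ r) (i : ZMod p) (a : Fin d) :
      spread (rescale (2 * r) z) i a =
        2 * rescale (2 * r) z (a, i) - colorMax (rescale (2 * r) z) a := by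
    have : colorMax (rescale (2 * r) z) a ≤ 1 / 2 := colorMax_le fun i => by
      have := hz (a, i)
      have h : (z (a, i) : ℝ) ≤ r := by exact_mod_cast this
      rw [rescale, div_le_iff₀ (by positivity)]
      push_cast
      linarith
    rw [spread, min_eq_left (by linarith), ite_self, one_mul]
  funext a
  rw [hhalf (rotate y) fun l => hy _, hhalf y hy]
  congr 1
  refine colorMax_eq (fun i => le_colorMax (rescale (2 * r) y) a (i - 1)) ?_ ?_
  · exact (exists_eq_colorMax (rescale (2 * r) y) a).choose + 1
  · have := (exists_eq_colorMax (rescale (2 * r) y) a).choose_spec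
    simpa [rescale, rotate] using this

variable [TopologicalSpace S]

/-- Given a quotient map collapsing the boundary of a cube to a point and `d` continuous
functions on `p`-tuples, there is a nonconstant tuple at which all of these functions are invariant
under cyclic shifts. -/
theorem exists_nonconstant_forall_shift_eq (hp : p ≠ 2) (hd : 0 < d) (hqc : Continuous q)
    (hq : ∀ x y, (∃ a, |x a| = 1) → (∃ a, |y a| = 1) → q x = q y)
    (hqinj : ∀ x y, (∀ a, |x a| < 1) → (∀ a, |y a| ≤ 1) → q x = q y → x = y)
    {F : Fin d → (ZMod p → S) → ℝ} (hF : ∀ a, Continuous (F a)) :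
    ∃ x : ZMod p → S, (∃ i, x i ≠ x 0) ∧ ∀ a i, F a (fun k => x (k + i)) = F a x := by
  by_contra! hno
  have : Nonempty (Fin d) := ⟨⟨0, hd⟩⟩
  let Φ (x : ZMod p → S) (l : Fin d × ZMod p) : ℝ := F l.1 fun k => x (k + l.2)
  let G (y : Fin d × ZMod p → ℝ) : Fin d × ZMod p → ℝ := Φ fun i => q (spread y i)
  have hG : Continuous G := continuous_pi fun l => (hF l.1).comp <| continuous_pi fun k =>
    hqc.comp ((continuous_apply (k + l.2)).comp continuous_spread)
  let K : Set (Fin d × ZMod p → ℝ) :=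
    Set.Icc 0 1 ∩ {y | (∀ a, ∃ i, y (a, i) = 0) ∧ ∃ l, 1 / 2 ≤ y l}
  have hK : IsCompact K := by
    refine isCompact_Icc.inter_right ?_
    simp only [Set.ofPred_and, Set.ofPred_forall, Set.ofPred_exists]
    refine IsClosed.inter ?_ ?_
    · exact isClosed_iInter fun a => isClosed_iUnion_of_finite fun i =>
        isClosed_eq (continuous_apply _) continuous_const
    · exact isClosed_iUnion_of_finite fun l => isClosed_le continuous_const (continuous_apply l)
  have hpos : ∀ y ∈ K, 0 < ∑ l, |G y l - G y (l.1, 0)| := by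
    rintro y ⟨⟨h0, h1⟩, hmin, ⟨a, j⟩, hl⟩
    obtain ⟨i, hi⟩ := exists_spread_ne h1 (hmin a) ⟨j, by linarith⟩
    obtain ⟨b, k, hbk⟩ := hno (fun i => q (spread y i)) ⟨i, fun h => hi <| congrFun
      (hqinj _ _ (abs_spread_zero_lt h0 h1) (abs_spread_le h0 h1 i) h.symm).symm a⟩
    refine sum_pos' (fun _ _ => abs_nonneg _) ⟨(b, k), mem_univ _, abs_pos.2 (sub_ne_zero.2 ?_)⟩
    simpa [G, Φ] using hbk
  obtain ⟨ε, hε, hεK⟩ := hK.exists_forall_le' (f := fun y => ∑ l, |G y l - G y (l.1, 0)|)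
    (by fun_prop) hpos
  obtain ⟨δ, hδ, hosc⟩ : ∃ δ > 0, ∀ y ∈ K, ∃ a, HasOsc δ (G y) a := by
    refine ⟨ε / Fintype.card (Fin d × ZMod p), by positivity, fun y hy => ?_⟩
    by_contra! hlt
    refine (hεK y hy).not_gt ?_
    calc ∑ l, |G y l - G y (l.1, 0)| < ∑ _l : Fin d × ZMod p, ε / Fintype.card (Fin d × ZMod p) :=
          sum_lt_sum_of_nonempty univ_nonempty fun l _ => by
            have := hlt l.1
            simp only [HasOsc, not_exists, not_le] at this
            exact abs_sub_lt_iff.2 ⟨this l.2 0, this 0 l.2⟩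
      _ = ε := by
        rw [sum_const, card_univ, nsmul_eq_mul]
        field_simp
  obtain ⟨η, hη, hηG⟩ := Metric.uniformContinuousOn_iff.1
    ((isCompact_Icc (a := (0 : Fin d × ZMod p → ℝ)) (b := 1)).uniformContinuousOn_of_continuous
      hG.continuousOn) (δ / 2) (half_pos hδ)
  obtain ⟨r, hr⟩ := exists_nat_gt (1 / η)
  have hr0 : 0 < r := by exact_mod_cast (one_div_pos.2 hη).trans hr
  have hrη : 1 / ((2 * r : ℕ) : ℝ) < η := by
    rw [one_div_lt (by positivity) hη]
    push_cast
    linarith [(one_div_pos.2 hη).trans hr]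
  have hmem (y : Fin d × ZMod p → ℕ) (h : MinZero y) (hy : ∀ l, y l ≤ 2 * r) (hl : ∃ l, r ≤ y l) :
      rescale (2 * r) y ∈ K := by
    refine ⟨⟨rescale_nonneg _ _, rescale_le_one hy⟩, fun a => ?_, ?_⟩
    · obtain ⟨i, hi⟩ := h a
      exact ⟨i, by simp [rescale, hi]⟩
    · obtain ⟨l, hl⟩ := hl
      have : (r : ℝ) ≤ y l := by exact_mod_cast hl
      refine ⟨l, ?_⟩
      rw [rescale, le_div_iff₀ (by positivity)]
      push_cast
      linarith
  refine not_isGoodLabeling hp d hd r (2 * r) (fun y => oscLabel δ (G (rescale (2 * r) y)))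
    ⟨by omega, ?_, ?_, ?_, ?_⟩
  · rintro y h hy ⟨l, hl⟩
    have hrot : G (rescale (2 * r) (rotate y)) =
        fun l => G (rescale (2 * r) y) (l.1, l.2 - 1) := by
      funext l
      simp only [G, Φ, spread_rescale_rotate hr0 hy, add_sub_assoc]
    rw [hrot]
    exact oscLabel_rotate hδ
      (hosc _ (hmem y h (fun l => (hy l).trans (by omega)) ⟨l, hl.ge⟩))
  · intro a j z hj h0 hzj hz
    simp only [G, comp_spread_rescale_face hq (by omega) hj h0 hzj hz]
  · intro a j y hj hyj hy h0
    simp only [G, spread_rescale_degenerate hj hyj hy h0]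
  · intro k x v hmin hx hl hv
    by_contra hfull
    simp only [Nonfull, not_forall, not_exists, not_not] at hfull
    obtain ⟨a, ha⟩ := hfull
    obtain ⟨s, hs⟩ := ha 0
    obtain ⟨i, j, hij⟩ := hasOsc_oscLabel (hosc _ (hmem (x s) (hmin s) (hx s) (hl s)))
    obtain ⟨t, ht⟩ := ha j
    simp only [Function.comp_apply] at hs ht
    have hmax := le_apply_oscLabel δ (G (rescale (2 * r) (x t))) i
    rw [ht] at hmax
    rw [hs] at hij
    have hdist : dist (rescale (2 * r) (x s)) (rescale (2 * r) (x t)) < η := by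
      refine ((dist_pi_le_iff (by positivity)).2 fun l => ?_).trans_lt hrη
      have h1 : ((x s l : ℕ) : ℝ) ≤ x t l + 1 := by
        exact_mod_cast (hv s l).2.trans (Nat.succ_le_succ (hv t l).1)
      have h2 : ((x t l : ℕ) : ℝ) ≤ x s l + 1 := by
        exact_mod_cast (hv t l).2.trans (Nat.succ_le_succ (hv s l).1)
      rw [rescale, rescale, Real.dist_eq, ← sub_div, abs_div, Nat.abs_cast]
      gcongr
      rw [abs_le]
      constructor <;> linarith
    have hclose := hηG _ ⟨rescale_nonneg _ _, rescale_le_one (hx s)⟩ _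
      ⟨rescale_nonneg _ _, rescale_le_one (hx t)⟩ hdist
    have hi := (dist_le_pi_dist _ _ (a, i)).trans_lt hclose
    have hj := (dist_le_pi_dist _ _ (a, j)).trans_lt hclose
    rw [Real.dist_eq, abs_lt] at hi hj
    linarith [hi.1, hi.2, hj.1, hj.2]

end Configuration

end Cochain

theorem IsMetricEquivToStd.isOpen_ball {E : Type*} [TopologicalSpace E] {ρ : E → E → ℝ}
    (h : IsMetricEquivToStd ρ) (x : E) (ε : ℝ) : IsOpen {y | ρ x y < ε} :=
  (h.2.2.2 _).2 fun y hy => ⟨ε - ρ x y, sub_pos.2 hy, fun z hz => by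
    have := h.2.2.1 x y z
    simp only [Set.mem_ofPred_eq] at hz ⊢
    linarith⟩

theorem IsMetricEquivToStd.continuous {E : Type*} [TopologicalSpace E] {ρ : E → E → ℝ}
    (h : IsMetricEquivToStd ρ) : Continuous fun z : E × E => ρ z.1 z.2 := by
  refine continuous_iff_continuousAt.2 fun ⟨x, y⟩ => Metric.tendsto_nhds.2 fun ε hε => ?_
  have hball (u : E) : ∀ᶠ v in nhds u, ρ u v < ε / 2 :=
    (h.isOpen_ball u (ε / 2)).mem_nhds (by
      rw [Set.mem_ofPred_eq, (h.2.1 u u).2 rfl]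
      exact half_pos hε)
  filter_upwards [(hball x).prod_nhds (hball y)] with ⟨u, v⟩ ⟨hu, hv⟩
  simp only at hu hv ⊢
  rw [Real.dist_eq, abs_lt]
  have h1 := h.2.2.1 u x v
  have h2 := h.2.2.1 x y v
  have h3 := h.2.2.1 x u y
  have h4 := h.2.2.1 u v y
  rw [h.1 u x] at h1
  rw [h.1 v y] at h4
  constructor <;> linarith

/-- A nonconstant periodic tuple for which consecutive coincidences in steps of `1, …, (p - 1) / 2`
propagate is injective. -/
theorem ZMod.injective_of_forall_eq_add {p : ℕ} [Fact p.Prime] (hp : Odd p) {S : Type*}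
    {x : ZMod p → S}
    (hx : ∃ i, x i ≠ x 0)
    (h : ∀ j : ℕ, 1 ≤ j → j ≤ (p - 1) / 2 → ∀ i, x i = x (i + j) → ∀ k, x k = x (k + j)) :
    Function.Injective x := by
  obtain ⟨m, hm⟩ := hp
  have key (j : ℕ) (hj : 1 ≤ j) (hjp : j ≤ (p - 1) / 2) (i : ZMod p) : x i ≠ x (i + j) := by
    intro hi
    have hstep := h j hj hjp i hi
    have hj0 : (j : ZMod p) ≠ 0 := by
      rw [Ne, ZMod.natCast_eq_zero_iff]
      exact Nat.not_dvd_of_pos_of_lt hj (by omega)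
    have hmul (n : ℕ) : x (n * j) = x 0 := by
      induction n with
      | zero => simp
      | succ n ih => rw [Nat.cast_succ, add_one_mul, ← hstep, ih]
    obtain ⟨k, hk⟩ := hx
    refine hk ?_
    have := hmul (k * (j : ZMod p)⁻¹).val
    rwa [ZMod.natCast_zmod_val, inv_mul_cancel_right₀ hj0] at this
  intro i k hik
  by_contra hne
  have hpos : 0 < (k - i).val := by
    rw [Nat.pos_iff_ne_zero, Ne, ZMod.val_eq_zero, sub_eq_zero]
    exact fun h => hne h.symm
  rcases le_or_gt (k - i).val ((p - 1) / 2) with hle | hgt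
  · exact key _ hpos hle i (by simpa using hik)
  · have hneg : (i - k).val = p - (k - i).val := by
      have : NeZero (k - i) := ⟨fun h0 => by simp [h0] at hpos⟩
      rw [← neg_sub, ZMod.val_neg_of_ne_zero]
    have hlt := ZMod.val_lt (k - i)
    exact key (i - k).val (by omega) (by omega) k (by simpa using hik.symm)

/-- Theorem: if `p ≤ 2d + 1` and `(p-1)²/2 ≠ jd + 1` for all `j = 1, …, p-1`, then
the pair `(d, p)` is admissible. -/
theorem admissible_pair
    (p d : ℕ) (hp : p.Prime) (hodd : Odd p) (hd : 1 ≤ d)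
    (hpd : p ≤ 2 * d + 1)
    (hjd : ∀ j : ℕ, 1 ≤ j → j ≤ p - 1 → (p - 1) ^ 2 / 2 ≠ j * d + 1)
    (f : Metric.sphere (0 : EuclideanSpace ℝ (Fin (d + 1))) 1 → EuclideanSpace ℝ (Fin (d + 1)))
    (hf : Continuous f) (hfinj : Function.Injective f)
    (ρ : ℕ → EuclideanSpace ℝ (Fin (d + 1)) → EuclideanSpace ℝ (Fin (d + 1)) → ℝ)
    (hρ : ∀ j, 1 ≤ j → j ≤ (p - 1) / 2 → IsMetricEquivToStd (ρ j)) :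
    ∃ x : ZMod p → Metric.sphere (0 : EuclideanSpace ℝ (Fin (d + 1))) 1,
      Function.Injective x ∧
      ∀ j : ℕ, 1 ≤ j → j ≤ (p - 1) / 2 →
        ∀ k : ZMod p,
          ρ j (f (x (k * (j : ZMod p)))) (f (x ((k + 1) * (j : ZMod p)))) =
            ρ j (f (x 0)) (f (x (j : ZMod p))) := by
  have : Fact p.Prime := ⟨hp⟩
  have hp2 : p ≠ 2 := by
    rintro rfl
    exact absurd hodd (by decide)
  have hp3 := hp.two_le
  let J (a : Fin d) : ℕ := if a + 1 ≤ (p - 1) / 2 then a + 1 else 1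
  have hJ (a : Fin d) : 1 ≤ J a ∧ J a ≤ (p - 1) / 2 := by
    simp only [J]
    split_ifs <;> omega
  obtain ⟨x, hx, hFx⟩ := Cochain.exists_nonconstant_forall_shift_eq (p := p) hp2 hd
    continuous_cubeToSphere (fun x y => cubeToSphere_eq_of_boundary)
    (fun x y => eq_of_cubeToSphere_eq)
    (F := fun a x => ρ (J a) (f (x 0)) (f (x (J a : ZMod p))))
    fun a => (hρ _ (hJ a).1 (hJ a).2).continuous.comp
      ((hf.comp (continuous_apply (0 : ZMod p))).prodMk
        (hf.comp (continuous_apply (J a : ZMod p))))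
  have hshift (j : ℕ) (hj : 1 ≤ j) (hjp : j ≤ (p - 1) / 2) (i : ZMod p) :
      ρ j (f (x i)) (f (x (i + j))) = ρ j (f (x 0)) (f (x j)) := by
    have hJj : J ⟨j - 1, by omega⟩ = j := by
      simp only [J, Nat.sub_add_cancel hj, if_pos hjp]
    have := hFx ⟨j - 1, by omega⟩ i
    simpa only [hJj, zero_add, add_comm (j : ZMod p)] using this
  refine ⟨x, ZMod.injective_of_forall_eq_add hodd hx fun j hj hjp i hi k => hfinj ?_,
    fun j hj hjp k => ?_⟩
  · rw [← (hρ j hj hjp).2.1, hshift j hj hjp, ← hshift j hj hjp i, (hρ j hj hjp).2.1, hi]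
  · rw [add_one_mul, hshift j hj hjp]
end
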